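/- arXiv:0911.0354 — 2 statements merged into one kernel-verified Lean document; each statement's English description precedes it below -/
import Mathlib

section
/- Let (W,S) be a Coxeter system with S finite and twist-rigid, and let μ and μ' be good markings with common core s ∈ S. Then there exists a finite sequence of good markings starting at μ and ending at μ' such that each two consecutive markings in the sequence are related by move N1, move M2 or move M3. -/
variable {B : Type*} {W : Type*} [Group W] {M : CoxeterMatrix B}

/-- A subset `J` of the index set is *spherical* if the corresponding simple reflections
generate a finite subgroup. -/
def Spherical (cs : CoxeterSystem M W) (J : Set B) : Prop :=
  (Subgroup.closure (cs.simple '' J) : Set W).Finite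

/-- Two indices are *adjacent* if the corresponding simple reflections generate a finite
subgroup. -/
def Adjacent (cs : CoxeterSystem M W) (i j : B) : Prop :=
  (Subgroup.closure {cs.simple i, cs.simple j} : Set W).Finite

/-- A subset is *2-spherical* if every pair of its elements is adjacent. -/
def TwoSpherical (cs : CoxeterSystem M W) (J : Set B) : Prop :=
  ∀ i ∈ J, ∀ j ∈ J, Adjacent cs i j

/-- A subset is *irreducible* if it cannot be partitioned into two nonempty subsets whose
corresponding simple reflections commute elementwise. -/
def IrreducibleSubset (cs : CoxeterSystem M W) (J : Set B) : Prop :=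
  ¬ ∃ K L : Set B, K.Nonempty ∧ L.Nonempty ∧ Disjoint K L ∧ K ∪ L = J ∧
      ∀ k ∈ K, ∀ l ∈ L, Commute (cs.simple k) (cs.simple l)

/-- `perpIn cs T J` is the set `J⊥` of elements of `T ∖ J` whose simple reflections commute
with those of every element of `J`. -/
def perpIn (cs : CoxeterSystem M W) (T J : Set B) : Set B :=
  {i ∈ T \ J | ∀ j ∈ J, Commute (cs.simple i) (cs.simple j)}

/-- A subset `T` of the index set is *connected* if any two of its elements are joined by a
path inside `T` whose edges are adjacent pairs. -/
def ConnectedIn (cs : CoxeterSystem M W) (T : Set B) : Prop :=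
  ∀ a ∈ T, ∀ b ∈ T,
    Relation.ReflTransGen (fun x y => x ∈ T ∧ y ∈ T ∧ Adjacent cs x y) a b

/-- A subset `T` is *twist-rigid* if for every irreducible spherical subset `L ⊆ T` the set
`T ∖ (L ∪ L⊥)` is connected, where `L⊥` is taken inside `T`. -/
def TwistRigidIn (cs : CoxeterSystem M W) (T : Set B) : Prop :=
  ∀ L ⊆ T, IrreducibleSubset cs L → Spherical cs L →
    ConnectedIn cs (T \ (L ∪ perpIn cs T L))

/-- A pair `(s, w)` is a *base* if `ℓ(w⁻¹ s w) = 2 ℓ(w) + 1` and every reflection `t` with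
`ℓ(t w) < ℓ(w)` generates together with `s` a finite subgroup. -/
def IsBase (cs : CoxeterSystem M W) (s : B) (w : W) : Prop :=
  cs.length (w⁻¹ * cs.simple s * w) = 2 * cs.length w + 1 ∧
    ∀ t : W, cs.IsReflection t → cs.length (t * w) < cs.length w →
      (Subgroup.closure {cs.simple s, t} : Set W).Finite

/-- `J` is the *support* of `(s, w)` if it is the smallest subset of the index set containing
`s` with `w ∈ W_J`. -/
def IsSupport (cs : CoxeterSystem M W) (s : B) (w : W) (J : Set B) : Prop :=
  s ∈ J ∧ w ∈ Subgroup.closure (cs.simple '' J) ∧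
    ∀ J' : Set B, s ∈ J' → w ∈ Subgroup.closure (cs.simple '' J') → J ⊆ J'

/-- A base `(s, w)` is *simple* if `w` is represented by a reduced word whose letters are
pairwise distinct and distinct from `s`. -/
def IsSimpleBase (cs : CoxeterSystem M W) (s : B) (w : W) : Prop :=
  IsBase cs s w ∧ ∃ l : List B, w = cs.wordProd l ∧ cs.length w = l.length ∧
    l.Nodup ∧ s ∉ l

/-- The *shadow* of a base `(s, w)` with support `J`: the set of `j ∈ J` with
`ℓ((wj)⁻¹ s (wj)) ≤ ℓ(w⁻¹ s w)`. -/
def shadow (cs : CoxeterSystem M W) (s : B) (w : W) (J : Set B) : Set B :=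
  {j ∈ J | cs.length ((w * cs.simple j)⁻¹ * cs.simple s * (w * cs.simple j)) ≤
    cs.length (w⁻¹ * cs.simple s * w)}

/-- A *marking* `((s, w), m)`: a base `(s, w)` together with its support `supp` and a marker
`m ∈ S ∖ supp⊥`. -/
structure Marking (cs : CoxeterSystem M W) where
  core : B
  elt : W
  marker : B
  supp : Set B
  isBase : IsBase cs core elt
  isSupport : IsSupport cs core elt supp
  marker_not_perp : marker ∉ perpIn cs Set.univ supp

variable {cs : CoxeterSystem M W}

/-- A marking is *complete* if `s · (w m w⁻¹)` has infinite order. -/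
def Marking.Complete (μ : Marking cs) : Prop :=
  ¬ IsOfFinOrder (cs.simple μ.core * (μ.elt * cs.simple μ.marker * μ.elt⁻¹))

/-- A marking is *semi-complete* if `J ∪ {m}` is irreducible, 2-spherical and
non-spherical. -/
def Marking.SemiComplete (μ : Marking cs) : Prop :=
  IrreducibleSubset cs (μ.supp ∪ {μ.marker}) ∧
    TwoSpherical cs (μ.supp ∪ {μ.marker}) ∧ ¬ Spherical cs (μ.supp ∪ {μ.marker})

/-- A marking is *simple* if its base is simple and its marker lies outside its support. -/
def Marking.Simple (μ : Marking cs) : Prop :=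
  IsSimpleBase cs μ.core μ.elt ∧ μ.marker ∉ μ.supp

/-- A *good* marking is a complete or semi-complete simple marking with spherical
support. -/
def Marking.Good (μ : Marking cs) : Prop :=
  (μ.Complete ∨ μ.SemiComplete) ∧ μ.Simple ∧ Spherical cs μ.supp

/-- Move N1: same core, same group element, adjacent markers. -/
def MoveN1 (μ μ' : Marking cs) : Prop :=
  μ.core = μ'.core ∧ μ.elt = μ'.elt ∧ Adjacent cs μ.marker μ'.marker

/-- Move M1: same core, same group element, adjacent markers, both markings complete. -/
def MoveM1 (μ μ' : Marking cs) : Prop :=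
  μ.core = μ'.core ∧ μ.elt = μ'.elt ∧ Adjacent cs μ.marker μ'.marker ∧
    μ.Complete ∧ μ'.Complete

/-- Move M2: same core, equal markers, and the group elements differ by one simple
reflection adjacent to the marker. -/
def MoveM2 (μ μ' : Marking cs) : Prop :=
  μ.core = μ'.core ∧ μ.marker = μ'.marker ∧
    ∃ j : B, (μ.elt = μ'.elt * cs.simple j ∨ μ'.elt = μ.elt * cs.simple j) ∧
      Adjacent cs μ.marker j

/-- Move M3: same core and `J ∪ {m} ∪ J' ∪ {m'}` is 2-spherical. -/
def MoveM3 (μ μ' : Marking cs) : Prop :=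
  μ.core = μ'.core ∧
    TwoSpherical cs (μ.supp ∪ {μ.marker} ∪ μ'.supp ∪ {μ'.marker})

/-- `K` is a maximal spherical subset of `J`. -/
def MaximalSphericalIn (cs : CoxeterSystem M W) (K J : Set B) : Prop :=
  K ⊆ J ∧ Spherical cs K ∧ ∀ L : Set B, K ⊆ L → L ⊆ J → Spherical cs L → L = K

/-- Move M4: same core, the first marking is complete, its marker commutes with some maximal
spherical subset of its support `J`, and `J = J' ∪ {m'}`. -/
def MoveM4 (μ μ' : Marking cs) : Prop :=
  μ.core = μ'.core ∧ μ.Complete ∧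
    (∃ K : Set B, MaximalSphericalIn cs K μ.supp ∧
      ∀ k ∈ K, Commute (cs.simple μ.marker) (cs.simple k)) ∧
    μ.supp = μ'.supp ∪ {μ'.marker}

namespace TwistAux

open Real in
/-- The (doubled) cosine matrix entries. -/
noncomputable def cc (M : CoxeterMatrix B) (i j : B) : ℝ := -2 * Real.cos (Real.pi / M i j)

theorem cc_symm (i j : B) : cc M i j = cc M j i := by
  unfold cc; rw [M.symmetric]

theorem cc_self (i : B) : cc M i i = 2 := by
  simp [cc]

theorem cc_nonpos {i j : B} (h : i ≠ j) : cc M i j ≤ 0 := by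
  unfold cc
  have h1 : M i j ≠ 1 := M.off_diagonal i j h
  have : 0 ≤ Real.cos (Real.pi / M i j) := by
    rcases Nat.eq_zero_or_pos (M i j) with h0 | h0
    · simp [h0]
    · have h2 : (2 : ℝ) ≤ M i j := by exact_mod_cast (show 2 ≤ M i j by omega)
      apply Real.cos_nonneg_of_mem_Icc
      constructor
      · have : 0 ≤ Real.pi / M i j := by positivity
        linarith [Real.pi_pos]
      · exact div_le_div_of_nonneg_left Real.pi_pos.le (by norm_num) h2
  linarith

theorem commute_of_two (cs : CoxeterSystem M W) {i j : B} (h : M i j = 2) :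
    Commute (cs.simple i) (cs.simple j) := by
  have := cs.simple_mul_simple_pow i j
  rw [h, pow_two] at this
  have h2 : cs.simple i * cs.simple j = (cs.simple i * cs.simple j)⁻¹ := eq_inv_of_mul_eq_one_left this
  rw [mul_inv_rev, cs.inv_simple, cs.inv_simple] at h2
  exact h2

theorem cc_le_neg_one (cs : CoxeterSystem M W) {i j : B}
    (h : ¬ Commute (cs.simple i) (cs.simple j)) : cc M i j ≤ -1 := by
  unfold cc
  have hij : i ≠ j := by rintro rfl; exact h (Commute.refl _)
  have h1 : M i j ≠ 1 := M.off_diagonal i j hij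
  have h2 : M i j ≠ 2 := fun h2 => h (commute_of_two cs h2)
  have : 1 / 2 ≤ Real.cos (Real.pi / M i j) := by
    rcases Nat.eq_zero_or_pos (M i j) with h0 | h0
    · simp [h0]; norm_num
    · have h2 : (3 : ℝ) ≤ M i j := by exact_mod_cast (show 3 ≤ M i j by omega)
      rw [← Real.cos_pi_div_three]
      apply Real.cos_le_cos_of_nonneg_of_le_pi
      · positivity
      · linarith [Real.pi_pos]
      · exact div_le_div_of_nonneg_left Real.pi_pos.le (by norm_num) h2
  linarith

/-- Simple roots. -/
noncomputable def al (i : B) : B →₀ ℝ := Finsupp.single i 1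

/-- Simple coroots. -/
noncomputable def ph (M : CoxeterMatrix B) (i : B) : Module.Dual ℝ (B →₀ ℝ) :=
  Finsupp.linearCombination ℝ (fun j => cc M i j)

theorem ph_al (i j : B) : ph M i (al j) = cc M i j := by
  simp [ph, al]

theorem ph_self (i : B) : ph M i (al i) = 2 := by rw [ph_al, cc_self]

noncomputable def rf (M : CoxeterMatrix B) (i : B) : (B →₀ ℝ) ≃ₗ[ℝ] (B →₀ ℝ) :=
  Module.reflection (ph_self (M := M) i)

theorem rf_apply (i : B) (v : B →₀ ℝ) : rf M i v = v - ph M i v • al i := by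
  simp [rf, Module.reflection_apply]

theorem rf_liftable (M : CoxeterMatrix B) : M.IsLiftable (rf M) := by
  intro i j
  rcases eq_or_ne i j with rfl | hij
  · simp only [CoxeterMatrix.diagonal, pow_one]
    ext1 v
    rw [LinearEquiv.mul_apply, rf_apply, rf_apply]
    simp only [map_sub, map_smul, ph_self, LinearEquiv.coe_one, id_eq]
    simp only [smul_eq_mul]
    module
  have h1 : M i j ≠ 1 := M.off_diagonal i j hij
  rcases Nat.eq_zero_or_pos (M i j) with h0 | h0
  · simp [h0]
  have hji : cc M j i = cc M i j := cc_symm _ _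
  by_cases h2 : M i j = 2
  · have hc : cc M i j = 0 := by simp [cc, h2]
    rw [h2, pow_two]
    ext1 v
    simp only [LinearEquiv.mul_apply, rf_apply]
    simp only [map_sub, map_smul, ph_al, hji, hc, cc_self, LinearEquiv.coe_one, id_eq]
    simp only [smul_eq_mul]
    module
  · have h3 : 3 ≤ M i j := by omega
    set m := M i j with hm
    set θ : ℝ := 2 * Real.pi / m with hθ
    have hmpos : (0 : ℝ) < m := by exact_mod_cast h0
    have ht : 2 * Real.cos θ = ph M i (al j) * ph M j (al i) - 2 := by
      rw [ph_al, ph_al, hji, cc, ← hm, hθ, show 2 * Real.pi / m = 2 * (Real.pi / m) by ring,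
        Real.cos_two_mul]
      ring
    have hsin : Real.sin θ ≠ 0 := by
      apply ne_of_gt
      apply Real.sin_pos_of_pos_of_lt_pi
      · positivity
      · rw [hθ, div_lt_iff₀ hmpos]
        have : (3 : ℝ) ≤ m := by exact_mod_cast h3
        nlinarith [Real.pi_pos]
    have key : ∀ z, ((rf M i * rf M j) ^ m) z = z := by
      intro z
      unfold rf
      rw [Module.reflection_mul_reflection_pow_apply _ _ m z (2 * Real.cos θ) ht]
      have S (n : ℤ) := Polynomial.Chebyshev.S_two_mul_real_cos θ n
      rcases Nat.even_or_odd' m with ⟨k, hk | hk⟩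
      · have e1 : ((m : ℤ) - 2) / 2 = k - 1 := by omega
        have e2 : ((m : ℤ) - 1) / 2 = k - 1 := by omega
        have hz : (Polynomial.Chebyshev.S ℝ ((k : ℤ) - 1)).eval (2 * Real.cos θ) = 0 := by
          have h := S ((k : ℤ) - 1)
          have : ((((k : ℤ) - 1 : ℤ) : ℝ) + 1) * θ = Real.pi := by
            have hk0 : (k : ℝ) ≠ 0 := by
              have : k ≠ 0 := by omega
              exact_mod_cast this
            rw [hθ, hk]; push_cast; field_simp; ring
          rw [this, Real.sin_pi] at h
          exact (mul_eq_zero.mp h).resolve_right hsin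
        rw [e1, e2, hz]
        simp
      · have e1 : ((m : ℤ) - 2) / 2 = k - 1 := by omega
        have e2 : ((m : ℤ) - 1) / 2 = k := by omega
        have e3 : ((m : ℤ) - 3) / 2 = k - 1 := by omega
        have e4 : (m : ℤ) / 2 = k := by omega
        have hz : (Polynomial.Chebyshev.S ℝ (k : ℤ)).eval (2 * Real.cos θ) +
            (Polynomial.Chebyshev.S ℝ ((k : ℤ) - 1)).eval (2 * Real.cos θ) = 0 := by
          have h := S (k : ℤ)
          have h' := S ((k : ℤ) - 1)
          have hth : ((k : ℝ) + 1) * θ = 2 * Real.pi - k * θ := by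
            rw [hθ]; rw [hk] at hmpos ⊢; push_cast at hmpos ⊢; field_simp; ring
          have h3 : Real.sin (((k : ℝ) + 1) * θ) = - Real.sin (k * θ) := by
            rw [hth, Real.sin_two_pi_sub]
          push_cast at h h'
          rw [h3] at h
          rw [sub_add_cancel] at h'
          have : ((Polynomial.Chebyshev.S ℝ (k : ℤ)).eval (2 * Real.cos θ) +
            (Polynomial.Chebyshev.S ℝ ((k : ℤ) - 1)).eval (2 * Real.cos θ)) * Real.sin θ = 0 := by
            rw [add_mul, h, h']; ring
          exact (mul_eq_zero.mp this).resolve_right hsin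
        rw [e1, e2, e3, e4, hz]
        simp
    ext1 v
    rw [key]; rfl

/-- The geometric representation. -/
noncomputable def rho (cs : CoxeterSystem M W) : W →* ((B →₀ ℝ) ≃ₗ[ℝ] (B →₀ ℝ)) :=
  cs.lift ⟨rf M, rf_liftable M⟩

theorem rho_simple (cs : CoxeterSystem M W) (i : B) (v : B →₀ ℝ) :
    rho cs (cs.simple i) v = v - ph M i v • al i := by
  rw [rho, cs.lift_apply_simple, rf_apply]

/-- The invariant symmetric form. -/
noncomputable def bf (M : CoxeterMatrix B) : (B →₀ ℝ) →ₗ[ℝ] Module.Dual ℝ (B →₀ ℝ) :=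
  Finsupp.linearCombination ℝ (ph M)

theorem bf_al (i : B) : bf M (al i) = ph M i := by simp [bf, al]

theorem bf_symm (x y : B →₀ ℝ) : bf M x y = bf M y x := by
  have h1 : bf M = (bf M).flip := by
    ext i j
    have := cc_symm (M := M) i j
    rw [← ph_al, ← ph_al, ← bf_al, ← bf_al] at this
    simpa [al] using this
  conv_lhs => rw [h1]
  rfl

theorem bf_al_right (x : B →₀ ℝ) (i : B) : bf M x (al i) = ph M i x := by
  rw [bf_symm, bf_al]

theorem bf_inv_simple (cs : CoxeterSystem M W) (i : B) (x y : B →₀ ℝ) :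
    bf M (rho cs (cs.simple i) x) (rho cs (cs.simple i) y) = bf M x y := by
  simp only [rho_simple, map_sub, map_smul, LinearMap.sub_apply, LinearMap.smul_apply, bf_al,
    bf_al_right, ph_self, smul_eq_mul]
  ring

theorem bf_inv (cs : CoxeterSystem M W) (w : W) (x y : B →₀ ℝ) :
    bf M (rho cs w x) (rho cs w y) = bf M x y := by
  induction w using cs.simple_induction_left generalizing x y with
  | one => simp
  | mul_simple_left w i h =>
    rw [map_mul, LinearEquiv.mul_apply, LinearEquiv.mul_apply, bf_inv_simple, h]

theorem coord_fix (cs : CoxeterSystem M W) {K : Set B} {g : W}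
    (hg : g ∈ Subgroup.closure (cs.simple '' K)) {j : B} (hj : j ∉ K) (v : B →₀ ℝ) :
    rho cs g v j = v j := by
  have hs : ∀ k ∈ K, ∀ v : B →₀ ℝ, rho cs (cs.simple k) v j = v j := by
    intro k hk v
    have : k ≠ j := fun h => hj (h ▸ hk)
    simp [rho_simple, al, this]
  induction hg using Subgroup.closure_induction_left generalizing v with
  | one => simp
  | mul_left x hx y hy ih =>
    obtain ⟨k, hk, rfl⟩ := hx
    rw [map_mul, LinearEquiv.mul_apply, hs k hk, ih]
  | inv_mul_cancel x hx y hy ih =>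
    obtain ⟨k, hk, rfl⟩ := hx
    rw [cs.inv_simple, map_mul, LinearEquiv.mul_apply, hs k hk, ih]


open Classical in
/-- The permutation of `W × ZMod 2` attached to a simple reflection. -/
noncomputable def fp (cs : CoxeterSystem M W) (i : B) : Equiv.Perm (W × ZMod 2) where
  toFun p := (cs.simple i * p.1 * cs.simple i, p.2 + if p.1 = cs.simple i then 1 else 0)
  invFun p := (cs.simple i * p.1 * cs.simple i, p.2 + if p.1 = cs.simple i then 1 else 0)
  left_inv p := by
    have h : cs.simple i * p.1 * cs.simple i = cs.simple i ↔ p.1 = cs.simple i := by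
      constructor
      · intro h
        have := congrArg (fun x => cs.simple i * x * cs.simple i) h
        simpa [mul_assoc] using this
      · intro h; rw [h]; simp
    ext
    · simp [mul_assoc]
    · simp only [h, add_assoc, CharTwo.add_self_eq_zero, add_zero]
  right_inv p := by
    have h : cs.simple i * p.1 * cs.simple i = cs.simple i ↔ p.1 = cs.simple i := by
      constructor
      · intro h
        have := congrArg (fun x => cs.simple i * x * cs.simple i) h
        simpa [mul_assoc] using this
      · intro h; rw [h]; simp
    ext
    · simp [mul_assoc]
    · simp only [h, add_assoc, CharTwo.add_self_eq_zero, add_zero]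

open Classical in
theorem fp_apply (cs : CoxeterSystem M W) (i : B) (t : W) (e : ZMod 2) :
    fp cs i (t, e) =
      (cs.simple i * t * cs.simple i, e + if t = cs.simple i then 1 else 0) := rfl

theorem simple_mul_pow (cs : CoxeterSystem M W) (i j : B) (k : ℕ) :
    (cs.simple i * cs.simple j) ^ k * (cs.simple j * (cs.simple i * cs.simple j) ^ k) =
      cs.simple j := by
  induction k with
  | zero => simp
  | succ k ih =>
    calc _ = (cs.simple i * cs.simple j) ^ k * ((cs.simple i * cs.simple j) * cs.simple j *
          (cs.simple i * cs.simple j) * (cs.simple i * cs.simple j) ^ k) := by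
            rw [pow_succ]
            nth_rewrite 2 [← pow_succ]
            rw [pow_succ']
            simp only [mul_assoc]
      _ = _ := by
            rw [show (cs.simple i * cs.simple j) * cs.simple j *
              (cs.simple i * cs.simple j) = cs.simple j by simp [mul_assoc]]
            exact ih

open Classical in
theorem fp_iter (cs : CoxeterSystem M W) (i j : B) (t : W) (e : ZMod 2) (k : ℕ) :
    ((fp cs i * fp cs j) ^ k) (t, e) =
      ((cs.simple i * cs.simple j) ^ k * t * ((cs.simple i * cs.simple j) ^ k)⁻¹,
        e + ∑ q ∈ Finset.range (2 * k),
          if (cs.simple i * cs.simple j) ^ q * t = cs.simple j then 1 else 0) := by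
  induction k with
  | zero => simp
  | succ k ih =>
    rw [pow_succ', Equiv.Perm.mul_apply, ih, Equiv.Perm.mul_apply, fp_apply, fp_apply]
    have hp := simple_mul_pow cs i j k
    obtain ⟨p, hpdef⟩ : ∃ p, p = cs.simple i * cs.simple j := ⟨_, rfl⟩
    have hpinv : p⁻¹ = cs.simple j * cs.simple i := by
      rw [hpdef, mul_inv_rev, cs.inv_simple, cs.inv_simple]
    simp only [← hpdef] at hp ⊢
    have h1 : p ^ k * t * (p ^ k)⁻¹ = cs.simple j ↔ p ^ (2 * k) * t = cs.simple j := by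
      rw [mul_inv_eq_iff_eq_mul, two_mul, pow_add, mul_assoc]
      constructor
      · intro h; rw [h, hp]
      · intro h; exact mul_left_cancel (h.trans hp.symm)
    have h2 : cs.simple j * (p ^ k * t * (p ^ k)⁻¹) * cs.simple j = cs.simple i ↔
        p ^ (2 * k + 1) * t = cs.simple j := by
      have e1 : cs.simple j * (p ^ k * t * (p ^ k)⁻¹) * cs.simple j = cs.simple i ↔
          p ^ k * t * (p ^ k)⁻¹ = p⁻¹ * cs.simple j := by
        rw [hpinv]
        generalize p ^ k * t * (p ^ k)⁻¹ = x
        constructor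
        · intro h
          rw [← h]
          simp [mul_assoc]
        · intro h
          rw [h]
          simp [mul_assoc]
      have e2 : p * p ^ k * (p⁻¹ * (cs.simple j * p ^ k)) = cs.simple j := by
        rw [← pow_succ', pow_succ]
        simpa [mul_assoc] using hp
      rw [e1, mul_inv_eq_iff_eq_mul, show 2 * k + 1 = 1 + k + k by ring, pow_add, pow_add, pow_one,
        mul_assoc, mul_assoc (p * p ^ k)]
      constructor
      · intro h; rw [h, e2]
      · intro h; exact mul_left_cancel (h.trans e2.symm)
    rw [show 2 * (k + 1) = 2 * k + 1 + 1 by ring, Finset.sum_range_succ, Finset.sum_range_succ]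
    ext
    · simp only
      rw [pow_succ' p k, mul_inv_rev, hpinv]
      nth_rewrite 3 [hpdef]
      simp only [mul_assoc]
    · simp only [h1, h2]
      ring

theorem fp_liftable (cs : CoxeterSystem M W) : M.IsLiftable (fp cs) := by
  classical
  intro i j
  ext1 ⟨t, e⟩
  rw [fp_iter, cs.simple_mul_simple_pow, two_mul, Finset.sum_range_add]
  simp only [pow_add, cs.simple_mul_simple_pow, one_mul, CharTwo.add_self_eq_zero]
  simp

/-- The action of `W` on `W × ZMod 2`. -/
noncomputable def Ph (cs : CoxeterSystem M W) : W →* Equiv.Perm (W × ZMod 2) :=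
  cs.lift ⟨fp cs, fp_liftable cs⟩

open Classical in
theorem Ph_word (cs : CoxeterSystem M W) (l : List B) (t : W) (e : ZMod 2) :
    Ph cs (cs.wordProd l) (t, e) =
      (cs.wordProd l * t * (cs.wordProd l)⁻¹, e + ((cs.rightInvSeq l).count t : ZMod 2)) := by
  induction l with
  | nil => simp
  | cons i l ih =>
    rw [cs.wordProd_cons, map_mul, Equiv.Perm.mul_apply, ih]
    rw [show Ph cs (cs.simple i) = fp cs i from cs.lift_apply_simple _ i, fp_apply]
    ext
    · simp [mul_assoc]
    · simp only [CoxeterSystem.rightInvSeq, List.count_cons, Nat.cast_add]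
      have : cs.wordProd l * t * (cs.wordProd l)⁻¹ = cs.simple i ↔
          ((cs.wordProd l)⁻¹ * cs.simple i * cs.wordProd l == t) = true := by
        rw [beq_iff_eq, mul_inv_eq_iff_eq_mul, mul_assoc, inv_mul_eq_iff_eq_mul, eq_comm]
      simp only [this, add_assoc]
      congr 2
      split_ifs <;> simp

theorem strong_exchange_right (cs : CoxeterSystem M W) {l : List B} {t : W}
    (ht : cs.IsReflection t) (hl : cs.length (cs.wordProd l * t) < cs.length (cs.wordProd l)) :
    t ∈ cs.rightInvSeq l := by
  classical
  by_contra hn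
  have h0 : ∀ e, Ph cs (cs.wordProd l) (t, e) = (cs.wordProd l * t * (cs.wordProd l)⁻¹, e) := by
    intro e
    rw [Ph_word, List.count_eq_zero_of_not_mem hn]; simp
  have h1 : Ph cs t (t, 0) = (t, 1) := by
    obtain ⟨g, i, rfl⟩ := ht
    obtain ⟨u, rfl⟩ := cs.wordProd_surjective g
    rw [map_mul, map_mul, map_inv, Equiv.Perm.mul_apply, Equiv.Perm.mul_apply]
    have e1 : (Ph cs (cs.wordProd u))⁻¹ (cs.wordProd u * cs.simple i * (cs.wordProd u)⁻¹, 0) =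
        (cs.simple i, - (((cs.rightInvSeq u).count (cs.simple i) : ℕ) : ZMod 2)) := by
      rw [Equiv.Perm.inv_eq_iff_eq, Ph_word, neg_add_cancel]
    rw [e1, show Ph cs (cs.simple i) = fp cs i from cs.lift_apply_simple _ i, fp_apply, Ph_word]
    rw [if_pos rfl]
    ext
    · simp
    · simp only [cs.simple_mul_simple_self, one_mul]; ring
  have h2 : Ph cs (cs.wordProd l * t) (t, 0) = (cs.wordProd l * t * (cs.wordProd l)⁻¹, 1) := by
    rw [map_mul, Equiv.Perm.mul_apply, h1, h0]
  obtain ⟨l', hl', he⟩ := cs.exists_isReduced (cs.wordProd l * t)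
  rw [he, Ph_word] at h2
  have h3 := congrArg Prod.snd h2
  simp only [zero_add] at h3
  have h4 : t ∈ cs.rightInvSeq l' := by
    by_contra hh
    rw [List.count_eq_zero_of_not_mem hh] at h3
    simp at h3
  have h5 := (cs.isRightInversion_of_mem_rightInvSeq hl' h4).2
  rw [← he, mul_assoc, ht.mul_self, mul_one] at h5
  omega

theorem strong_exchange_left (cs : CoxeterSystem M W) {l : List B} {t : W}
    (ht : cs.IsReflection t) (hl : cs.length (t * cs.wordProd l) < cs.length (cs.wordProd l)) :
    t ∈ cs.leftInvSeq l := by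
  have := strong_exchange_right cs (l := l.reverse) ht (by
    rw [cs.wordProd_reverse, ← cs.length_inv, mul_inv_rev, inv_inv, ht.inv, cs.length_inv]
    exact hl)
  rw [cs.rightInvSeq_reverse] at this
  simpa using this

theorem word_mem_closure (cs : CoxeterSystem M W) {K : Set B} {l : List B} (h : ∀ x ∈ l, x ∈ K) :
    cs.wordProd l ∈ Subgroup.closure (cs.simple '' K) := by
  induction l with
  | nil => simp [one_mem]
  | cons i l ih =>
    rw [cs.wordProd_cons]
    exact mul_mem (Subgroup.subset_closure ⟨i, h i (by simp), rfl⟩)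
      (ih fun x hx => h x (by simp [hx]))

theorem ris_mem_closure (cs : CoxeterSystem M W) {K : Set B} {l : List B} (h : ∀ x ∈ l, x ∈ K)
    {t : W} (ht : t ∈ cs.rightInvSeq l) : t ∈ Subgroup.closure (cs.simple '' K) := by
  induction l with
  | nil => simp at ht
  | cons i l ih =>
    have hl := word_mem_closure cs (K := K) (l := l) (fun x hx => h x (by simp [hx]))
    rw [CoxeterSystem.rightInvSeq, List.mem_cons] at ht
    rcases ht with rfl | ht
    · exact mul_mem (mul_mem (inv_mem hl) (Subgroup.subset_closure ⟨i, h i (by simp), rfl⟩)) hl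
    · exact ih (fun x hx => h x (by simp [hx])) ht

theorem lis_mem_closure (cs : CoxeterSystem M W) {K : Set B} {l : List B} (h : ∀ x ∈ l, x ∈ K)
    {t : W} (ht : t ∈ cs.leftInvSeq l) : t ∈ Subgroup.closure (cs.simple '' K) := by
  apply ris_mem_closure cs (l := l.reverse)
  · simpa using h
  · rw [cs.rightInvSeq_reverse]; simpa using ht


/-- Words (written backwards) that grow irreducibly out of `s`. -/
def Grow (cs : CoxeterSystem M W) (s : B) : List B → Prop
  | [] => True
  | j :: l => Grow cs s l ∧ j ∉ s :: l ∧ ∃ i ∈ s :: l, ¬ Commute (cs.simple j) (cs.simple i)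

theorem Grow.suffix {cs : CoxeterSystem M W} {s : B} {u l : List B} (h : Grow cs s (u ++ l)) :
    Grow cs s l := by
  induction u with
  | nil => exact h
  | cons j u ih => exact ih h.1

/-- The root attached to a word. -/
noncomputable def rt (cs : CoxeterSystem M W) (s : B) (l : List B) : B →₀ ℝ :=
  rho cs (cs.wordProd l) (al s)

theorem rt_cons (cs : CoxeterSystem M W) (s j : B) (l : List B) :
    rt cs s (j :: l) = rt cs s l - ph M j (rt cs s l) • al j := by
  rw [rt, cs.wordProd_cons, map_mul, LinearEquiv.mul_apply, rho_simple]; rfl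

theorem ph_le {m : B} {v : B →₀ ℝ} (hv : ∀ i, 0 ≤ v i) (hm : v m = 0) (A : Finset B) :
    ph M m v ≤ ∑ i ∈ A, v i * cc M m i := by
  classical
  have h1 : ph M m v = ∑ i ∈ v.support ∪ A, v i * cc M m i := by
    rw [ph, Finsupp.linearCombination_apply, Finsupp.sum]
    simp only [smul_eq_mul]
    apply Finset.sum_subset Finset.subset_union_left
    intro x _ hx
    simp [Finsupp.notMem_support_iff.mp hx]
  rw [h1, ← Finset.sum_sdiff (Finset.subset_union_right : A ⊆ v.support ∪ A)]
  have : ∑ i ∈ (v.support ∪ A) \ A, v i * cc M m i ≤ 0 := by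
    apply Finset.sum_nonpos
    intro i _
    rcases eq_or_ne m i with rfl | h
    · rw [hm, zero_mul]
    · exact mul_nonpos_of_nonneg_of_nonpos (hv i) (cc_nonpos h)
  linarith

theorem rt_coord (cs : CoxeterSystem M W) (s : B) {l : List B} (h : Grow cs s l) :
    (∀ x ∈ s :: l, 1 ≤ rt cs s l x) ∧ ∀ x ∉ s :: l, rt cs s l x = 0 := by
  induction l with
  | nil =>
    simp only [rt, cs.wordProd_nil, map_one, LinearEquiv.coe_one, id_eq, al]
    constructor
    · simp
    · intro x hx
      have : s ≠ x := by rintro rfl; simp at hx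
      simp [this]
  | cons j l ih =>
    obtain ⟨hl, hj, i, hi, hc⟩ := h
    obtain ⟨h1, h2⟩ := ih hl
    have hnn : ∀ i, 0 ≤ rt cs s l i := by
      intro x
      by_cases hx : x ∈ s :: l
      · linarith [h1 x hx]
      · rw [h2 x hx]
    have hb := ph_le (M := M) hnn (h2 j hj) {i}
    rw [Finset.sum_singleton] at hb
    have hcc := cc_le_neg_one cs hc
    have hi1 := h1 i hi
    constructor
    · intro x hx
      rw [rt_cons]
      rcases eq_or_ne x j with rfl | hxj
      · simp only [Finsupp.coe_sub, Finsupp.coe_smul, Pi.sub_apply, Pi.smul_apply, smul_eq_mul, al,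
          Finsupp.single_eq_same, h2 x hj]
        nlinarith
      · have : rt cs s l x = (rt cs s l - ph M j (rt cs s l) • al j) x := by
          simp [al, hxj.symm]
        rw [← this]
        apply h1
        simp only [List.mem_cons] at hx ⊢
        tauto
    · intro x hx
      simp only [List.mem_cons, not_or] at hx
      rw [rt_cons]
      have : rt cs s l x = (rt cs s l - ph M j (rt cs s l) • al j) x := by
        simp [al, Ne.symm hx.2.1]
      rw [← this]
      apply h2
      simp only [List.mem_cons]
      tauto

theorem rt_nonneg (cs : CoxeterSystem M W) (s : B) {l : List B} (h : Grow cs s l) (x : B) :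
    0 ≤ rt cs s l x := by
  by_cases hx : x ∈ s :: l
  · linarith [(rt_coord cs s h).1 x hx]
  · rw [(rt_coord cs s h).2 x hx]

/-- The reflection attached to a word. -/
def rr (cs : CoxeterSystem M W) (s : B) (l : List B) : W :=
  cs.wordProd l * cs.simple s * (cs.wordProd l)⁻¹

theorem rho_rr (cs : CoxeterSystem M W) (s : B) (l : List B) (x : B →₀ ℝ) :
    rho cs (rr cs s l) x = x - bf M (rt cs s l) x • rt cs s l := by
  rw [rr, map_mul, map_mul, LinearEquiv.mul_apply, LinearEquiv.mul_apply, rho_simple, map_sub,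
    map_smul]
  have h1 : rho cs (cs.wordProd l) (rho cs (cs.wordProd l)⁻¹ x) = x := by
    rw [← LinearEquiv.mul_apply, ← map_mul]; simp
  have h2 : ph M s (rho cs (cs.wordProd l)⁻¹ x) = bf M (rt cs s l) x := by
    rw [← bf_al, ← bf_inv cs (cs.wordProd l), h1]; rfl
  rw [h1, h2]; rfl

theorem bf_rt_self (cs : CoxeterSystem M W) (s : B) (l : List B) :
    bf M (rt cs s l) (rt cs s l) = 2 := by
  rw [rt, bf_inv, bf_al, ph_self]

theorem infinite_order (cs : CoxeterSystem M W) (s m : B) {l : List B} (h : Grow cs s l)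
    (hm : m ≠ s) (hb : ph M m (rt cs s l) ≤ -2) :
    ¬ IsOfFinOrder (rr cs s l * cs.simple m) := by
  rw [isOfFinOrder_iff_pow_eq_one]
  rintro ⟨n, hn, h1⟩
  obtain ⟨a, ha⟩ : ∃ a, ph M m (rt cs s l) = -a := ⟨- ph M m (rt cs s l), by ring⟩
  have key : ∀ k : ℕ, ∃ p q : ℝ, rho cs ((rr cs s l * cs.simple m) ^ k) (rt cs s l) =
      p • rt cs s l + q • al m ∧ 0 ≤ q ∧ q + 1 ≤ p ∧ (k : ℝ) + 1 ≤ p := by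
    intro k
    induction k with
    | zero => exact ⟨1, 0, by simp⟩
    | succ k ih =>
      obtain ⟨p, q, e, hq, hpq, hk⟩ := ih
      have ha2 : 2 ≤ a := by linarith
      have hq1 : p + 1 ≤ a * p - q := by nlinarith
      have hq2 : 2 * (a * p - q) ≤ a * (a * p - q) :=
        mul_le_mul_of_nonneg_right ha2 (by linarith)
      refine ⟨a * (a * p - q) - p, a * p - q, ?_, ?_, ?_, ?_⟩
      · rw [pow_succ', map_mul, LinearEquiv.mul_apply, e, map_mul, LinearEquiv.mul_apply,
          rho_simple, rho_rr]
        simp only [map_add, map_sub, map_smul, ha, ph_self, bf_rt_self, bf_al_right, smul_eq_mul]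
        module
      · linarith
      · linarith
      · push_cast; linarith
  obtain ⟨p, q, e, hq, hpq, hk⟩ := key n
  rw [h1] at e
  have e' := DFunLike.congr_fun e s
  simp [al, hm] at e'
  have h2 := (rt_coord cs s h).1 s (by simp)
  have h3 : (1 : ℝ) ≤ n := by exact_mod_cast hn
  nlinarith

theorem simple_notMem (cs : CoxeterSystem M W) {K : Set B} {j : B} (hj : j ∉ K) :
    cs.simple j ∉ Subgroup.closure (cs.simple '' K) := by
  intro h
  have := coord_fix cs h hj (al j)
  rw [rho_simple, ph_self] at this
  simp [al] at this

theorem not_commute_rr (cs : CoxeterSystem M W) (s j : B) {l : List B} (h : Grow cs s (j :: l)) :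
    ¬ Commute (rr cs s l) (cs.simple j) := by
  intro hc
  have h1 : rho cs (rr cs s l) (rt cs s (j :: l)) = - rt cs s (j :: l) := by
    have e : rt cs s (j :: l) = rho cs (cs.simple j) (rt cs s l) := by
      rw [rt, cs.wordProd_cons, map_mul, LinearEquiv.mul_apply]; rfl
    rw [e, ← LinearEquiv.mul_apply, ← map_mul, hc.eq, map_mul, LinearEquiv.mul_apply, rho_rr,
      bf_rt_self, ← map_neg]
    congr 1
    module
  rw [rho_rr] at h1
  have e' := DFunLike.congr_fun h1 j
  simp [(rt_coord cs s h.1).2 j h.2.1] at e'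
  have := (rt_coord cs s h).1 j (by simp)
  linarith

theorem rr_word (cs : CoxeterSystem M W) (s : B) (l : List B) :
    cs.wordProd (l ++ s :: l.reverse) = rr cs s l := by
  rw [cs.wordProd_append, cs.wordProd_cons, cs.wordProd_reverse, rr, mul_assoc]

theorem reduced_word (cs : CoxeterSystem M W) (s : B) {l : List B} (h : Grow cs s l) :
    cs.IsReduced (l ++ s :: l.reverse) := by
  induction l with
  | nil => simp [CoxeterSystem.IsReduced]
  | cons j l ih =>
    have ih' := ih h.1
    have hK : ∀ x ∈ l ++ s :: l.reverse, x ∈ {x | x ∈ s :: l} := by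
      intro x hx
      simp at hx ⊢
      tauto
    have hj : j ∉ {x | x ∈ s :: l} := h.2.1
    have hn := simple_notMem cs hj
    have hw := rr_word cs s l
    unfold CoxeterSystem.IsReduced at ih' ⊢
    have e1 : cs.length (cs.simple j * rr cs s l) = cs.length (rr cs s l) + 1 := by
      rcases cs.length_simple_mul (rr cs s l) j with h1 | h1
      · exact h1
      · exfalso
        apply hn
        apply lis_mem_closure cs hK
        apply strong_exchange_left cs (cs.isReflection_simple j)
        rw [hw]; omega
    have e2 : cs.length (cs.simple j * rr cs s l * cs.simple j) =
        cs.length (cs.simple j * rr cs s l) + 1 := by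
      rcases cs.length_mul_simple (cs.simple j * rr cs s l) j with h1 | h1
      · exact h1
      · exfalso
        have : cs.simple j ∈ cs.rightInvSeq (j :: (l ++ s :: l.reverse)) := by
          apply strong_exchange_right cs (cs.isReflection_simple j)
          rw [cs.wordProd_cons, hw]; omega
        rw [CoxeterSystem.rightInvSeq, List.mem_cons] at this
        rcases this with h2 | h2
        · rw [hw, mul_assoc, eq_inv_mul_iff_mul_eq] at h2
          exact not_commute_rr cs s j h h2
        · exact hn (ris_mem_closure cs hK h2)
    have e3 : cs.wordProd (j :: l ++ s :: (j :: l).reverse) =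
        cs.simple j * rr cs s l * cs.simple j := by
      rw [rr_word, rr, rr, cs.wordProd_cons, mul_inv_rev, cs.inv_simple]
      simp only [mul_assoc]
    rw [e3, e2, e1, ← hw, ih']
    simp
    ring

theorem Grow.nodup {cs : CoxeterSystem M W} {s : B} {l : List B} (h : Grow cs s l) :
    (s :: l).Nodup := by
  induction l with
  | nil => simp
  | cons j l ih =>
    have := ih h.1
    have h2 := h.2.1
    simp only [List.nodup_cons, List.mem_cons, not_or] at this h2 ⊢
    tauto

theorem supp_min (cs : CoxeterSystem M W) {l : List B} (h : l.Nodup) {K : Set B}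
    (hl : cs.wordProd l ∈ Subgroup.closure (cs.simple '' K)) {x : B} (hx : x ∈ l) : x ∈ K := by
  by_contra hn
  obtain ⟨p, u, rfl⟩ := List.append_of_mem hx
  have hp : x ∉ {y | y ∈ p} := by
    intro hp
    exact (List.nodup_append.mp h).2.2 x hp x (by simp) rfl
  have hu : x ∉ {y | y ∈ u} := (List.nodup_cons.mp (List.nodup_append.mp h).2.1).1
  have h1 := coord_fix cs hl hn (rho cs (cs.wordProd u)⁻¹ (al x))
  rw [coord_fix cs (inv_mem (word_mem_closure cs (K := {y | y ∈ u}) (fun _ h => h))) hu,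
    ← LinearEquiv.mul_apply, ← map_mul, cs.wordProd_append, cs.wordProd_cons, mul_assoc, mul_assoc,
    mul_inv_cancel, mul_one, map_mul, LinearEquiv.mul_apply,
    coord_fix cs (word_mem_closure cs (K := {y | y ∈ p}) (fun _ h => h)) hp, rho_simple,
    ph_self] at h1
  simp [al] at h1


/-! ### Spherical sets and adjacency -/

theorem spherical_mono {cs : CoxeterSystem M W} {J K : Set B} (h : J ⊆ K)
    (hK : Spherical cs K) : Spherical cs J :=
  Set.Finite.subset hK (SetLike.coe_subset_coe.mpr (Subgroup.closure_mono (Set.image_mono h)))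

theorem adj_symm {cs : CoxeterSystem M W} {i j : B} (h : Adjacent cs i j) :
    Adjacent cs j i := by
  unfold Adjacent at *
  rwa [Set.pair_comm]

theorem adj_of_spherical {cs : CoxeterSystem M W} {J : Set B} (h : Spherical cs J) {i j : B}
    (hi : i ∈ J) (hj : j ∈ J) : Adjacent cs i j := by
  refine Set.Finite.subset h (SetLike.coe_subset_coe.mpr (Subgroup.closure_mono ?_))
  rintro _ (rfl | rfl)
  exacts [⟨i, hi, rfl⟩, ⟨j, hj, rfl⟩]

theorem adj_of_ne_zero (cs : CoxeterSystem M W) {i j : B} (h : M i j ≠ 0) :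
    Adjacent cs i j := by
  have hfin : IsOfFinOrder (cs.simple i * cs.simple j) :=
    isOfFinOrder_iff_pow_eq_one.mpr ⟨M i j, Nat.pos_of_ne_zero h, cs.simple_mul_simple_pow i j⟩
  have hZ : (Subgroup.zpowers (cs.simple i * cs.simple j) : Set W).Finite := by
    rw [← finite_zpowers] at hfin
    exact hfin
  refine Set.Finite.subset (hZ.union (hZ.image (fun z => z * cs.simple i))) ?_
  intro x hx
  have hi : cs.simple i * cs.simple i = 1 := cs.simple_mul_simple_self i
  have hj : cs.simple j * cs.simple j = 1 := cs.simple_mul_simple_self j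
  have key : ∀ x y : W, y ∈ ({cs.simple i, cs.simple j} : Set W) →
      x ∈ (Subgroup.zpowers (cs.simple i * cs.simple j) : Set W) ∪
        (fun z => z * cs.simple i) '' (Subgroup.zpowers (cs.simple i * cs.simple j) : Set W) →
      x * y ∈ (Subgroup.zpowers (cs.simple i * cs.simple j) : Set W) ∪
        (fun z => z * cs.simple i) '' (Subgroup.zpowers (cs.simple i * cs.simple j) : Set W) := by
    intro x y hy hx
    have hr : cs.simple i * cs.simple j ∈ Subgroup.zpowers (cs.simple i * cs.simple j) :=
      Subgroup.mem_zpowers _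
    rcases hy with rfl | rfl
    · rcases hx with hx | ⟨z, hz, rfl⟩
      · exact Or.inr ⟨x, hx, rfl⟩
      · left
        simp only [mul_assoc, hi, mul_one]
        exact hz
    · rcases hx with hx | ⟨z, hz, rfl⟩
      · right
        refine ⟨x * (cs.simple i * cs.simple j)⁻¹, mul_mem hx (inv_mem hr), ?_⟩
        simp [mul_assoc]
      · left
        simp only [mul_assoc]
        exact mul_mem hz hr
  induction hx using Subgroup.closure_induction_right with
  | one => exact Or.inl (one_mem _)
  | mul_right x hx y hy ih => exact key _ _ hy ih
  | mul_inv_cancel x hx y hy ih =>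
    have : y⁻¹ = y := by rcases hy with rfl | rfl <;> simp
    rw [this]
    exact key _ _ hy ih

theorem adj_self (cs : CoxeterSystem M W) (i : B) : Adjacent cs i i :=
  adj_of_ne_zero cs (by simp)

theorem finOrder_of_spherical {cs : CoxeterSystem M W} {J : Set B} (h : Spherical cs J) {x : W}
    (hx : x ∈ Subgroup.closure (cs.simple '' J)) : IsOfFinOrder x := by
  have : Finite (Subgroup.closure (cs.simple '' J)) := h
  have := isOfFinOrder_of_finite (⟨x, hx⟩ : Subgroup.closure (cs.simple '' J))
  exact (Subgroup.closure (cs.simple '' J)).subtype.isOfFinOrder this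

/-- The support of a word. -/
def sp (s : B) (l : List B) : Set B := {x | x ∈ s :: l}

theorem sp_cons (s v : B) (l : List B) : sp s (v :: l) = sp s l ∪ {v} := by
  ext x
  simp [sp]
  tauto

theorem sp_append (s : B) (u l : List B) : sp s l ⊆ sp s (u ++ l) := by
  intro x hx
  simp [sp] at hx ⊢
  tauto

theorem grow_sub {cs : CoxeterSystem M W} {s : B} {l : List B} (h : Grow cs s l) {K : Set B}
    (hs : s ∈ K)
    (hst : ∀ j ∈ l, ∀ i ∈ K, ¬ Commute (cs.simple j) (cs.simple i) → j ∈ K) : sp s l ⊆ K := by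
  induction l with
  | nil => intro x hx; simp [sp] at hx; rwa [hx]
  | cons j l ih =>
    have ih' := ih h.1 (fun j hj => hst j (List.mem_cons_of_mem _ hj))
    obtain ⟨_, _, i, hi, hc⟩ := h
    rw [sp_cons]
    rintro x (hx | rfl)
    · exact ih' hx
    · exact hst x (by simp) i (ih' hi) hc

theorem grow_irred {cs : CoxeterSystem M W} {s : B} {l : List B} (h : Grow cs s l) :
    IrreducibleSubset cs (sp s l) := by
  have key : ∀ K L : Set B, s ∈ K → L.Nonempty → Disjoint K L → K ∪ L = sp s l →
      (∀ k ∈ K, ∀ l ∈ L, Commute (cs.simple k) (cs.simple l)) → False := by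
    intro K L hs hL hd hu hc
    have : sp s l ⊆ K := by
      apply grow_sub h hs
      intro j hj i hi hn
      have : j ∈ K ∪ L := by rw [hu]; simp [sp, hj]
      rcases this with hjK | hjL
      · exact hjK
      · exact absurd (hc i hi j hjL).symm hn
    obtain ⟨x, hx⟩ := hL
    exact Set.disjoint_left.mp hd (this (hu ▸ Or.inr hx)) hx
  rintro ⟨K, L, hK, hL, hd, hu, hc⟩
  have : s ∈ K ∪ L := by rw [hu]; simp [sp]
  rcases this with hs | hs
  · exact key K L hs hL hd hu hc
  · exact key L K hs hK hd.symm (by rw [Set.union_comm, hu])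
      (fun k hk l hl => (hc l hl k hk).symm)

/-- Combinatorial data of a good marking. -/
structure GD (cs : CoxeterSystem M W) (s : B) (l : List B) (m : B) : Prop where
  grow : Grow cs s (m :: l)
  sph : Spherical cs (sp s l)
  nsph : ¬ Spherical cs (sp s (m :: l))

theorem length_word (cs : CoxeterSystem M W) (s : B) {l : List B} (h : Grow cs s l) :
    cs.length (cs.wordProd l) = l.length := by
  have := (reduced_word cs s h).take l.length
  rwa [List.take_left] at this

theorem word_mem (cs : CoxeterSystem M W) (s : B) (l : List B) :
    cs.wordProd l ∈ Subgroup.closure (cs.simple '' sp s l) :=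
  word_mem_closure cs (fun x hx => by simp [sp, hx])

theorem isBase_of (cs : CoxeterSystem M W) (s : B) {l : List B} (h : Grow cs s l)
    (hs : Spherical cs (sp s l)) : IsBase cs s (cs.wordProd l)⁻¹ := by
  constructor
  · have := reduced_word cs s h
    unfold CoxeterSystem.IsReduced at this
    rw [rr_word] at this
    rw [inv_inv, cs.length_inv, length_word cs s h]
    change cs.length (rr cs s l) = _
    rw [this]
    simp
    ring
  · intro t ht hl
    rw [← cs.wordProd_reverse] at hl
    have h1 := strong_exchange_left cs ht hl
    have h2 : t ∈ Subgroup.closure (cs.simple '' sp s l) :=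
      lis_mem_closure cs (fun x hx => by simp [sp] at hx ⊢; tauto) h1
    refine Set.Finite.subset hs (SetLike.coe_subset_coe.mpr ((Subgroup.closure_le _).mpr ?_))
    rintro _ (rfl | rfl)
    · exact Subgroup.subset_closure ⟨s, by simp [sp], rfl⟩
    · exact h2

theorem isSupport_of (cs : CoxeterSystem M W) (s : B) {l : List B} (h : l.Nodup) :
    IsSupport cs s (cs.wordProd l)⁻¹ (sp s l) := by
  refine ⟨by simp [sp], inv_mem (word_mem cs s l), ?_⟩
  intro J' hs hw x hx
  rw [inv_mem_iff] at hw
  simp only [sp, List.mem_cons, Set.mem_ofPred_eq] at hx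
  rcases hx with rfl | hx
  · exact hs
  · exact supp_min cs h hw hx

/-- The marking attached to combinatorial data. -/
def mk {cs : CoxeterSystem M W} {s : B} {l : List B} {m : B} (h : GD cs s l m) : Marking cs where
  core := s
  elt := (cs.wordProd l)⁻¹
  marker := m
  supp := sp s l
  isBase := isBase_of cs s h.grow.1 h.sph
  isSupport := isSupport_of cs s (List.nodup_cons.mp h.grow.1.nodup).2
  marker_not_perp := by
    rintro ⟨_, hc⟩
    obtain ⟨i, hi, hn⟩ := h.grow.2.2
    exact hn (hc i hi)

theorem ph_two {cs : CoxeterSystem M W} {s : B} {l : List B} {m j : B}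
    (h : Grow cs s (m :: l)) (hj : j ∈ sp s l) (hM : M m j = 0) :
    ph M m (rt cs s l) ≤ -2 := by
  obtain ⟨h1, h2⟩ := rt_coord cs s h.1
  have := ph_le (M := M) (rt_nonneg cs s h.1) (h2 m h.2.1) {j}
  rw [Finset.sum_singleton] at this
  have hc : cc M m j = -2 := by simp [cc, hM]
  rw [hc] at this
  have := h1 j hj
  linarith

theorem mk_good {cs : CoxeterSystem M W} {s : B} {l : List B} {m : B} (h : GD cs s l m) :
    (mk h).Good := by
  have hnd := h.grow.1.nodup
  refine ⟨?_, ⟨⟨(mk h).isBase, l.reverse, ?_, ?_, ?_, ?_⟩, h.grow.2.1⟩, h.sph⟩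
  · by_cases hA : ∀ j ∈ sp s l, Adjacent cs m j
    · right
      refine ⟨?_, ?_, ?_⟩
      · change IrreducibleSubset cs (sp s l ∪ {m})
        rw [← sp_cons]
        exact grow_irred h.grow
      · change TwoSpherical cs (sp s l ∪ {m})
        rintro i (hi | rfl) j (hj | rfl)
        · exact adj_of_spherical h.sph hi hj
        · exact adj_symm (hA i hi)
        · exact hA j hj
        · exact adj_self cs _
      · change ¬ Spherical cs (sp s l ∪ {m})
        rw [← sp_cons]
        exact h.nsph
    · left
      push Not at hA
      obtain ⟨j, hj, hn⟩ := hA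
      have hM : M m j = 0 := by
        by_contra h0
        exact hn (adj_of_ne_zero cs h0)
      have hms : m ≠ s := fun e => h.grow.2.1 (by simp [e])
      have := infinite_order cs s m h.grow.1 hms (ph_two h.grow hj hM)
      intro hf
      apply this
      change IsOfFinOrder (cs.simple s * ((cs.wordProd l)⁻¹ * cs.simple m * (cs.wordProd l)⁻¹⁻¹)) at hf
      have e : rr cs s l * cs.simple m = cs.wordProd l *
          (cs.simple s * ((cs.wordProd l)⁻¹ * cs.simple m * (cs.wordProd l)⁻¹⁻¹)) *
          (cs.wordProd l)⁻¹ := by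
        rw [rr]; group
      rw [e]
      exact (isConj_iff.mpr ⟨_, rfl⟩ : IsConj _ _).isOfFinOrder hf
  · exact (cs.wordProd_reverse l).symm
  · change cs.length (cs.wordProd l)⁻¹ = _
    rw [cs.length_inv, length_word cs s h.grow.1, List.length_reverse]
  · exact List.nodup_reverse.mpr (List.nodup_cons.mp hnd).2
  · change s ∉ l.reverse
    rw [List.mem_reverse]
    exact (List.nodup_cons.mp hnd).1

theorem length_rr_le (cs : CoxeterSystem M W) (s : B) (l : List B) :
    cs.length (rr cs s l) ≤ 2 * l.length + 1 := by
  rw [← rr_word]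
  refine (cs.length_wordProd_le _).trans ?_
  simp
  omega

theorem grow_of_length (cs : CoxeterSystem M W) (s : B) {l : List B} (hn : l.Nodup) (hs : s ∉ l)
    (hl : cs.length (rr cs s l) = 2 * l.length + 1) : Grow cs s l := by
  induction l with
  | nil => trivial
  | cons j l ih =>
    have e3 : rr cs s (j :: l) = cs.simple j * rr cs s l * cs.simple j := by
      rw [rr, rr, cs.wordProd_cons, mul_inv_rev, cs.inv_simple]
      simp only [mul_assoc]
    have hle := length_rr_le cs s l
    have b1 : cs.length (rr cs s (j :: l)) ≤ cs.length (rr cs s l) + 2 := by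
      rw [e3]
      have h1 := cs.length_mul_le (cs.simple j * rr cs s l) (cs.simple j)
      have h2 := cs.length_mul_le (cs.simple j) (rr cs s l)
      rw [cs.length_simple] at h1 h2
      omega
    simp only [List.length_cons] at hl
    simp only [List.nodup_cons, List.mem_cons, not_or] at hn hs
    refine ⟨ih hn.2 hs.2 (by omega), ?_, ?_⟩
    · simp only [List.mem_cons, not_or]
      exact ⟨Ne.symm hs.1, hn.1⟩
    · by_contra hc
      push Not at hc
      have hcw : ∀ k : List B, (∀ x ∈ k, x ∈ s :: l) →
          Commute (cs.simple j) (cs.wordProd k) := by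
        intro k hk
        induction k with
        | nil => simp
        | cons a k ihk =>
          rw [cs.wordProd_cons]
          exact (hc a (hk a (by simp))).mul_right
            (ihk (fun x hx => hk x (List.mem_cons_of_mem _ hx)))
      have hcr : Commute (cs.simple j) (rr cs s l) := by
        rw [← rr_word]
        apply hcw
        intro x hx
        simp at hx ⊢
        tauto
      rw [e3, hcr.eq, mul_assoc, cs.simple_mul_simple_self, mul_one] at hl
      omega

theorem exists_data {cs : CoxeterSystem M W} {μ : Marking cs} (h : μ.Good) :
    ∃ l, GD cs μ.core l μ.marker ∧ μ.elt = (cs.wordProd l)⁻¹ := by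
  obtain ⟨hcs, ⟨⟨hb, l', hw, hlen, hnd, hs⟩, hm⟩, hsp⟩ := h
  have hw' : μ.elt = (cs.wordProd l'.reverse)⁻¹ := by rw [cs.wordProd_reverse, inv_inv, hw]
  have hnd' : l'.reverse.Nodup := List.nodup_reverse.mpr hnd
  have hg : Grow cs μ.core l'.reverse := by
    apply grow_of_length cs _ hnd' (by simpa using hs)
    have := hb.1
    rw [hlen, hw', inv_inv] at this
    rw [List.length_reverse]
    exact this
  have hsupp : μ.supp = sp μ.core l'.reverse := by
    obtain ⟨a1, a2, a3⟩ := μ.isSupport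
    have b := isSupport_of cs μ.core hnd'
    rw [← hw'] at b
    exact Set.Subset.antisymm (a3 _ b.1 b.2.1) (b.2.2 _ a1 a2)
  have hnsp : ¬ Spherical cs (μ.supp ∪ {μ.marker}) := by
    intro hS
    rcases hcs with hc | hc
    · apply hc
      apply finOrder_of_spherical hS
      have hle : Subgroup.closure (cs.simple '' μ.supp) ≤
          Subgroup.closure (cs.simple '' (μ.supp ∪ {μ.marker})) :=
        Subgroup.closure_mono (Set.image_mono Set.subset_union_left)
      have h1 := hle μ.isSupport.2.1
      have h2 : cs.simple μ.core ∈ Subgroup.closure (cs.simple '' (μ.supp ∪ {μ.marker})) :=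
        Subgroup.subset_closure ⟨_, Or.inl μ.isSupport.1, rfl⟩
      have h3 : cs.simple μ.marker ∈ Subgroup.closure (cs.simple '' (μ.supp ∪ {μ.marker})) :=
        Subgroup.subset_closure ⟨_, Or.inr rfl, rfl⟩
      exact mul_mem h2 (mul_mem (mul_mem h1 h3) (inv_mem h1))
    · exact hc.2.2 hS
  refine ⟨l'.reverse, ⟨⟨hg, ?_, ?_⟩, ?_, ?_⟩, hw'⟩
  · rw [hsupp] at hm; exact hm
  · by_contra hc
    push Not at hc
    apply μ.marker_not_perp
    refine ⟨⟨trivial, hm⟩, ?_⟩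
    intro j hj
    rw [hsupp] at hj
    exact hc j hj
  · rw [← hsupp]; exact hsp
  · rw [sp_cons, ← hsupp]; exact hnsp

/-- One step between good markings. -/
def LK {cs : CoxeterSystem M W} (μ ν : Marking cs) : Prop :=
  μ.Good ∧ ν.Good ∧ (MoveN1 μ ν ∨ MoveM2 μ ν ∨ MoveM3 μ ν)

theorem LK.symm {cs : CoxeterSystem M W} {μ ν : Marking cs} (h : LK μ ν) : LK ν μ := by
  obtain ⟨h1, h2, h3⟩ := h
  refine ⟨h2, h1, ?_⟩
  rcases h3 with ⟨a, b, c⟩ | ⟨a, b, j, c, d⟩ | ⟨a, b⟩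
  · exact Or.inl ⟨a.symm, b.symm, adj_symm c⟩
  · exact Or.inr (Or.inl ⟨a.symm, b.symm, j, c.symm, b ▸ d⟩)
  · refine Or.inr (Or.inr ⟨a.symm, ?_⟩)
    have : ν.supp ∪ {ν.marker} ∪ μ.supp ∪ {μ.marker} =
        μ.supp ∪ {μ.marker} ∪ ν.supp ∪ {ν.marker} := by
      ext x
      simp
      tauto
    rw [this]
    exact b

/-- Two data are connected. -/
def CC (cs : CoxeterSystem M W) (s : B) (l : List B) (m : B) (k : List B) (n : B) : Prop :=
  ∃ (h : GD cs s l m) (h' : GD cs s k n), Relation.ReflTransGen LK (mk h) (mk h')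

section
variable {cs : CoxeterSystem M W} {s : B}

theorem CC.rfl' {l : List B} {m : B} (h : GD cs s l m) : CC cs s l m l m :=
  ⟨h, h, Relation.ReflTransGen.refl⟩

theorem CC.trans {l k j : List B} {m n o : B} (h : CC cs s l m k n) (h' : CC cs s k n j o) :
    CC cs s l m j o := by
  obtain ⟨a, b, c⟩ := h
  obtain ⟨a', b', c'⟩ := h'
  exact ⟨a, b', c.trans c'⟩

theorem CC.symm {l k : List B} {m n : B} (h : CC cs s l m k n) : CC cs s k n l m := by
  obtain ⟨a, b, c⟩ := h
  refine ⟨b, a, ?_⟩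
  revert c
  generalize mk a = x
  generalize mk b = y
  intro c
  induction c with
  | refl => exact Relation.ReflTransGen.refl
  | tail _ h ih => exact Relation.ReflTransGen.head h.symm ih

theorem CC.n1 {l k : List B} {m n : B} (h : GD cs s l m) (h' : GD cs s k n)
    (e : cs.wordProd l = cs.wordProd k) (ha : Adjacent cs m n) : CC cs s l m k n :=
  ⟨h, h', Relation.ReflTransGen.single ⟨mk_good h, mk_good h',
    Or.inl ⟨rfl, congrArg (fun w : W => w⁻¹) e, ha⟩⟩⟩

theorem CC.m2 {l : List B} {m j : B} (h : GD cs s l m) (h' : GD cs s (j :: l) m)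
    (ha : Adjacent cs m j) : CC cs s l m (j :: l) m :=
  ⟨h, h', Relation.ReflTransGen.single ⟨mk_good h, mk_good h',
    Or.inr (Or.inl ⟨rfl, rfl, j, Or.inr (by simp [mk, cs.wordProd_cons]), ha⟩)⟩⟩

theorem CC.m3 {l k : List B} {m n : B} (h : GD cs s l m) (h' : GD cs s k n)
    (ha : TwoSpherical cs (sp s l ∪ {m} ∪ sp s k ∪ {n})) : CC cs s l m k n :=
  ⟨h, h', Relation.ReflTransGen.single ⟨mk_good h, mk_good h',
    Or.inr (Or.inr ⟨rfl, ha⟩)⟩⟩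

/-- Inside a spherical set there are no cycles. -/
theorem cycle {l : List B} {v v' : B} (h : Grow cs s (v :: l)) (h' : Grow cs s (v' :: l))
    (hne : v ≠ v') (hs : Spherical cs (sp s (v' :: v :: l))) :
    Commute (cs.simple v') (cs.simple v) := by
  classical
  by_contra hc
  obtain ⟨_, hv', i, hi, hci⟩ := h'
  obtain ⟨h1, h2⟩ := rt_coord cs s h
  have hvm : v' ∉ s :: v :: l := by
    simp only [List.mem_cons, not_or] at hv' ⊢
    exact ⟨hv'.1, hne.symm, hv'.2⟩
  have hvi : v ≠ i := by rintro rfl; exact h.2.1 hi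
  have hb := ph_le (M := M) (rt_nonneg cs s h) (h2 v' hvm) {v, i}
  rw [Finset.sum_pair hvi] at hb
  have c1 := cc_le_neg_one cs hc
  have c2 := cc_le_neg_one cs hci
  have d1 := h1 v (by simp)
  have d2 := h1 i (by simp at hi ⊢; tauto)
  have := infinite_order cs s v' h (fun e => hvm (by simp [e])) (by nlinarith)
  apply this
  apply finOrder_of_spherical hs
  have hle : Subgroup.closure (cs.simple '' sp s (v :: l)) ≤
      Subgroup.closure (cs.simple '' sp s (v' :: v :: l)) :=
    Subgroup.closure_mono (Set.image_mono (sp_append s [v'] (v :: l)))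
  have e1 := hle (word_mem cs s (v :: l))
  have e2 : cs.simple s ∈ Subgroup.closure (cs.simple '' sp s (v' :: v :: l)) :=
    Subgroup.subset_closure ⟨s, by simp [sp], rfl⟩
  have e3 : cs.simple v' ∈ Subgroup.closure (cs.simple '' sp s (v' :: v :: l)) :=
    Subgroup.subset_closure ⟨v', by simp [sp], rfl⟩
  exact mul_mem (mul_mem (mul_mem e1 e2) (inv_mem e1)) e3

theorem grow_length [Finite B] {l : List B} (h : Grow cs s l) : l.length < Nat.card B := by
  have := Fintype.ofFinite B
  have := h.nodup.length_le_card
  rw [Nat.card_eq_fintype_card]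
  simpa using this

theorem extend [Finite B] {l1 : List B} {m1 : B} (h1 : GD cs s l1 m1) (n : ℕ) :
    ∀ l : List B, Nat.card B ≤ n + l.length → Grow cs s l → Spherical cs (sp s l) →
      ∃ u m, GD cs s (u ++ l) m := by
  induction n with
  | zero =>
    intro l hn hg _
    have := grow_length hg
    omega
  | succ n ih =>
    intro l hn hg hs
    by_cases hv : ∃ v, Grow cs s (v :: l)
    · obtain ⟨v, hv⟩ := hv
      by_cases hsv : Spherical cs (sp s (v :: l))
      · obtain ⟨u, m, hu⟩ := ih (v :: l) (by simp only [List.length_cons]; omega) hv hsv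
        exact ⟨u ++ [v], m, by simpa using hu⟩
      · exact ⟨[], v, hv, hs, hsv⟩
    · exfalso
      push Not at hv
      apply h1.nsph
      refine spherical_mono (grow_sub h1.grow (K := sp s l) (by simp [sp]) ?_) hs
      intro j _ i hi hc
      by_contra hj
      exact hv j ⟨hg, hj, i, hi, hc⟩

theorem grow_swap {l : List B} {v v' : B} (h : Grow cs s (v :: l)) (h' : Grow cs s (v' :: l))
    (hne : v ≠ v') : Grow cs s (v' :: v :: l) := by
  obtain ⟨_, hv', i, hi, hci⟩ := h'
  refine ⟨h, ?_, i, ?_, hci⟩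
  · simp only [List.mem_cons, not_or] at hv' ⊢
    exact ⟨hv'.1, hne.symm, hv'.2⟩
  · simp only [List.mem_cons] at hi ⊢
    tauto

theorem grow_congr {u l k : List B} (h : Grow cs s (u ++ l)) (hk : Grow cs s k)
    (he : ∀ x, x ∈ l ↔ x ∈ k) : Grow cs s (u ++ k) := by
  induction u with
  | nil => exact hk
  | cons j u ih =>
    have e : ∀ x, x ∈ s :: (u ++ l) ↔ x ∈ s :: (u ++ k) := by
      intro x
      simp [he x]
    obtain ⟨a, b, i, hi, hc⟩ := h
    exact ⟨ih a, fun hb => b ((e j).mpr hb), i, (e i).mp hi, hc⟩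

theorem sp_congr {l k : List B} (he : ∀ x, x ∈ l ↔ x ∈ k) : sp s l = sp s k := by
  ext x
  simp [sp, he x]

/-- The class of data attached to a vertex. -/
def InC (cs : CoxeterSystem M W) (s : B) (l0 : List B) (v : B) (l : List B) (m : B) : Prop :=
  GD cs s l m ∧ ((l = l0 ∧ m = v) ∨ ∃ u, l = u ++ v :: l0)

theorem link [Finite B] {l1 : List B} {m1 : B} (h1 : GD cs s l1 m1) {l0 : List B}
    (hs0 : Spherical cs (sp s l0)) {v v' : B}
    (hv : Grow cs s (v :: l0)) (hv' : Grow cs s (v' :: l0)) (hne : v ≠ v')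
    (ha : Adjacent cs v v') :
    ∃ l m k n, InC cs s l0 v l m ∧ InC cs s l0 v' k n ∧ CC cs s l m k n := by
  have hg := grow_swap hv hv' hne
  have hg' := grow_swap hv' hv hne.symm
  have hsp : sp s (v' :: v :: l0) = sp s (v :: v' :: l0) := by
    ext x
    simp [sp]
    tauto
  by_cases hs : Spherical cs (sp s (v :: l0))
  · by_cases hs' : Spherical cs (sp s (v' :: l0))
    · by_cases hss : Spherical cs (sp s (v' :: v :: l0))
      · have hc := cycle hv hv' hne hss
        obtain ⟨u, m, hu⟩ := extend h1 (Nat.card B) (v' :: v :: l0) (by omega) hg hss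
        have he : ∀ x, x ∈ v' :: v :: l0 ↔ x ∈ v :: v' :: l0 := by
          intro x; simp only [List.mem_cons]; tauto
        have he' : ∀ x, x ∈ u ++ v' :: v :: l0 ↔ x ∈ u ++ v :: v' :: l0 := by
          intro x; simp only [List.mem_append, he]
        have hu' : GD cs s (u ++ v :: v' :: l0) m := by
          refine ⟨grow_congr (u := m :: u) hu.grow hg' he, ?_, ?_⟩
          · rw [← sp_congr he']; exact hu.sph
          · rw [sp_cons, ← sp_congr he', ← sp_cons]; exact hu.nsph
        refine ⟨_, m, _, m, ⟨hu, Or.inr ⟨u ++ [v'], by simp⟩⟩, ⟨hu', Or.inr ⟨u ++ [v], by simp⟩⟩,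
          CC.n1 hu hu' ?_ (adj_self cs m)⟩
        rw [cs.wordProd_append, cs.wordProd_append, cs.wordProd_cons, cs.wordProd_cons,
          cs.wordProd_cons, cs.wordProd_cons, ← mul_assoc (cs.simple v'), hc.eq, mul_assoc]
      · have g1 : GD cs s (v :: l0) v' := ⟨hg, hs, hss⟩
        have g2 : GD cs s (v' :: l0) v := ⟨hg', hs', hsp ▸ hss⟩
        refine ⟨_, _, _, _, ⟨g1, Or.inr ⟨[], rfl⟩⟩, ⟨g2, Or.inr ⟨[], rfl⟩⟩, CC.m3 g1 g2 ?_⟩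
        have key : ∀ x ∈ sp s (v :: l0) ∪ {v'} ∪ sp s (v' :: l0) ∪ {v},
            x ∈ sp s l0 ∨ x = v ∨ x = v' := by
          intro x hx
          simp [sp] at hx ⊢
          tauto
        have m0 : ∀ w x, x ∈ sp s l0 → x ∈ sp s (w :: l0) :=
          fun w x hx => sp_append s [w] l0 hx
        have m1 : ∀ w, w ∈ sp s (w :: l0) := fun w => by simp [sp]
        intro i hi j hj
        have hi' := key i hi
        have hj' := key j hj
        clear hi hj
        rcases hi' with hi | rfl | rfl <;> rcases hj' with hj | rfl | rfl
        · exact adj_of_spherical hs0 hi hj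
        · exact adj_of_spherical hs (m0 _ _ hi) (m1 _)
        · exact adj_of_spherical hs' (m0 _ _ hi) (m1 _)
        · exact adj_of_spherical hs (m1 _) (m0 _ _ hj)
        · exact adj_self cs _
        · exact ha
        · exact adj_of_spherical hs' (m1 _) (m0 _ _ hj)
        · exact adj_symm ha
        · exact adj_self cs _
    · have g1 : GD cs s (v :: l0) v' :=
        ⟨hg, hs, fun h => hs' (spherical_mono (hsp ▸ sp_append s [v] (v' :: l0)) h)⟩
      have g2 : GD cs s l0 v' := ⟨hv', hs0, hs'⟩
      exact ⟨_, _, _, _, ⟨g1, Or.inr ⟨[], rfl⟩⟩, ⟨g2, Or.inl ⟨rfl, rfl⟩⟩,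
        (CC.m2 g2 g1 (adj_symm ha)).symm⟩
  · have g1 : GD cs s l0 v := ⟨hv, hs0, hs⟩
    by_cases hs' : Spherical cs (sp s (v' :: l0))
    · have g2 : GD cs s (v' :: l0) v :=
        ⟨hg', hs', fun h => hs (spherical_mono (hsp ▸ sp_append s [v'] (v :: l0)) h)⟩
      exact ⟨_, _, _, _, ⟨g1, Or.inl ⟨rfl, rfl⟩⟩, ⟨g2, Or.inr ⟨[], rfl⟩⟩, CC.m2 g1 g2 ha⟩
    · have g2 : GD cs s l0 v' := ⟨hv', hs0, hs'⟩
      exact ⟨_, _, _, _, ⟨g1, Or.inl ⟨rfl, rfl⟩⟩, ⟨g2, Or.inl ⟨rfl, rfl⟩⟩,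
        CC.n1 g1 g2 rfl ha⟩

theorem grow_iff {l0 : List B} (h0 : Grow cs s l0) (v : B) :
    v ∈ Set.univ \ (sp s l0 ∪ perpIn cs Set.univ (sp s l0)) ↔ Grow cs s (v :: l0) := by
  constructor
  · rintro ⟨_, hv⟩
    have hv1 : v ∉ sp s l0 := fun h => hv (Or.inl h)
    refine ⟨h0, hv1, ?_⟩
    by_contra hc
    push Not at hc
    exact hv (Or.inr ⟨⟨trivial, hv1⟩, hc⟩)
  · rintro ⟨_, hv, i, hi, hc⟩
    refine ⟨trivial, ?_⟩
    rintro (h | h)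
    · exact hv h
    · exact hc (h.2 i hi)

theorem main_conn [Finite B] (hTR : TwistRigidIn cs Set.univ) (n : ℕ) :
    ∀ l0 : List B, Nat.card B ≤ n + l0.length → ∀ u m u' m', GD cs s (u ++ l0) m →
      GD cs s (u' ++ l0) m' → CC cs s (u ++ l0) m (u' ++ l0) m' := by
  induction n with
  | zero =>
    intro l0 hn u m u' m' h _
    have := grow_length (h.grow.1.suffix)
    omega
  | succ n ih =>
    intro l0 hn u m u' m' h h'
    have h0 : Grow cs s l0 := h.grow.1.suffix
    have hs0 : Spherical cs (sp s l0) := spherical_mono (sp_append s u l0) h.sph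
    have hconn := hTR (sp s l0) (Set.subset_univ _) (grow_irred h0) hs0
    have hcls : ∀ u m, GD cs s (u ++ l0) m →
        ∃ v, Grow cs s (v :: l0) ∧ InC cs s l0 v (u ++ l0) m := by
      intro u m h
      rcases List.eq_nil_or_concat u with rfl | ⟨u1, v, rfl⟩
      · exact ⟨m, h.grow, h, Or.inl ⟨rfl, rfl⟩⟩
      · refine ⟨v, ?_, h, Or.inr ⟨u1, by simp⟩⟩
        have := h.grow.1
        rw [List.concat_eq_append, List.append_assoc] at this
        exact this.suffix
    have hin : ∀ v l m k n, InC cs s l0 v l m → InC cs s l0 v k n → CC cs s l m k n := by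
      have hcon : ∀ v, GD cs s l0 v → ∀ w o, ¬ GD cs s (w ++ v :: l0) o := by
        intro v g w o g'
        exact g.nsph (spherical_mono (sp_append s w (v :: l0)) g'.sph)
      rintro v l m k n ⟨g, hl⟩ ⟨g', hk⟩
      rcases hl with ⟨rfl, rfl⟩ | ⟨w, rfl⟩ <;> rcases hk with ⟨rfl, rfl⟩ | ⟨w', rfl⟩
      · exact CC.rfl' g
      · exact absurd g' (hcon _ g _ _)
      · exact absurd g (hcon _ g' _ _)
      · exact ih (v :: l0) (by simp only [List.length_cons]; omega) _ _ _ _ g g'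
    obtain ⟨a, ha, hCa⟩ := hcls u m h
    obtain ⟨b, hb, hCb⟩ := hcls u' m' h'
    have hpath := hconn a ((grow_iff h0 a).mpr ha) b ((grow_iff h0 b).mpr hb)
    have key : ∀ k n, InC cs s l0 b k n → CC cs s (u ++ l0) m k n := by
      clear hCb hb
      induction hpath with
      | refl => intro k n hk; exact hin _ _ _ _ _ hCa hk
      | @tail c d _ hcd ihp =>
        intro k n hk
        obtain ⟨hc, hd, hadj⟩ := hcd
        rcases eq_or_ne c d with rfl | hne
        · exact ihp k n hk
        · obtain ⟨l2, m2, l3, m3, i2, i3, hcc⟩ := link h hs0 ((grow_iff h0 c).mp hc)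
            ((grow_iff h0 d).mp hd) hne hadj
          exact ((ihp _ _ i2).trans hcc).trans (hin _ _ _ _ _ i3 hk)
    exact key _ _ hCb

end

theorem main_path [Finite B] {cs : CoxeterSystem M W} (hTR : TwistRigidIn cs Set.univ)
    {μ ν : Marking cs} (hμ : μ.Good) (hν : ν.Good) (hc : μ.core = ν.core) :
    Relation.ReflTransGen LK μ ν := by
  obtain ⟨l, g, e⟩ := exists_data hμ
  obtain ⟨k, g', e'⟩ := exists_data hν
  have e1 : LK μ (mk g) := ⟨hμ, mk_good g, Or.inl ⟨rfl, e, adj_self cs _⟩⟩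
  have e2 : LK (mk g') ν := ⟨mk_good g', hν, Or.inl ⟨rfl, e'.symm, adj_self cs _⟩⟩
  have g2 : GD cs μ.core k ν.marker := hc ▸ g'
  obtain ⟨a, b, c⟩ := main_conn (s := μ.core) hTR (Nat.card B) [] (by simp) l μ.marker k ν.marker
    (by simpa using g) (by simpa using g2)
  have e3 : LK (mk b) ν := ⟨mk_good b, hν, Or.inl ⟨hc, by simp [mk, e'], adj_self cs _⟩⟩
  have e4 : LK μ (mk a) := ⟨hμ, mk_good a, Or.inl ⟨rfl, by simp [mk, e], adj_self cs _⟩⟩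
  exact ((Relation.ReflTransGen.single e4).trans c).tail e3

theorem path_seq {cs : CoxeterSystem M W} {μ ν : Marking cs} (hμ : μ.Good)
    (h : Relation.ReflTransGen LK μ ν) :
    ∃ (n : ℕ) (f : ℕ → Marking cs),
      f 0 = μ ∧ f n = ν ∧ (∀ i ≤ n, (f i).Good) ∧
      ∀ i < n, MoveN1 (f i) (f (i + 1)) ∨ MoveM2 (f i) (f (i + 1)) ∨
        MoveM3 (f i) (f (i + 1)) := by
  induction h with
  | refl => exact ⟨0, fun _ => μ, rfl, rfl, fun _ _ => hμ, fun i hi => absurd hi (by omega)⟩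
  | @tail b c _ hbc ih =>
    obtain ⟨n, f, f0, fn, hg, hm⟩ := ih
    refine ⟨n + 1, fun i => if i ≤ n then f i else c, by simp [f0], by simp, ?_, ?_⟩
    · intro i _
      by_cases hi : i ≤ n
      · simp only [hi, if_true]; exact hg i hi
      · simp only [hi, if_false]; exact hbc.2.1
    · intro i hi
      rcases Nat.lt_or_ge i n with h1 | h1
      · have a1 : i ≤ n := by omega
        have a2 : i + 1 ≤ n := by omega
        simp only [a1, a2, if_true]
        exact hm i h1
      · have a0 : i = n := by omega
        subst a0
        have a2 : ¬ (i + 1 ≤ i) := by omega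
        simp only [le_refl, a2, if_true, if_false, fn]
        exact hbc.2.2

end TwistAux

/-- If `S` is twist-rigid, then any two good markings with common core are
connected by a sequence of good markings in which consecutive markings are related by move
N1, M2 or M3. -/
theorem connecting_good_markings
    [Finite B] (cs' : CoxeterSystem M W)
    (hTR : TwistRigidIn cs' Set.univ)
    (μ μ' : Marking cs') (hμ : μ.Good) (hμ' : μ'.Good) (s : B)
    (hcore : μ.core = s) (hcore' : μ'.core = s) :
    ∃ (n : ℕ) (f : ℕ → Marking cs'),
      f 0 = μ ∧ f n = μ' ∧ (∀ i ≤ n, (f i).Good) ∧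
      ∀ i < n, MoveN1 (f i) (f (i + 1)) ∨ MoveM2 (f i) (f (i + 1)) ∨
        MoveM3 (f i) (f (i + 1)) := by
  exact TwistAux.path_seq hμ (TwistAux.main_path hTR hμ hμ' (hcore.trans hcore'.symm))
end

section
/- Let (W,S) be a Coxeter system with S finite and twist-rigid, and let μ be a complete marking whose support J is non-spherical. Then there exists a finite sequence of markings μ = μ₀, μ₁, …, μₙ = μ' with common core such that μ₀,…,μₙ₋₁ are complete markings, each two consecutive markings are related by move M1, M2 or M4, move M4 occurring at most once and only as the last step, and μ' is a semi-complete marking whose support J' contains J. -/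
variable {B : Type*} {W : Type*} [Group W] {M : CoxeterMatrix B}

variable {cs : CoxeterSystem M W}

set_option linter.unusedSectionVars false
set_option linter.unusedSimpArgs false
set_option linter.unusedVariables false

/-! ## Geometric representation -/

section Geom

variable [Fintype B]

namespace Cox

/-- entries of the Gram matrix -/
noncomputable def kk (M : CoxeterMatrix B) (i j : B) : ℝ := -Real.cos (Real.pi / (M i j : ℝ))

theorem kk_self (M : CoxeterMatrix B) (i : B) : kk M i i = 1 := by
  simp [kk]

theorem kk_symm (M : CoxeterMatrix B) (i j : B) : kk M i j = kk M j i := by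
  simp [kk, M.symmetric i j]

theorem kk_zero {M : CoxeterMatrix B} {i j : B} (h : M i j = 0) : kk M i j = -1 := by
  simp [kk, h]

theorem M_ge_two {M : CoxeterMatrix B} {i j : B} (h : i ≠ j) (h0 : M i j ≠ 0) : 2 ≤ M i j := by
  have := M.off_diagonal i j h
  omega

theorem kk_nonpos {M : CoxeterMatrix B} {i j : B} (h : i ≠ j) : kk M i j ≤ 0 := by
  by_cases h0 : M i j = 0
  · rw [kk_zero h0]; norm_num
  · have h2 : (2 : ℝ) ≤ (M i j : ℝ) := by exact_mod_cast M_ge_two h h0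
    have : 0 ≤ Real.cos (Real.pi / (M i j : ℝ)) := by
      apply Real.cos_nonneg_of_neg_pi_div_two_le_of_le
      · have := Real.pi_pos
        have : 0 ≤ Real.pi / (M i j : ℝ) := by positivity
        linarith
      · exact div_le_div_of_nonneg_left Real.pi_pos.le (by norm_num) h2
    simp [kk, this]

theorem kk_eq_zero {M : CoxeterMatrix B} {i j : B} (h : i ≠ j) (hk : kk M i j = 0) : M i j = 2 := by
  by_contra hne
  have hk' : Real.cos (Real.pi / (M i j : ℝ)) = 0 := by simpa [kk] using hk
  by_cases h0 : M i j = 0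
  · rw [kk_zero h0] at hk; norm_num at hk
  · have h3 : 2 < M i j := lt_of_le_of_ne (M_ge_two h h0) (Ne.symm hne)
    have h3' : (2 : ℝ) < (M i j : ℝ) := by exact_mod_cast h3
    have : 0 < Real.cos (Real.pi / (M i j : ℝ)) := by
      apply Real.cos_pos_of_mem_Ioo
      constructor
      · have := Real.pi_pos
        have : 0 ≤ Real.pi / (M i j : ℝ) := by positivity
        linarith
      · exact div_lt_div_of_pos_left Real.pi_pos (by norm_num) h3'
    linarith

/-- the bilinear form -/
noncomputable def bil (M : CoxeterMatrix B) : (B → ℝ) →ₗ[ℝ] (B → ℝ) →ₗ[ℝ] ℝ :=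
  LinearMap.mk₂ ℝ (fun x y => ∑ i, ∑ j, x i * y j * kk M i j)
    (by intro x x' y; simp [add_mul, Finset.sum_add_distrib])
    (by intro c x y; simp [Finset.mul_sum, mul_assoc])
    (by intro x y y'; simp [add_mul, mul_add, Finset.sum_add_distrib])
    (by intro c x y; simp [Finset.mul_sum, mul_assoc, mul_left_comm])

theorem bil_def (M : CoxeterMatrix B) (x y : B → ℝ) :
    bil M x y = ∑ i, ∑ j, x i * y j * kk M i j := rfl

theorem bil_symm (M : CoxeterMatrix B) (x y : B → ℝ) : bil M x y = bil M y x := by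
  rw [bil_def, bil_def, Finset.sum_comm]
  refine Finset.sum_congr rfl fun i _ => Finset.sum_congr rfl fun j _ => ?_
  rw [kk_symm M i j]; ring

open Classical in
/-- simple roots -/
noncomputable def al (i : B) : B → ℝ := fun j => if j = i then 1 else 0

theorem al_self (i : B) : al i i = 1 := by simp [al]
theorem al_ne {i j : B} (h : j ≠ i) : al i j = 0 := by simp [al, h]

theorem sum_al (x : B → ℝ) : x = ∑ i, x i • al i := by
  classical
  ext j
  simp [al, Finset.sum_apply]

theorem bil_al_right (M : CoxeterMatrix B) (x : B → ℝ) (j : B) :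
    bil M x (al j) = ∑ i, x i * kk M i j := by
  classical
  rw [bil_def]
  refine Finset.sum_congr rfl fun i _ => ?_
  simp [al]

theorem bil_al_al (M : CoxeterMatrix B) (i j : B) : bil M (al i) (al j) = kk M i j := by
  classical
  rw [bil_al_right]
  simp [al]

/-- reflection in a vector -/
noncomputable def rf (M : CoxeterMatrix B) (v : B → ℝ) : (B → ℝ) →ₗ[ℝ] (B → ℝ) :=
  LinearMap.id - (2 : ℝ) • (bil M v).smulRight v

theorem rf_apply (M : CoxeterMatrix B) (v x : B → ℝ) :
    rf M v x = x - (2 * bil M v x) • v := by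
  simp [rf, smul_smul]

theorem rf_rf (M : CoxeterMatrix B) {v : B → ℝ} (hv : bil M v v = 1) (x : B → ℝ) :
    rf M v (rf M v x) = x := by
  simp only [rf_apply, map_sub, map_smul, smul_eq_mul, hv]
  module

theorem rf_bil (M : CoxeterMatrix B) {v : B → ℝ} (hv : bil M v v = 1) (x y : B → ℝ) :
    bil M (rf M v x) (rf M v y) = bil M x y := by
  simp only [rf_apply, map_sub, map_smul, smul_eq_mul, LinearMap.sub_apply, LinearMap.smul_apply, hv]
  rw [bil_symm M x v]
  ring

theorem rf_al_apply_ne (M : CoxeterMatrix B) (i : B) (x : B → ℝ) {j : B} (h : j ≠ i) :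
    rf M (al i) x j = x j := by
  simp [rf_apply, al_ne h]

theorem bil_al_self (M : CoxeterMatrix B) (i : B) : bil M (al i) (al i) = 1 := by
  rw [bil_al_al, kk_self]

/-- braid relations -/
theorem liftable (M : CoxeterMatrix B) : M.IsLiftable (fun i => (rf M (al i) : Module.End ℝ (B → ℝ))) := by
  intro i j
  by_cases h0 : M i j = 0
  · simp [h0]
  by_cases hij : i = j
  · subst hij
    rw [M.diagonal, pow_one]
    ext1
    ext1
    simp [rf_rf M (bil_al_self M i)]
  have h2 : 2 ≤ M i j := M_ge_two hij h0
  set m := M i j with hm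
  set θ : ℝ := Real.pi / m with hθ
  have hmpos : (0 : ℝ) < m := by exact_mod_cast (by omega : 0 < m)
  have hθ0 : 0 < θ := div_pos Real.pi_pos hmpos
  have hθ1 : θ < Real.pi := by
    rw [hθ, div_lt_iff₀ hmpos]
    have : (2 : ℝ) ≤ m := by exact_mod_cast h2
    nlinarith [Real.pi_pos]
  have hs : 0 < Real.sin θ := Real.sin_pos_of_pos_of_lt_pi hθ0 hθ1
  have hk : bil M (al i) (al j) = -Real.cos θ := by rw [bil_al_al, kk, hθ, hm]
  have hk' : bil M (al j) (al i) = -Real.cos θ := by rw [bil_symm, hk]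
  have hii := bil_al_self M i
  have hjj := bil_al_self M j
  set T : Module.End ℝ (B → ℝ) := rf M (al i) * rf M (al j) with hT
  have Ti : ∀ n : ℕ, Real.sin θ • (T ^ n) (al i) =
      Real.sin ((2 * n + 1) * θ) • al i + Real.sin (2 * n * θ) • al j := by
    intro n
    induction n with
    | zero => simp
    | succ n ih =>
      rw [pow_succ', Module.End.mul_apply, ← map_smul, ih, hT, Module.End.mul_apply]
      simp only [rf_apply, map_add, map_sub, map_smul, smul_eq_mul, hii, hjj, hk, hk']
      have e1 : Real.sin (2 * (n + 1 : ℕ) * θ) = 2 * Real.cos θ * Real.sin ((2 * n + 1) * θ)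
          - Real.sin (2 * n * θ) := by
        have := Real.sin_add ((2 * n + 1) * θ) θ
        have h2 := Real.sin_sub ((2 * n + 1) * θ) θ
        rw [show (2 * n + 1) * θ - θ = 2 * n * θ by ring] at h2
        rw [show 2 * ((n + 1 : ℕ) : ℝ) * θ = (2 * n + 1) * θ + θ by push_cast; ring, this, h2]
        ring
      have e2 : Real.sin ((2 * (n + 1 : ℕ) + 1) * θ) = 2 * Real.cos θ * Real.sin (2 * (n + 1 : ℕ) * θ)
          - Real.sin ((2 * n + 1) * θ) := by
        have := Real.sin_add (2 * (n + 1 : ℕ) * θ) θ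
        have h2 := Real.sin_sub (2 * (n + 1 : ℕ) * θ) θ
        rw [show (2 * (n + 1 : ℕ)) * θ - θ = (2 * n + 1) * θ by push_cast; ring] at h2
        rw [show (2 * ((n + 1 : ℕ) : ℝ) + 1) * θ = 2 * (n + 1 : ℕ) * θ + θ by push_cast; ring, this, h2]
        ring
      rw [e2, e1]
      module
  have Tj : ∀ n : ℕ, Real.sin θ • (T ^ n) (al j) =
      (-Real.sin (2 * n * θ)) • al i - Real.sin ((2 * n - 1) * θ) • al j := by
    intro n
    induction n with
    | zero => simp
    | succ n ih =>
      rw [pow_succ', Module.End.mul_apply, ← map_smul, ih, hT, Module.End.mul_apply]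
      simp only [rf_apply, map_add, map_sub, map_smul, smul_eq_mul, hii, hjj, hk, hk']
      have e1 : Real.sin ((2 * (n + 1 : ℕ) - 1) * θ) = 2 * Real.cos θ * Real.sin (2 * n * θ)
          - Real.sin ((2 * n - 1) * θ) := by
        have := Real.sin_add (2 * n * θ) θ
        have h2 := Real.sin_sub (2 * n * θ) θ
        rw [show (2 * n) * θ - θ = (2 * n - 1) * θ by ring] at h2
        rw [show (2 * ((n + 1 : ℕ) : ℝ) - 1) * θ = (2 * n) * θ + θ by push_cast; ring, this, h2]
        ring
      have e2 : Real.sin (2 * (n + 1 : ℕ) * θ) = 2 * Real.cos θ * Real.sin ((2 * (n + 1 : ℕ) - 1) * θ)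
          - Real.sin (2 * n * θ) := by
        have := Real.sin_add ((2 * (n + 1 : ℕ) - 1) * θ) θ
        have h2 := Real.sin_sub ((2 * (n + 1 : ℕ) - 1) * θ) θ
        rw [show (2 * (n + 1 : ℕ) - 1) * θ - θ = (2 * n) * θ by push_cast; ring] at h2
        rw [show 2 * ((n + 1 : ℕ) : ℝ) * θ = (2 * (n + 1 : ℕ) - 1) * θ + θ by ring, this, h2]
        ring
      rw [e2, e1]
      module
  have hmθ : (m : ℝ) * θ = Real.pi := by rw [hθ]; field_simp
  have Tim : (T ^ m) (al i) = al i := by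
    have := Ti m
    rw [show (2 * (m : ℝ) + 1) * θ = θ + 2 * Real.pi by rw [← hmθ]; ring,
      show 2 * (m : ℝ) * θ = 0 + 2 * Real.pi by rw [← hmθ]; ring, Real.sin_add_two_pi,
      Real.sin_add_two_pi, Real.sin_zero, zero_smul, add_zero] at this
    exact smul_right_injective _ hs.ne' this
  have Tjm : (T ^ m) (al j) = al j := by
    have := Tj m
    rw [show (2 * (m : ℝ) - 1) * θ = -θ + 2 * Real.pi by rw [← hmθ]; ring,
      show 2 * (m : ℝ) * θ = 0 + 2 * Real.pi by rw [← hmθ]; ring, Real.sin_add_two_pi,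
      Real.sin_add_two_pi, Real.sin_zero, neg_zero, zero_smul, Real.sin_neg, zero_sub, neg_smul,
      neg_neg] at this
    exact smul_right_injective _ hs.ne' this
  -- decomposition
  apply LinearMap.ext
  intro z
  have hs2 : Real.sin θ ^ 2 = 1 - Real.cos θ ^ 2 := Real.sin_sq θ
  set a := bil M (al i) z with ha
  set b := bil M (al j) z with hb
  set p : ℝ := (a + Real.cos θ * b) / Real.sin θ ^ 2 with hp
  set q : ℝ := (b + Real.cos θ * a) / Real.sin θ ^ 2 with hq
  have hs2' : Real.sin θ ^ 2 ≠ 0 := by positivity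
  have h1 : p - Real.cos θ * q = a := by
    rw [hp, hq]; field_simp; rw [hs2]; ring
  have h2' : q - Real.cos θ * p = b := by
    rw [hp, hq]; field_simp; rw [hs2]; ring
  set z0 := z - p • al i - q • al j with hz0
  have hz0i : bil M (al i) z0 = 0 := by
    rw [hz0]; simp only [map_sub, map_smul, smul_eq_mul, hii, hk, ← ha]; linarith
  have hz0j : bil M (al j) z0 = 0 := by
    rw [hz0]; simp only [map_sub, map_smul, smul_eq_mul, hjj, hk', ← hb]; linarith
  have Tz : T z0 = z0 := by
    rw [hT, Module.End.mul_apply]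
    simp [rf_apply, hz0i, hz0j]
  have Tz' : ∀ n : ℕ, (T ^ n) z0 = z0 := by
    intro n
    induction n with
    | zero => simp
    | succ n ih => rw [pow_succ', Module.End.mul_apply, ih, Tz]
  have hz : z = z0 + p • al i + q • al j := by rw [hz0]; abel
  rw [hz, map_add, map_add, map_smul, map_smul, Tim, Tjm, Tz']
  simp

/-- The geometric representation. -/
noncomputable def rp (cs : CoxeterSystem M W) : W →* Module.End ℝ (B → ℝ) :=
  cs.lift ⟨_, liftable M⟩

theorem rp_simple (cs : CoxeterSystem M W) (i : B) : rp cs (cs.simple i) = rf M (al i) :=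
  cs.lift_apply_simple (liftable M) i

theorem rp_bil (cs : CoxeterSystem M W) (w : W) (x y : B → ℝ) :
    bil M (rp cs w x) (rp cs w y) = bil M x y := by
  induction w using cs.simple_induction_left with
  | one => simp
  | mul_simple_left w i ih =>
    rw [map_mul, Module.End.mul_apply, Module.End.mul_apply, rp_simple, rf_bil M (bil_al_self M i), ih]

theorem rp_inv_apply (cs : CoxeterSystem M W) (w : W) (x : B → ℝ) :
    rp cs w⁻¹ (rp cs w x) = x := by
  rw [← Module.End.mul_apply, ← map_mul]; simp

theorem rp_apply_inv (cs : CoxeterSystem M W) (w : W) (x : B → ℝ) :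
    rp cs w (rp cs w⁻¹ x) = x := by
  rw [← Module.End.mul_apply, ← map_mul]; simp

theorem rp_mul (cs : CoxeterSystem M W) (w w' : W) (x : B → ℝ) :
    rp cs (w * w') x = rp cs w (rp cs w' x) := by
  rw [map_mul, Module.End.mul_apply]

theorem rp_inj (cs : CoxeterSystem M W) (w : W) {x y : B → ℝ} (h : rp cs w x = rp cs w y) : x = y := by
  rw [← rp_inv_apply cs w x, h, rp_inv_apply]

theorem rp_al_self (cs : CoxeterSystem M W) (i : B) : rp cs (cs.simple i) (al i) = - al i := by
  rw [rp_simple, rf_apply, bil_al_self]; module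

/-- adjoint form -/
theorem rp_bil_left (cs : CoxeterSystem M W) (w : W) (x y : B → ℝ) :
    bil M (rp cs w x) y = bil M x (rp cs w⁻¹ y) := by
  rw [← rp_bil cs w x, rp_apply_inv]

/-- reflections act as reflections -/
theorem rp_refl (cs : CoxeterSystem M W) (x : W) (i : B) (v : B → ℝ) :
    rp cs (x * cs.simple i * x⁻¹) v =
      v - (2 * bil M (rp cs x (al i)) v) • rp cs x (al i) := by
  rw [rp_mul, rp_mul, rp_simple, rf_apply, map_sub, map_smul, rp_apply_inv, rp_bil_left]

/-- positive vectors with coefficients `0` or at least `1`. -/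
def Pos (v : B → ℝ) : Prop := ∀ i, v i = 0 ∨ 1 ≤ v i

theorem Pos.nonneg {v : B → ℝ} (h : Pos v) (i : B) : 0 ≤ v i := by
  rcases h i with h | h <;> linarith

/-- roots -/
def IsRt (cs : CoxeterSystem M W) (v : B → ℝ) : Prop := ∃ w i, v = rp cs w (al i)

/-- coefficient sequence for dihedral groups -/
theorem alt_coeff (cs : CoxeterSystem M W) : ∀ (n : ℕ) (s t : B), s ≠ t → (M s t = 0 ∨ n < M s t) →
    ∃ a b : ℝ, (a = 0 ∨ 1 ≤ a) ∧ (b = 0 ∨ 1 ≤ b) ∧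
      rp cs (cs.wordProd (CoxeterSystem.alternatingWord s t n)) (al s) = a • al s + b • al t := by
  -- the sequence
  have key : ∀ (c : ℝ) (U : ℕ → ℝ), (∀ n, U (n+2) = 2 * c * U (n+1) - U n) → U 0 = 0 → U 1 = 1 →
      ∀ (n : ℕ) (s t : B), bil M (al s) (al t) = -c →
      (rp cs (cs.wordProd (CoxeterSystem.alternatingWord s t n)) (al s) = U (n+1) • al s + U n • al t ∨
       rp cs (cs.wordProd (CoxeterSystem.alternatingWord s t n)) (al s) = U n • al s + U (n+1) • al t)
       ∧ (Even n → rp cs (cs.wordProd (CoxeterSystem.alternatingWord s t n)) (al s) = U (n+1) • al s + U n • al t)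
       ∧ (¬ Even n → rp cs (cs.wordProd (CoxeterSystem.alternatingWord s t n)) (al s) = U n • al s + U (n+1) • al t) := by
    intro c U hU h0 h1 n
    suffices H : ∀ (s t : B), bil M (al s) (al t) = -c → 
       (Even n → rp cs (cs.wordProd (CoxeterSystem.alternatingWord s t n)) (al s) = U (n+1) • al s + U n • al t)
       ∧ (¬ Even n → rp cs (cs.wordProd (CoxeterSystem.alternatingWord s t n)) (al s) = U n • al s + U (n+1) • al t) by
      intro s t hst
      refine ⟨?_, H s t hst⟩
      by_cases he : Even n
      · exact Or.inl ((H s t hst).1 he)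
      · exact Or.inr ((H s t hst).2 he)
    induction n using Nat.strong_induction_on with
    | _ n ih =>
      intro s t hst
      have hts : bil M (al t) (al s) = -c := by rw [bil_symm, hst]
      match n, ih with
      | 0, _ => simp [CoxeterSystem.alternatingWord, h0, h1]
      | 1, _ =>
        have h2 := hU 0
        rw [h0, h1] at h2
        simp [CoxeterSystem.alternatingWord, h1, h2, rp_simple, rf_apply, hts]
      | n+2, ih =>
        have step : rp cs (cs.wordProd (CoxeterSystem.alternatingWord s t (n+2))) (al s) =
            (2 * c) • rp cs (cs.wordProd (CoxeterSystem.alternatingWord t s (n+1))) (al t)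
            - rp cs (cs.wordProd (CoxeterSystem.alternatingWord s t n)) (al s) := by
          rw [CoxeterSystem.alternatingWord_succ, cs.wordProd_concat, rp_mul, rp_simple, rf_apply, hts,
            map_sub, map_smul]
          have : rp cs (cs.wordProd (CoxeterSystem.alternatingWord t s (n+1))) (al s) = 
            - rp cs (cs.wordProd (CoxeterSystem.alternatingWord s t n)) (al s) := by
            rw [CoxeterSystem.alternatingWord_succ, cs.wordProd_concat, rp_mul, rp_al_self, map_neg]
          rw [this]
          module
        rw [step]
        have A := ih (n+1) (by omega) t s hts
        have B' := ih n (by omega) s t hst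
        constructor
        · intro he
          have he' : Even n := by simpa [Nat.even_add] using he
          have ho : ¬ Even (n+1) := by simpa [Nat.even_add_one] using he'
          rw [A.2 ho, B'.1 he', hU (n+1), hU n]
          module
        · intro he
          have he' : ¬ Even n := by simpa [Nat.even_add] using he
          have ho : Even (n+1) := by simpa [Nat.even_add_one] using he'
          rw [A.1 ho, B'.2 he', hU (n+1), hU n]
          module
  intro n s t hst hn
  -- good sequence
  suffices ∃ U : ℕ → ℝ, (∀ n, U (n+2) = 2 * (-kk M s t) * U (n+1) - U n) ∧ U 0 = 0 ∧ U 1 = 1 ∧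
      (U n = 0 ∨ 1 ≤ U n) ∧ (U (n+1) = 0 ∨ 1 ≤ U (n+1)) by
    obtain ⟨U, hU, h0, h1, g1, g2⟩ := this
    rcases (key (-kk M s t) U hU h0 h1 n s t (by rw [bil_al_al]; ring)).1 with h | h
    · exact ⟨_, _, g2, g1, h⟩
    · exact ⟨_, _, g1, g2, h⟩
  by_cases hm : M s t = 0
  · refine ⟨fun n => n, ?_, by simp, by simp, ?_, ?_⟩
    · intro n; rw [kk_zero hm]; push_cast; ring
    · rcases Nat.eq_zero_or_pos n with h | h
      · left; simp [h]
      · right; show (1:ℝ) ≤ (n:ℝ); exact_mod_cast h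
    · right; push_cast; linarith [(Nat.cast_nonneg n : (0:ℝ) ≤ n)]
  · have hn' : n < M s t := by tauto
    have h2 : 2 ≤ M s t := M_ge_two hst hm
    set m := M s t with hmdef
    set θ : ℝ := Real.pi / m with hθ
    have hmpos : (0 : ℝ) < m := by exact_mod_cast (by omega : 0 < m)
    have hθ0 : 0 < θ := div_pos Real.pi_pos hmpos
    have hθ2 : θ ≤ Real.pi / 2 := by
      rw [hθ]
      exact div_le_div_of_nonneg_left Real.pi_pos.le (by norm_num) (by exact_mod_cast h2)
    have hs : 0 < Real.sin θ := Real.sin_pos_of_pos_of_lt_pi hθ0 (by linarith [Real.pi_pos])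
    have hmθ : (m : ℝ) * θ = Real.pi := by rw [hθ]; field_simp
    have good : ∀ k : ℕ, k ≤ m → Real.sin (k * θ) / Real.sin θ = 0 ∨ 1 ≤ Real.sin (k * θ) / Real.sin θ := by
      intro k hk
      rcases Nat.eq_zero_or_pos k with h | h
      · left; simp [h]
      rcases Nat.lt_or_ge k m with h' | h'
      · right
        rw [le_div_iff₀ hs, one_mul]
        have hk1 : (1 : ℝ) ≤ k := by exact_mod_cast h
        have hk2 : (k : ℝ) + 1 ≤ m := by exact_mod_cast h'
        have b1 : θ ≤ k * θ := by nlinarith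
        have b2 : k * θ ≤ Real.pi - θ := by nlinarith
        by_cases hh : k * θ ≤ Real.pi / 2
        · exact Real.sin_le_sin_of_le_of_le_pi_div_two (by linarith) hh b1
        · rw [← Real.sin_pi_sub (k * θ)]
          exact Real.sin_le_sin_of_le_of_le_pi_div_two (by linarith) (by linarith) (by linarith)
      · left
        have : k = m := le_antisymm hk h'
        rw [this, hmθ]; simp
    refine ⟨fun k => Real.sin (k * θ) / Real.sin θ, ?_, by simp, by simp [hs.ne'], good n hn'.le, ?_⟩
    · intro k
      have := Real.sin_add ((k + 1) * θ) θ
      have h2 := Real.sin_sub ((k + 1) * θ) θ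
      rw [show (k + 1) * θ - θ = k * θ by ring] at h2
      simp only [kk, ← hmdef, ← hθ]
      rw [show ((k + 2 : ℕ) : ℝ) * θ = (k + 1) * θ + θ by push_cast; ring, this, h2]
      push_cast
      field_simp
      ring
    · exact good (n+1) hn'

end Cox
end Geom

/-! ## Positivity of roots, exchange condition -/

section Roots

variable [Fintype B]

namespace Cox

theorem pos_al (i : B) : Pos (al i) := by
  intro j
  by_cases h : j = i
  · right; rw [h, al_self]
  · left; exact al_ne h

theorem pos_comb {x y : B → ℝ} (hx : Pos x) (hy : Pos y) {a b : ℝ} (ha : a = 0 ∨ 1 ≤ a)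
    (hb : b = 0 ∨ 1 ≤ b) : Pos (a • x + b • y) := by
  intro i
  simp only [Pi.add_apply, Pi.smul_apply, smul_eq_mul]
  rcases ha with rfl | ha <;> rcases hb with rfl | hb <;> rcases hx i with h1 | h1 <;>
    rcases hy i with h2 | h2
  all_goals first
    | (left; simp [h1, h2]; done)
    | (right; nlinarith)

theorem pos_of_length (cs : CoxeterSystem M W) : ∀ (N : ℕ) (w : W) (i : B), cs.length w = N →
    cs.length w < cs.length (w * cs.simple i) → Pos (rp cs w (al i)) := by
  intro N
  induction N using Nat.strong_induction_on with
  | _ N ih =>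
  intro w i hN hw
  by_cases hw1 : w = 1
  · subst hw1; simpa using pos_al i
  obtain ⟨t, ht⟩ := cs.exists_rightDescent_of_ne_one hw1
  have ht' : cs.length (w * cs.simple t) < cs.length w := ht
  have hti : t ≠ i := by rintro rfl; omega
  let P : ℕ → Prop := fun n => ∃ v, w = v * cs.wordProd (CoxeterSystem.alternatingWord i t n) ∧
    cs.length w = cs.length v + n
  have P0 : P 0 := ⟨w, by simp [CoxeterSystem.alternatingWord], by simp⟩
  have P1 : P 1 := by
    refine ⟨w * cs.simple t, by simp [CoxeterSystem.alternatingWord], ?_⟩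
    rcases cs.length_mul_simple w t with h | h <;> omega
  have Pb : ∀ n, P n → n ≤ cs.length w := by
    rintro n ⟨v, _, h⟩; omega
  have Pdec : ∀ n, P (n+1) → P n := by
    rintro n ⟨v, h1, h2⟩
    rw [CoxeterSystem.alternatingWord_succ', cs.wordProd_cons, ← mul_assoc] at h1
    refine ⟨_, h1, ?_⟩
    have a := cs.length_mul_le (v * cs.simple (if Even n then t else i))
      (cs.wordProd (CoxeterSystem.alternatingWord i t n))
    rw [← h1] at a
    have b := cs.length_wordProd_le (CoxeterSystem.alternatingWord i t n)
    rw [CoxeterSystem.length_alternatingWord] at b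
    rcases cs.length_mul_simple v (if Even n then t else i) with h | h <;> omega
  have Pdec' : ∀ k n, P (n+k) → P n := by
    intro k
    induction k with
    | zero => intro n h; exact h
    | succ k ihk => intro n h; exact ihk n (Pdec _ h)
  classical
  obtain ⟨n, hn1, hPn, hPn'⟩ : ∃ n, 1 ≤ n ∧ P n ∧ ¬ P (n+1) := by
    by_contra hcon
    push Not at hcon
    have : ∀ n, P (n+1) := by
      intro n
      induction n with
      | zero => exact P1
      | succ n ihn => exact hcon (n+1) (by omega) ihn
    have := Pb _ (this (cs.length w))
    omega
  obtain ⟨v, hv1, hv2⟩ := hPn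
  have hy : cs.length v < cs.length (v * cs.simple (if Even n then t else i)) := by
    by_contra hlt
    apply hPn'
    refine ⟨v * cs.simple (if Even n then t else i), ?_, ?_⟩
    · rw [CoxeterSystem.alternatingWord_succ', cs.wordProd_cons, ← mul_assoc]
      simpa using hv1
    · rcases cs.length_mul_simple v (if Even n then t else i) with h | h <;> omega
  have hx : cs.length v < cs.length (v * cs.simple (if Even n then i else t)) := by
    by_contra hlt
    obtain ⟨k, rfl⟩ : ∃ k, n = k + 1 := ⟨n-1, by omega⟩
    have e : (if Even (k+1) then i else t) = (if Even k then t else i) := by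
      by_cases hk : Even k <;> simp [hk, Nat.even_add_one]
    rw [e] at hlt
    rw [CoxeterSystem.alternatingWord_succ', cs.wordProd_cons, ← mul_assoc] at hv1
    have a := cs.length_mul_le (v * cs.simple (if Even k then t else i))
      (cs.wordProd (CoxeterSystem.alternatingWord i t k))
    rw [← hv1] at a
    have b := cs.length_wordProd_le (CoxeterSystem.alternatingWord i t k)
    rw [CoxeterSystem.length_alternatingWord] at b
    rcases cs.length_mul_simple v (if Even k then t else i) with h | h <;> omega
  have hvi : Pos (rp cs v (al i)) := by
    apply ih (cs.length v) (by omega) v i rfl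
    by_cases he : Even n
    · simpa [he] using hx
    · simpa [he] using hy
  have hvt : Pos (rp cs v (al t)) := by
    apply ih (cs.length v) (by omega) v t rfl
    by_cases he : Even n
    · simpa [he] using hy
    · simpa [he] using hx
  have hM : M i t = 0 ∨ n < M i t := by
    by_contra hcon
    push Not at hcon
    obtain ⟨hM0, hMn⟩ := hcon
    obtain ⟨v', h1, h2⟩ : P (M i t) := Pdec' (n - M i t) _ (by
      rw [Nat.add_sub_cancel' hMn]; exact ⟨v, hv1, hv2⟩)
    have e : w * cs.simple i = v' * cs.wordProd (CoxeterSystem.alternatingWord i t (M i t - 1)) := by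
      have hs : M t i = M i t := M.symmetric t i
      conv_lhs => rw [h1]
      rw [mul_assoc, ← cs.wordProd_concat, ← CoxeterSystem.alternatingWord_succ,
        cs.prod_alternatingWord_eq_prod_alternatingWord_sub t i (M i t + 1) (by rw [hs]; omega), hs]
      congr 3
      omega
    have a := cs.length_mul_le v' (cs.wordProd (CoxeterSystem.alternatingWord i t (M i t - 1)))
    rw [← e] at a
    have b := cs.length_wordProd_le (CoxeterSystem.alternatingWord i t (M i t - 1))
    rw [CoxeterSystem.length_alternatingWord] at b
    omega
  obtain ⟨a, b, ha, hb, hab⟩ := alt_coeff cs n i t hti.symm hM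
  rw [hv1, rp_mul, hab, map_add, map_smul, map_smul]
  exact pos_comb hvi hvt ha hb

theorem rp_simple_neg (cs : CoxeterSystem M W) (w : W) (i : B) :
    rp cs (w * cs.simple i) (al i) = - rp cs w (al i) := by
  rw [rp_mul, rp_al_self, map_neg]

theorem IsRt.pos_or {v : B → ℝ} (h : IsRt cs v) : Pos v ∨ Pos (-v) := by
  obtain ⟨w, i, rfl⟩ := h
  rcases cs.length_mul_simple w i with h | h
  · left; exact pos_of_length cs _ w i rfl (by omega)
  · right
    rw [← rp_simple_neg]
    exact pos_of_length cs _ _ i rfl (by rw [mul_assoc, cs.simple_mul_simple_self, mul_one]; omega)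

theorem IsRt.bil_self {v : B → ℝ} (h : IsRt cs v) : bil M v v = 1 := by
  obtain ⟨w, i, rfl⟩ := h
  rw [rp_bil, bil_al_self]

theorem IsRt.ne_zero {v : B → ℝ} (h : IsRt cs v) : v ≠ 0 := by
  rintro rfl
  have := h.bil_self
  simp at this

theorem IsRt.rp {v : B → ℝ} (h : IsRt cs v) (w : W) : IsRt cs (rp cs w v) := by
  obtain ⟨x, i, rfl⟩ := h
  exact ⟨w * x, i, by rw [rp_mul]⟩

theorem IsRt.al (cs : CoxeterSystem M W) (i : B) : IsRt cs (al i) := ⟨1, i, by simp⟩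

theorem IsRt.neg {v : B → ℝ} (h : IsRt cs v) : IsRt cs (-v) := by
  obtain ⟨x, i, rfl⟩ := h
  exact ⟨x * cs.simple i, i, by rw [rp_simple_neg]⟩

theorem IsRt.pos_of_coeff {v : B → ℝ} (h : IsRt cs v) {i : B} (hi : 0 < v i) : Pos v := by
  rcases h.pos_or with h | h
  · exact h
  · have := h.nonneg i
    simp at this
    linarith

theorem IsRt.not_pos_neg {v : B → ℝ} (h : IsRt cs v) (h1 : Pos v) (h2 : Pos (-v)) : False := by
  apply h.ne_zero
  ext i
  have a := h1.nonneg i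
  have b := h2.nonneg i
  simp at b
  simp; linarith

theorem IsRt.exists_one_le {v : B → ℝ} (h : IsRt cs v) (h1 : Pos v) : ∃ i, 1 ≤ v i := by
  by_contra hcon
  push Not at hcon
  apply h.ne_zero
  ext i
  rcases h1 i with h | h
  · exact h
  · exact absurd h (not_le.mpr (hcon i))

/-- a positive root supported on `{i}` is simple -/
theorem IsRt.eq_al {v : B → ℝ} (h : IsRt cs v) (h1 : Pos v) {i : B} (h2 : ∀ j, j ≠ i → v j = 0) :
    v = Cox.al i := by
  have e : v = v i • Cox.al i := by
    ext j
    by_cases hj : j = i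
    · subst hj; simp [al_self]
    · simp [al_ne hj, h2 j hj]
  have hb := h.bil_self
  rw [e, map_smul, map_smul, LinearMap.smul_apply, bil_al_self] at hb
  simp only [smul_eq_mul, mul_one] at hb
  have := h1.nonneg i
  have h3 : v i = 1 := by nlinarith
  rw [e, h3, one_smul]

theorem IsRt.eq_al_of_flip {v : B → ℝ} (h : IsRt cs v) (h1 : Pos v) {i : B}
    (h2 : Pos (-(Cox.rp cs (cs.simple i) v))) : v = Cox.al i := by
  apply h.eq_al h1
  intro j hj
  have a := h1.nonneg j
  have b := h2.nonneg j
  rw [rp_simple] at b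
  simp only [Pi.neg_apply, rf_al_apply_ne M i v hj] at b
  linarith

theorem IsRt.exists_ne {v : B → ℝ} (h : IsRt cs v) (h1 : Pos v) {i : B} (h2 : v ≠ Cox.al i) :
    ∃ j, j ≠ i ∧ 1 ≤ v j := by
  by_contra hcon
  push Not at hcon
  apply h2
  apply h.eq_al h1
  intro j hj
  rcases h1 j with h | h
  · exact h
  · exact absurd h (not_le.mpr (hcon j hj))

/-- `β` is a root of the reflection `r`. -/
def HasRefl (cs : CoxeterSystem M W) (r : W) (β : B → ℝ) : Prop :=
  ∃ x i, r = x * cs.simple i * x⁻¹ ∧ β = rp cs x (al i)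

theorem rp_faithful (cs : CoxeterSystem M W) {w : W} (h : rp cs w = 1) : w = 1 := by
  by_contra hw
  obtain ⟨t, ht⟩ := cs.exists_rightDescent_of_ne_one hw
  have ht' : cs.length (w * cs.simple t) < cs.length w := ht
  have := pos_of_length cs _ (w * cs.simple t) t rfl (by
    rw [mul_assoc, cs.simple_mul_simple_self, mul_one]; omega)
  rw [rp_simple_neg, h] at this
  exact (IsRt.al cs t).not_pos_neg (pos_al t) this

theorem rp_ext (cs : CoxeterSystem M W) {w w' : W} (h : ∀ v, rp cs w v = rp cs w' v) : w = w' := by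
  have : rp cs (w'⁻¹ * w) = 1 := by
    apply LinearMap.ext
    intro v
    rw [rp_mul, h, rp_inv_apply]; rfl
  have := rp_faithful cs this
  rw [inv_mul_eq_one] at this
  exact this.symm

theorem HasRefl.apply {r : W} {β : B → ℝ} (h : HasRefl cs r β) (v : B → ℝ) :
    rp cs r v = v - (2 * bil M β v) • β := by
  obtain ⟨x, i, rfl, rfl⟩ := h
  exact rp_refl cs x i v

theorem HasRefl.isRt {r : W} {β : B → ℝ} (h : HasRefl cs r β) : IsRt cs β := by
  obtain ⟨x, i, rfl, rfl⟩ := h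
  exact ⟨x, i, rfl⟩

theorem HasRefl.unique {r r' : W} {β : B → ℝ} (h : HasRefl cs r β) (h' : HasRefl cs r' β) : r = r' :=
  rp_ext cs fun v => by rw [h.apply, h'.apply]

theorem HasRefl.conj {r : W} {β : B → ℝ} (h : HasRefl cs r β) (w : W) :
    HasRefl cs (w * r * w⁻¹) (rp cs w β) := by
  obtain ⟨x, i, rfl, rfl⟩ := h
  exact ⟨w * x, i, by group, by rw [rp_mul]⟩

theorem HasRefl.neg {r : W} {β : B → ℝ} (h : HasRefl cs r β) : HasRefl cs r (-β) := by
  obtain ⟨x, i, rfl, rfl⟩ := h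
  exact ⟨x * cs.simple i, i, by simp [mul_assoc], by rw [rp_simple_neg]⟩

theorem hasRefl_simple (cs : CoxeterSystem M W) (i : B) : HasRefl cs (cs.simple i) (al i) :=
  ⟨1, i, by simp, by simp⟩

theorem HasRefl.mul_self {r : W} {β : B → ℝ} (h : HasRefl cs r β) : r * r = 1 := by
  obtain ⟨x, i, rfl, rfl⟩ := h
  simp

theorem HasRefl.apply_self {r : W} {β : B → ℝ} (h : HasRefl cs r β) : rp cs r β = -β := by
  rw [h.apply, h.isRt.bil_self]; module

theorem HasRefl.inv {r : W} {β : B → ℝ} (h : HasRefl cs r β) : r⁻¹ = r :=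
  inv_eq_of_mul_eq_one_left h.mul_self

theorem IsRt.exists_refl {β : B → ℝ} (h : IsRt cs β) : ∃ r, HasRefl cs r β := by
  obtain ⟨x, i, rfl⟩ := h
  exact ⟨_, x, i, rfl, rfl⟩

theorem HasRefl.isReflection {r : W} {β : B → ℝ} (h : HasRefl cs r β) : cs.IsReflection r := by
  obtain ⟨x, i, rfl, rfl⟩ := h
  exact ⟨x, i, rfl⟩

theorem exists_pos_root {r : W} (h : cs.IsReflection r) : ∃ β, HasRefl cs r β ∧ Pos β := by
  obtain ⟨x, i, rfl⟩ := h
  have hr : HasRefl cs (x * cs.simple i * x⁻¹) (rp cs x (al i)) := ⟨x, i, rfl, rfl⟩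
  rcases hr.isRt.pos_or with h | h
  · exact ⟨_, hr, h⟩
  · exact ⟨_, hr.neg, h⟩

/-- word exchange -/
theorem exchange {r : W} {β : B → ℝ} (h : HasRefl cs r β) (hp : Pos β) : ∀ (ω : List B),
    Pos (-(rp cs (cs.wordProd ω) β)) →
    ∃ l < ω.length, cs.wordProd ω * r = cs.wordProd (ω.eraseIdx l) := by
  intro ω
  induction ω with
  | nil =>
    intro hn
    simp at hn
    exact (h.isRt.not_pos_neg hp hn).elim
  | cons i ω ih =>
    intro hn
    rcases (h.isRt.rp (cs.wordProd ω)).pos_or with h1 | h1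
    · rw [cs.wordProd_cons, rp_mul] at hn
      have e := (h.isRt.rp (cs.wordProd ω)).eq_al_of_flip h1 hn
      have h2 := h.conj (cs.wordProd ω)
      rw [e] at h2
      have h3 := h2.unique (hasRefl_simple cs i)
      refine ⟨0, by simp, ?_⟩
      rw [cs.wordProd_cons, mul_assoc, mul_inv_eq_iff_eq_mul.mp h3]
      simp
    · obtain ⟨l, hl, he⟩ := ih h1
      refine ⟨l+1, by simpa using hl, ?_⟩
      rw [cs.wordProd_cons, mul_assoc, he, List.eraseIdx_cons_succ, cs.wordProd_cons]

theorem length_lt_of_neg {r : W} {β : B → ℝ} (h : HasRefl cs r β) (hp : Pos β) {w : W}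
    (hn : Pos (-(rp cs w β))) : cs.length (w * r) < cs.length w := by
  obtain ⟨ω, hω, rfl⟩ := cs.exists_isReduced w
  obtain ⟨l, hl, he⟩ := exchange h hp ω hn
  rw [he]
  have := cs.length_wordProd_le (ω.eraseIdx l)
  rw [List.length_eraseIdx_of_lt hl] at this
  have h2 : cs.length (cs.wordProd ω) = ω.length := hω
  omega

theorem lt_length_of_pos {r : W} {β : B → ℝ} (h : HasRefl cs r β) (hp : Pos β) {w : W}
    (hn : Pos (rp cs w β)) : cs.length w < cs.length (w * r) := by
  have := length_lt_of_neg h hp (w := w * r) (by rw [rp_mul, h.apply_self, map_neg, neg_neg]; exact hn)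
  rwa [mul_assoc, h.mul_self, mul_one] at this

theorem neg_of_length_lt {r : W} {β : B → ℝ} (h : HasRefl cs r β) (hp : Pos β) {w : W}
    (hn : cs.length (w * r) < cs.length w) : Pos (-(rp cs w β)) := by
  rcases (h.isRt.rp w).pos_or with h1 | h1
  · have := lt_length_of_pos h hp h1; omega
  · exact h1

theorem pos_of_lt_length {r : W} {β : B → ℝ} (h : HasRefl cs r β) (hp : Pos β) {w : W}
    (hn : cs.length w < cs.length (w * r)) : Pos (rp cs w β) := by
  rcases (h.isRt.rp w).pos_or with h1 | h1
  · exact h1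
  · have := length_lt_of_neg h hp h1; omega

theorem inversions_finite (cs : CoxeterSystem M W) (w : W) :
    {β | IsRt cs β ∧ Pos β ∧ Pos (-(rp cs w β))}.Finite := by
  induction w using cs.simple_induction_left with
  | one =>
    convert Set.finite_empty
    ext β
    simp only [Set.mem_ofPred_eq, Set.mem_empty_iff_false, iff_false]
    rintro ⟨h1, h2, h3⟩
    exact h1.not_pos_neg h2 (by simpa using h3)
  | mul_simple_left w i ih =>
    refine (ih.union (Set.finite_singleton (rp cs w⁻¹ (al i)))).subset ?_
    rintro β ⟨h1, h2, h3⟩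
    rcases (h1.rp w).pos_or with h | h
    · right
      rw [rp_mul] at h3
      have := (h1.rp w).eq_al_of_flip h h3
      simp only [Set.mem_singleton_iff]
      rw [← this, rp_inv_apply]
    · left; exact ⟨h1, h2, h⟩

/-- depth and bilinear form -/
theorem length_conj_of_bil_neg {r : W} {β : B → ℝ} (h : HasRefl cs r β) (hp : Pos β) {j : B}
    (hb : bil M β (al j) < 0) :
    cs.length (cs.simple j * r * cs.simple j) = cs.length r + 2 := by
  have hne : β ≠ al j := by
    rintro rfl
    rw [bil_al_self] at hb; linarith
  obtain ⟨i, hij, hi⟩ := h.isRt.exists_ne hp hne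
  have h1 : Pos (rp cs r (al j)) := by
    apply ((IsRt.al cs j).rp r).pos_of_coeff (i := j)
    rw [h.apply]
    simp only [Pi.sub_apply, Pi.smul_apply, smul_eq_mul, al_self]
    nlinarith [hp.nonneg j]
  have h2 := lt_length_of_pos (hasRefl_simple cs j) (pos_al j) h1
  have h3 : Pos (rp cs (r * cs.simple j)⁻¹ (al j)) := by
    rw [mul_inv_rev, rp_mul, h.inv, cs.inv_simple]
    apply (((IsRt.al cs j).rp r).rp _).pos_of_coeff (i := i)
    rw [rp_simple, rf_al_apply_ne M j _ hij, h.apply]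
    simp only [Pi.sub_apply, Pi.smul_apply, smul_eq_mul, al_ne hij]
    nlinarith
  have h4 := lt_length_of_pos (hasRefl_simple cs j) (pos_al j) h3
  have h5 : cs.length ((r * cs.simple j)⁻¹ * cs.simple j) = cs.length (cs.simple j * r * cs.simple j) := by
    rw [← cs.length_inv]
    congr 1
    rw [mul_inv_rev, inv_inv, cs.inv_simple, mul_assoc]
  rw [h5, cs.length_inv] at h4
  have h6 := cs.length_mul_simple r j
  have h7 := cs.length_simple_mul (r * cs.simple j) j
  rw [← mul_assoc] at h7
  omega

theorem bil_neg_of_length_conj {r : W} {β : B → ℝ} (h : HasRefl cs r β) (hp : Pos β) {j : B}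
    (hl : cs.length r < cs.length (cs.simple j * r * cs.simple j)) : bil M β (al j) < 0 := by
  by_contra hcon
  push Not at hcon
  by_cases hne : β = al j
  · subst hne
    have := h.unique (hasRefl_simple cs j)
    subst this
    simp at hl
  have hc := h.conj (cs.simple j)
  rw [cs.inv_simple] at hc
  have happ : rp cs (cs.simple j) β = β - (2 * bil M β (al j)) • al j := by
    rw [rp_simple, rf_apply, bil_symm]
  rcases hcon.lt_or_eq with h0 | h0
  · have hp' : Pos (rp cs (cs.simple j) β) := by
      rcases (h.isRt.rp (cs.simple j)).pos_or with h1 | h1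
      · exact h1
      · exact absurd (h.isRt.eq_al_of_flip hp h1) hne
    have := length_conj_of_bil_neg hc hp' (j := j) (by
      rw [happ, map_sub, map_smul, LinearMap.sub_apply, LinearMap.smul_apply, bil_al_self]
      simp only [smul_eq_mul]; linarith)
    have e : cs.simple j * (cs.simple j * r * cs.simple j) * cs.simple j = r := by
      simp [mul_assoc]
    rw [e] at this
    omega
  · rw [happ, ← h0] at hc
    simp only [mul_zero, zero_smul, sub_zero] at hc
    have := hc.unique h
    rw [this] at hl
    omega

end Cox
end Roots

/-! ## Infinite order, bases -/

section Bases

variable [Fintype B]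

namespace Cox

theorem seq_exists {r r' : W} {β γ : B → ℝ} (h : HasRefl cs r β) (h' : HasRefl cs r' γ)
    (hb : bil M β γ ≤ -1) : ∃ p q : ℕ → ℝ, (∀ n, 0 ≤ q n ∧ q n < p n) ∧ (∀ n, q n < q (n+1)) ∧
      (∀ n, p n < p (n+1)) ∧ p 0 = 1 ∧ q 0 = 0 ∧
      (∀ n, rp cs ((r * r') ^ n) β = p n • β + q n • γ) := by
  set a := - bil M β γ with ha
  have ha1 : 1 ≤ a := by linarith
  let F : ℝ × ℝ → ℝ × ℝ := fun x => (2 * a * (2 * a * x.1 - x.2) - x.1, 2 * a * x.1 - x.2)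
  let S : ℕ → ℝ × ℝ := fun n => F^[n] (1, 0)
  have hS : ∀ n, S (n+1) = F (S n) := fun n => Function.iterate_succ_apply' F n (1, 0)
  have hS1 : ∀ n, (S (n+1)).2 = 2 * a * (S n).1 - (S n).2 := fun n => by rw [hS]
  have hS2 : ∀ n, (S (n+1)).1 = 2 * a * (S (n+1)).2 - (S n).1 := fun n => by rw [hS]
  have hpos : ∀ n, 0 ≤ (S n).2 ∧ (S n).2 < (S n).1 := by
    intro n
    induction n with
    | zero => simp [S]
    | succ n ih =>
      have e1 : (S n).1 < (S (n+1)).2 := by rw [hS1]; nlinarith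
      have e2 : (S (n+1)).2 < (S (n+1)).1 := by rw [hS2]; nlinarith
      exact ⟨by linarith, e2⟩
  have hinc : ∀ n, (S n).1 < (S (n+1)).2 := by
    intro n
    have := hpos n
    rw [hS1]; nlinarith
  refine ⟨fun n => (S n).1, fun n => (S n).2, hpos, fun n => (hpos n).2.trans (hinc n),
    fun n => (hinc n).trans (hpos _).2, rfl, rfl, ?_⟩
  intro n
  induction n with
  | zero => simp [S]
  | succ n ih =>
    rw [pow_succ', rp_mul, ih, rp_mul, h'.apply, h.apply]
    simp only [map_add, map_sub, map_smul, smul_eq_mul, h.isRt.bil_self, h'.isRt.bil_self]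
    rw [bil_symm M γ β, show bil M β γ = -a by rw [ha]; ring, hS2 n, hS1 n]
    module

theorem not_finOrder_of_bil {r r' : W} {β γ : B → ℝ} (h : HasRefl cs r β) (h' : HasRefl cs r' γ)
    (hb : bil M β γ ≤ -1) (hne : γ ≠ -β) : ¬ IsOfFinOrder (r * r') := by
  intro hfin
  obtain ⟨n, hn, hn1⟩ := isOfFinOrder_iff_pow_eq_one.mp hfin
  obtain ⟨p, q, h1, h2, h3, hp0, hq0, hT⟩ := seq_exists h h' hb
  have hq : ∀ m, 0 < m → 0 < q m := by
    intro m hm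
    obtain ⟨k, rfl⟩ : ∃ k, m = k + 1 := ⟨m - 1, by omega⟩
    linarith [h2 k, (h1 k).1]
  have hT := hT n
  rw [hn1] at hT
  simp only [map_one, Module.End.one_apply] at hT
  have e1 := congrArg (bil M β) hT
  have e2 := congrArg (bil M γ) hT
  simp only [map_add, map_smul, smul_eq_mul, h.isRt.bil_self, h'.isRt.bil_self] at e1 e2
  rw [bil_symm M γ β] at e2
  set b := bil M β γ
  have hqn := hq n hn
  -- p - 1 = - b q ; q = -b (p-1)
  have e3 : p n - 1 = - b * q n := by linarith
  have e4 : q n = -b * (p n - 1) := by linarith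
  have hb1 : b = -1 := by
    by_contra hb1
    have : b < -1 := lt_of_le_of_ne hb hb1
    rw [e3] at e4
    have h5 : (b * b - 1) * q n = 0 := by linarith
    have h6 : 0 < b * b - 1 := by nlinarith
    have h7 := mul_pos h6 hqn
    linarith
  rw [hb1] at e3
  have e5 : p n = 1 + q n := by linarith
  rw [e5] at hT
  apply hne
  have e6 : q n • (β + γ) = 0 := by
    have : (1 + q n) • β + q n • γ = β + q n • (β + γ) := by module
    rw [this] at hT
    simpa using hT
  rcases smul_eq_zero.mp e6 with h0 | h0
  · linarith
  · exact eq_neg_of_add_eq_zero_right h0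

theorem finite_closure_of {r r' : W} (h : r * r = 1) (h' : r' * r' = 1) (hf : IsOfFinOrder (r * r')) :
    (Subgroup.closure {r, r'} : Set W).Finite := by
  set T := r * r' with hT
  have hz : (Subgroup.zpowers T : Set W).Finite := by
    have := hf.finite_zpowers
    exact this
  have hri : r⁻¹ = r := inv_eq_of_mul_eq_one_left h
  have hri' : r'⁻¹ = r' := inv_eq_of_mul_eq_one_left h'
  have hTi : T⁻¹ = r' * r := by rw [hT, mul_inv_rev, hri, hri']
  have hcj : ∀ k : ℤ, r * T ^ k = T ^ (-k) * r := by
    intro k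
    have e : r * T * r⁻¹ = T⁻¹ := by
      rw [hTi, hT, hri, ← mul_assoc, h, one_mul]
    have := conj_zpow (i := k) (a := r) (b := T)
    rw [e, inv_zpow', hri] at this
    rw [this, mul_assoc, h, mul_one]
  refine (hz.union (hz.image (· * r))).subset ?_
  intro x hx
  have key : (∃ k : ℤ, x = T ^ k) ∨ ∃ k : ℤ, x = T ^ k * r := by
    induction hx using Subgroup.closure_induction with
    | mem x hx =>
      rcases hx with rfl | hx
      · right; exact ⟨0, by simp⟩
      · rw [Set.mem_singleton_iff] at hx
        subst hx
        right; exact ⟨-1, by rw [zpow_neg, zpow_one, hTi, mul_assoc, h, mul_one]⟩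
    | one => left; exact ⟨0, by simp⟩
    | mul x y _ _ hx hy =>
      rcases hx with ⟨k, rfl⟩ | ⟨k, rfl⟩ <;> rcases hy with ⟨l, rfl⟩ | ⟨l, rfl⟩
      · left; exact ⟨k + l, by rw [zpow_add]⟩
      · right; exact ⟨k + l, by rw [zpow_add, mul_assoc]⟩
      · right; exact ⟨k + -l, by rw [zpow_add, mul_assoc, hcj, mul_assoc]⟩
      · left; exact ⟨k + -l, by rw [zpow_add, mul_assoc, ← mul_assoc r, hcj, mul_assoc _ r r, h, mul_one]⟩
    | inv x _ hx =>
      rcases hx with ⟨k, rfl⟩ | ⟨k, rfl⟩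
      · left; exact ⟨-k, by rw [zpow_neg]⟩
      · right; exact ⟨k, by rw [mul_inv_rev, hri, ← zpow_neg, hcj, neg_neg]⟩
  rcases key with ⟨k, rfl⟩ | ⟨k, rfl⟩
  · left; exact ⟨k, rfl⟩
  · right; exact ⟨T ^ k, ⟨k, rfl⟩, rfl⟩

theorem finOrder_of_closure {r r' : W} (h : (Subgroup.closure {r, r'} : Set W).Finite) :
    IsOfFinOrder (r * r') := by
  set H := Subgroup.closure {r, r'} with hH
  have : Finite H := h
  have hr : r * r' ∈ H := H.mul_mem (Subgroup.subset_closure (by simp)) (Subgroup.subset_closure (by simp))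
  have := isOfFinOrder_of_finite (⟨r * r', hr⟩ : H)
  exact Submonoid.isOfFinOrder_coe.mpr this

theorem adjacent_of_ne_zero (cs : CoxeterSystem M W) {i j : B} (h : M i j ≠ 0) : Adjacent cs i j := by
  apply finite_closure_of (cs.simple_mul_simple_self i) (cs.simple_mul_simple_self j)
  exact isOfFinOrder_iff_pow_eq_one.mpr ⟨M i j, Nat.pos_of_ne_zero h, cs.simple_mul_simple_pow i j⟩

theorem adjacent_symm {i j : B} (h : Adjacent cs i j) : Adjacent cs j i := by
  unfold Adjacent at *
  rwa [Set.pair_comm]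

theorem adjacent_self (cs : CoxeterSystem M W) (i : B) : Adjacent cs i i :=
  adjacent_of_ne_zero cs (by simp)

theorem kk_of_commute {k l : B} (hkl : k ≠ l) (h : Commute (cs.simple k) (cs.simple l)) : kk M k l = 0 := by
  have e := congrArg (fun w => rp cs w (al l) k) h.eq
  simp only [rp_mul, rp_al_self, map_neg] at e
  simp only [rp_simple, rf_apply, bil_al_al, map_sub, map_smul, bil_al_self, Pi.neg_apply, Pi.sub_apply,
    Pi.smul_apply, smul_eq_mul, al_self, al_ne hkl] at e
  linarith

theorem kk_neg_of_not_commute {k l : B} (h : ¬ Commute (cs.simple k) (cs.simple l)) :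
    k ≠ l ∧ kk M k l < 0 := by
  have hkl : k ≠ l := by rintro rfl; exact h (Commute.refl _)
  refine ⟨hkl, lt_of_le_of_ne (kk_nonpos hkl) fun h0 => h ?_⟩
  have h2 := kk_eq_zero hkl h0
  have h3 := cs.simple_mul_simple_pow k l
  rw [h2, pow_two] at h3
  have : (cs.simple k * cs.simple l) = (cs.simple k * cs.simple l)⁻¹ := eq_inv_of_mul_eq_one_left h3
  rw [mul_inv_rev, cs.inv_simple, cs.inv_simple] at this
  exact this

/-- the root attached to a base -/
noncomputable def bt (cs : CoxeterSystem M W) (s : B) (w : W) : B → ℝ := rp cs w⁻¹ (al s)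

theorem bt_one (cs : CoxeterSystem M W) (s : B) : bt cs s 1 = al s := by simp [bt]

theorem bt_refl (cs : CoxeterSystem M W) (s : B) (w : W) :
    HasRefl cs (w⁻¹ * cs.simple s * w) (bt cs s w) := by
  have := (hasRefl_simple cs s).conj w⁻¹
  rwa [inv_inv] at this

theorem bt_isRt (cs : CoxeterSystem M W) (s : B) (w : W) : IsRt cs (bt cs s w) := (bt_refl cs s w).isRt

theorem bt_mul (cs : CoxeterSystem M W) (s : B) (w : W) (q : B) :
    bt cs s (w * cs.simple q) = bt cs s w - (2 * bil M (bt cs s w) (al q)) • al q := by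
  rw [bt, mul_inv_rev, cs.inv_simple, rp_mul, rp_simple, rf_apply, bil_symm]; rfl

theorem base_pos {s : B} {w : W} (h : IsBase cs s w) : Pos (bt cs s w) := by
  apply pos_of_lt_length (hasRefl_simple cs s) (pos_al s)
  have h1 := h.1
  have h2 := cs.length_mul_le (w⁻¹ * cs.simple s) w
  have := cs.length_inv w
  omega

theorem isBase_one (cs : CoxeterSystem M W) (s : B) : IsBase cs s 1 := by
  refine ⟨by simp, fun t _ h => ?_⟩
  simp at h

theorem base_inf {s m : B} {w : W} (h : IsBase cs s w) (hb : bil M (bt cs s w) (al m) ≤ -1) :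
    ¬ IsOfFinOrder (cs.simple s * (w * cs.simple m * w⁻¹)) := by
  apply not_finOrder_of_bil (hasRefl_simple cs s) ((hasRefl_simple cs m).conj w)
  · rw [bt, rp_bil_left, inv_inv] at hb
    exact hb
  · intro he
    have e : al m = - bt cs s w := by
      rw [bt, ← map_neg, ← he, rp_inv_apply]
    have h1 := base_pos h
    apply (bt_isRt cs s w).not_pos_neg h1
    rw [← e]; exact pos_al m

theorem base_pred {s q : B} {w : W} (h : IsBase cs s (w * cs.simple q))
    (hl : cs.length (w * cs.simple q) = cs.length w + 1) :
    IsBase cs s w ∧ bil M (bt cs s w) (al q) < 0 ∧ -1 < bil M (bt cs s w) (al q) := by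
  have h1 := h.1
  rw [hl] at h1
  have e : (w * cs.simple q)⁻¹ * cs.simple s * (w * cs.simple q) =
      cs.simple q * (w⁻¹ * cs.simple s * w) * cs.simple q := by
    rw [mul_inv_rev, cs.inv_simple]; simp only [mul_assoc]
  rw [e] at h1
  have a1 := cs.length_mul_le (cs.simple q * (w⁻¹ * cs.simple s * w)) (cs.simple q)
  have a2 := cs.length_mul_le (cs.simple q) (w⁻¹ * cs.simple s * w)
  have a3 := cs.length_mul_le (w⁻¹ * cs.simple s) w
  have a4 := cs.length_mul_le w⁻¹ (cs.simple s)
  rw [cs.length_simple] at a1 a2 a4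
  rw [cs.length_inv] at a4
  have hbase : IsBase cs s w := by
    refine ⟨by omega, fun t ht htl => h.2 t ht ?_⟩
    rw [← mul_assoc]
    have := cs.length_mul_le (t * w) (cs.simple q)
    rw [cs.length_simple] at this
    omega
  refine ⟨hbase, ?_, ?_⟩
  · apply bil_neg_of_length_conj (bt_refl cs s w) (base_pos hbase)
    omega
  · by_contra hcon
    push Not at hcon
    apply base_inf hbase hcon
    apply finOrder_of_closure
    apply h.2
    · exact ((hasRefl_simple cs q).conj w).isReflection
    · have : w * cs.simple q * w⁻¹ * (w * cs.simple q) = w := by simp [mul_assoc]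
      rw [this]; omega

theorem base_ext {s q : B} {w : W} (h : IsBase cs s w) (hb : bil M (bt cs s w) (al q) < 0)
    (hf : IsOfFinOrder (cs.simple s * (w * cs.simple q * w⁻¹))) :
    IsBase cs s (w * cs.simple q) ∧ cs.length (w * cs.simple q) = cs.length w + 1 := by
  have h1 := length_conj_of_bil_neg (bt_refl cs s w) (base_pos h) hb
  have e : (w * cs.simple q)⁻¹ * cs.simple s * (w * cs.simple q) =
      cs.simple q * (w⁻¹ * cs.simple s * w) * cs.simple q := by
    rw [mul_inv_rev, cs.inv_simple]; simp only [mul_assoc]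
  have a3 := cs.length_mul_le ((w * cs.simple q)⁻¹ * cs.simple s) (w * cs.simple q)
  have a4 := cs.length_mul_le (w * cs.simple q)⁻¹ (cs.simple s)
  rw [cs.length_simple, cs.length_inv] at a4
  rw [e] at a3
  have h0 := h.1
  have a5 := cs.length_mul_simple w q
  refine ⟨⟨by rw [e]; omega, ?_⟩, by omega⟩
  intro t ht htl
  obtain ⟨δ, hδ, hδp⟩ := exists_pos_root ht
  by_cases hcase : cs.length (t * w) < cs.length w
  · exact h.2 t ht hcase
  · have e1 : cs.length (w⁻¹ * t) = cs.length (t * w) := by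
      rw [← cs.length_inv, mul_inv_rev, inv_inv, hδ.inv]
    have e2 : cs.length ((w * cs.simple q)⁻¹ * t) = cs.length (t * (w * cs.simple q)) := by
      rw [← cs.length_inv, mul_inv_rev, inv_inv, hδ.inv]
    have n1 : Pos (-(rp cs (w * cs.simple q)⁻¹ δ)) := by
      apply neg_of_length_lt hδ hδp
      rw [e2, cs.length_inv]; exact htl
    rcases (hδ.isRt.rp w⁻¹).pos_or with hp | hp
    · rw [mul_inv_rev, cs.inv_simple, rp_mul] at n1
      have e3 := (hδ.isRt.rp w⁻¹).eq_al_of_flip hp n1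
      have e4 : δ = rp cs w (al q) := by rw [← e3, rp_apply_inv]
      have e5 := (hasRefl_simple cs q).conj w
      rw [← e4] at e5
      have e6 := hδ.unique e5
      rw [e6]
      exact finite_closure_of (cs.simple_mul_simple_self s) e5.mul_self hf
    · exfalso
      have := length_lt_of_neg hδ hδp hp
      rw [e1, cs.length_inv] at this
      exact hcase this

theorem base_induction {s : B} {P : W → Prop} (h1 : P 1)
    (hs : ∀ w q, IsBase cs s w → IsBase cs s (w * cs.simple q) →
      cs.length (w * cs.simple q) = cs.length w + 1 → P w → P (w * cs.simple q)) :
    ∀ w, IsBase cs s w → P w := by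
  intro w
  generalize hn : cs.length w = n
  induction n generalizing w with
  | zero =>
    intro _
    rw [cs.length_eq_zero_iff] at hn
    subst hn; exact h1
  | succ n ih =>
    intro hw
    have hw1 : w ≠ 1 := by rintro rfl; simp at hn
    obtain ⟨t, ht⟩ := cs.exists_rightDescent_of_ne_one hw1
    have ht' : cs.length (w * cs.simple t) < cs.length w := ht
    have e : w * cs.simple t * cs.simple t = w := by simp
    have hl := cs.length_mul_simple w t
    have hb := base_pred (w := w * cs.simple t) (q := t) (s := s) (by rw [e]; exact hw) (by rw [e]; omega)
    have := hs (w * cs.simple t) t hb.1 (by rw [e]; exact hw) (by rw [e]; omega)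
      (ih _ (by omega) hb.1)
    rwa [e] at this

theorem supp_closure {J : Set B} {u : W} (hu : u ∈ Subgroup.closure (cs.simple '' J)) :
    ∀ {v : B → ℝ}, (∀ i, i ∉ J → v i = 0) → ∀ i, i ∉ J → rp cs u v i = 0 := by
  induction hu using Subgroup.closure_induction with
  | mem x hx =>
    obtain ⟨j, hj, rfl⟩ := hx
    intro v hv i hi
    rw [rp_simple, rf_al_apply_ne]
    · exact hv i hi
    · rintro rfl; exact hi hj
  | one => intro v hv i hi; simpa using hv i hi
  | mul x y _ _ hx hy =>
    intro v hv i hi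
    rw [rp_mul]
    exact hx (fun i hi => hy hv i hi) i hi
  | inv x hx' hx =>
    intro v hv i hi
    -- simple generators are involutions: use finite-dimensional argument avoided
    have : x⁻¹ ∈ Subgroup.closure (cs.simple '' J) := Subgroup.inv_mem _ hx'
    have key : ∀ y : W, y ∈ Subgroup.closure (cs.simple '' J) → ∀ {v : B → ℝ}, (∀ i, i ∉ J → v i = 0) →
        ∀ i, i ∉ J → rp cs y v i = 0 := by
      intro y hy
      rw [← SetLike.mem_coe, ← Subgroup.coe_toSubmonoid, Subgroup.closure_toSubmonoid] at hy
      have hinv : (cs.simple '' J)⁻¹ = cs.simple '' J := by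
        ext z
        simp only [Set.mem_inv, Set.mem_image]
        constructor
        · rintro ⟨j, hj, h⟩
          exact ⟨j, hj, by rw [← inv_inv z, ← h, cs.inv_simple]⟩
        · rintro ⟨j, hj, rfl⟩
          exact ⟨j, hj, by rw [cs.inv_simple]⟩
      rw [hinv, Set.union_self] at hy
      induction hy using Submonoid.closure_induction with
      | mem x hx =>
        obtain ⟨j, hj, rfl⟩ := hx
        intro v hv i hi
        rw [rp_simple, rf_al_apply_ne]
        · exact hv i hi
        · rintro rfl; exact hi hj
      | one => intro v hv i hi; simpa using hv i hi
      | mul x y _ _ hx hy =>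
        intro v hv i hi
        rw [rp_mul]
        exact hx (fun i hi => hy hv i hi) i hi
    exact key _ this hv i hi

/-- bases: coefficients grow -/
theorem bt_mul_apply_ne (cs : CoxeterSystem M W) (s : B) (w : W) {q i : B} (h : i ≠ q) :
    bt cs s (w * cs.simple q) i = bt cs s w i := by
  rw [bt_mul]; simp [al_ne h]

theorem bt_mul_apply_self (cs : CoxeterSystem M W) (s : B) (w : W) (q : B) :
    bt cs s (w * cs.simple q) q = bt cs s w q - 2 * bil M (bt cs s w) (al q) := by
  rw [bt_mul]; simp [al_self]

theorem base_support_step {s q : B} {w : W} (h : IsBase cs s w) (hb : bil M (bt cs s w) (al q) < 0) :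
    {i | bt cs s (w * cs.simple q) i ≠ 0} = {i | bt cs s w i ≠ 0} ∪ {q} := by
  ext i
  simp only [Set.mem_ofPred_eq, Set.mem_union, Set.mem_singleton_iff]
  by_cases hi : i = q
  · subst hi
    simp only [or_true, iff_true]
    rw [bt_mul_apply_self]
    have := (base_pos h).nonneg i
    intro h0; linarith
  · rw [bt_mul_apply_ne cs s w hi]; simp [hi]

theorem base_support {s : B} {w : W} (h : IsBase cs s w) : IsSupport cs s w {i | bt cs s w i ≠ 0} := by
  have key : s ∈ {i | bt cs s w i ≠ 0} ∧
      w ∈ Subgroup.closure (cs.simple '' {i | bt cs s w i ≠ 0}) := by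
    revert w h
    apply base_induction
    · refine ⟨?_, Subgroup.one_mem _⟩
      simp [bt_one, al_self]
    · rintro w q hw hwq hl ⟨h1, h2⟩
      rw [base_support_step hw (base_pred hwq hl).2.1]
      refine ⟨Or.inl h1, Subgroup.mul_mem _ ?_ ?_⟩
      · exact Subgroup.closure_mono (Set.image_mono Set.subset_union_left) h2
      · exact Subgroup.subset_closure ⟨q, Or.inr rfl, rfl⟩
  refine ⟨key.1, key.2, ?_⟩
  intro J' hs hw i hi
  by_contra hiJ
  apply hi
  apply supp_closure (Subgroup.inv_mem _ hw) _ i hiJ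
  intro j hj
  apply al_ne
  rintro rfl; exact hj hs

theorem support_eq {s : B} {w : W} (h : IsBase cs s w) {J : Set B} (hJ : IsSupport cs s w J) :
    J = {i | bt cs s w i ≠ 0} := by
  have h' := base_support h
  exact Set.Subset.antisymm (hJ.2.2 _ h'.1 h'.2.1) (h'.2.2 _ hJ.1 hJ.2.1)

theorem bil_le_neg_one {α : B → ℝ} (hp : Pos α) {m j : B} (hm : α m = 0) (hj : α j ≠ 0)
    (hjm : M j m = 0) : bil M α (al m) ≤ -1 := by
  rw [bil_al_right]
  have hj1 : 1 ≤ α j := by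
    rcases hp j with h | h
    · exact absurd h hj
    · exact h
  classical
  rw [← Finset.add_sum_erase _ _ (Finset.mem_univ j), kk_zero hjm]
  have : ∑ x ∈ Finset.univ.erase j, α x * kk M x m ≤ 0 := by
    apply Finset.sum_nonpos
    intro x _
    by_cases hx : x = m
    · rw [hx, hm]; simp
    · exact mul_nonpos_of_nonneg_of_nonpos (hp.nonneg x) (kk_nonpos hx)
  linarith

theorem base_M_ne_zero {s : B} {w : W} (h : IsBase cs s w) :
    ∀ i j, bt cs s w i ≠ 0 → bt cs s w j ≠ 0 → M i j ≠ 0 := by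
  revert w h
  apply base_induction
  · intro i j hi hj
    have hi' : i = s := by
      by_contra hne; exact hi (by rw [bt_one, al_ne hne])
    have hj' : j = s := by
      by_contra hne; exact hj (by rw [bt_one, al_ne hne])
    subst hi'; subst hj'; simp
  · intro w q hw hwq hl ih i j hi hj
    obtain ⟨_, h1, h2⟩ := base_pred hwq hl
    have key : ∀ j, bt cs s w j ≠ 0 → M j q ≠ 0 := by
      intro j hj h0
      by_cases hq : bt cs s w q = 0
      · have := bil_le_neg_one (base_pos hw) hq hj h0
        linarith
      · exact ih j q hj hq h0
    have mem : ∀ i, bt cs s (w * cs.simple q) i ≠ 0 → bt cs s w i ≠ 0 ∨ i = q := by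
      intro i hi
      by_cases hiq : i = q
      · exact Or.inr hiq
      · rw [bt_mul_apply_ne cs s w hiq] at hi; exact Or.inl hi
    rcases mem i hi with hi' | hi' <;> rcases mem j hj with hj' | hj'
    · exact ih i j hi' hj'
    · rw [hj']; exact key i hi'
    · rw [hi', M.symmetric]; exact key j hj'
    · rw [hi', hj']; simp

theorem base_twoSpherical {s : B} {w : W} (h : IsBase cs s w) :
    TwoSpherical cs {i | bt cs s w i ≠ 0} := by
  intro i hi j hj
  exact adjacent_of_ne_zero cs (base_M_ne_zero h i j hi hj)

theorem base_conn {s : B} {w : W} (h : IsBase cs s w) : ∀ K L : Set B, s ∈ K → Disjoint K L →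
    {i | bt cs s w i ≠ 0} ⊆ K ∪ L → (∀ k ∈ K, ∀ l ∈ L, kk M k l = 0) → ∀ l ∈ L, bt cs s w l = 0 := by
  revert w h
  apply base_induction
  · intro K L hs hd _ _ l hl
    rw [bt_one, al_ne]
    rintro rfl
    exact Set.disjoint_left.mp hd hs hl
  · intro w q hw hwq hlen ih K L hs hd hsub hk l hl
    obtain ⟨_, h1, h2⟩ := base_pred hwq hlen
    rw [base_support_step hw h1] at hsub
    have ih' := ih K L hs hd (Set.subset_union_left.trans hsub) hk
    have hqK : q ∈ K := by
      rcases hsub (Or.inr rfl) with hq | hq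
      · exact hq
      · exfalso
        rw [bil_al_right] at h1
        have : ∑ i, bt cs s w i * kk M i q = 0 := by
          apply Finset.sum_eq_zero
          intro i _
          by_cases hi : bt cs s w i = 0
          · rw [hi, zero_mul]
          · rcases hsub (Or.inl hi) with hi' | hi'
            · rw [hk i hi' q hq, mul_zero]
            · exact absurd (ih' i hi') hi
        linarith
    have hlq : l ≠ q := by rintro rfl; exact Set.disjoint_left.mp hd hqK hl
    rw [bt_mul_apply_ne cs s w hlq]
    exact ih' l hl

theorem base_irred {s : B} {w : W} (h : IsBase cs s w) :
    IrreducibleSubset cs {i | bt cs s w i ≠ 0} := by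
  rintro ⟨K, L, hK, hL, hd, hu, hc⟩
  have hs : s ∈ K ∪ L := by rw [hu]; exact (base_support h).1
  have main : ∀ K L : Set B, L.Nonempty → Disjoint K L → K ∪ L = {i | bt cs s w i ≠ 0} →
      (∀ k ∈ K, ∀ l ∈ L, Commute (cs.simple k) (cs.simple l)) → s ∈ K → False := by
    intro K L hL hd hu hc hs
    obtain ⟨l, hl⟩ := hL
    have h0 := base_conn h K L hs hd hu.ge (fun k hk l hl => kk_of_commute (by
      rintro rfl; exact Set.disjoint_left.mp hd hk hl) (hc k hk l hl)) l hl
    have : l ∈ {i | bt cs s w i ≠ 0} := by rw [← hu]; exact Or.inr hl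
    exact this h0
  rcases hs with hs | hs
  · exact main K L hL hd hu hc hs
  · exact main L K hK hd.symm (by rw [Set.union_comm]; exact hu) (fun k hk l hl => (hc l hl k hk).symm) hs

end Cox
end Bases

/-! ## Dominance, finiteness of small inner products, boundedness of bases -/

section Bound

variable [Fintype B]

namespace Cox

theorem bil_expand (M : CoxeterMatrix B) (x y : B → ℝ) : bil M x y = ∑ j, y j * bil M x (al j) := by
  conv_lhs => rw [sum_al y]
  simp

theorem dominance {s : B} {w : W} (h : IsBase cs s w) {β : B → ℝ} (hβ : IsRt cs β) (hp : Pos β)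
    (hb : 1 ≤ bil M (bt cs s w) β) {i : B} (hi : 0 < bt cs s w i) (hi' : β i ≤ bt cs s w i) :
    β = bt cs s w := by
  by_contra hne
  set γ := bt cs s w with hγ
  obtain ⟨r, hr⟩ := hβ.exists_refl
  have hwγ : rp cs w γ = al s := by rw [hγ, bt, rp_apply_inv]
  have hδ := hr.conj w
  set δ := rp cs w β with hδdef
  have hδb : 1 ≤ bil M (al s) δ := by rw [← hwγ, hδdef, rp_bil]; exact hb
  have hδne : δ ≠ al s := by
    intro he
    apply hne
    rw [← hwγ, hδdef] at he
    exact rp_inj cs w he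
  rcases hδ.isRt.pos_or with hδp | hδp
  · obtain ⟨j, hjs, hj⟩ := hδ.isRt.exists_ne hδp hδne
    have hγr := bt_refl cs s w
    obtain ⟨p, q, h1, h2, h3, hp0, hq0, hT⟩ := seq_exists hγr hr.neg (by
      rw [map_neg]; linarith)
    have hq : ∀ m, 0 < q (m+1) := fun m => lt_of_le_of_lt (h1 m).1 (h2 m)
    have hqm : StrictMono q := strictMono_nat_of_lt_succ h2
    set T := w⁻¹ * cs.simple s * w * r with hTdef
    have hTw : ∀ n, rp cs w (rp cs (T ^ n) γ) = p n • al s - q n • δ := by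
      intro n
      rw [hT n, map_add, map_smul, map_smul, hwγ, map_neg, smul_neg, sub_eq_add_neg]
    have hTj : ∀ n, rp cs w (rp cs (T ^ n) γ) j = - (q n * δ j) := by
      intro n
      rw [hTw n]; simp [al_ne hjs]
    refine (Set.infinite_of_injective_forall_mem (f := fun n : ℕ => rp cs (T ^ (n+1)) γ) ?_ ?_)
      (inversions_finite cs w)
    · intro n m hnm
      have e := congrArg (fun x => rp cs w x j) hnm
      simp only [hTj] at e
      have : q (n+1) = q (m+1) := by
        have : (q (n+1) - q (m+1)) * δ j = 0 := by linarith
        rcases mul_eq_zero.mp this with h | h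
        · linarith
        · linarith
      have := hqm.injective this
      omega
    · intro n
      have hR : IsRt cs (rp cs (T ^ (n+1)) γ) := (bt_isRt cs s w).rp _
      refine ⟨hR, ?_, ?_⟩
      · apply hR.pos_of_coeff (i := i)
        rw [hT (n+1)]
        simp only [Pi.add_apply, Pi.smul_apply, smul_eq_mul, Pi.neg_apply]
        have := h1 (n+1)
        have := hq n
        nlinarith
      · apply (hR.rp w).neg.pos_of_coeff (i := j)
        rw [Pi.neg_apply, hTj, neg_neg]
        have := hq n
        positivity
  · have hlt := length_lt_of_neg hr hp hδp
    have hfin := h.2 (w * r * w⁻¹) hδ.isReflection (by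
      have : w * r * w⁻¹ * w = w * r := by simp
      rw [this]; exact hlt)
    refine not_finOrder_of_bil (hasRefl_simple cs s) hδ.neg (by rw [map_neg]; linarith) ?_
      (finOrder_of_closure hfin)
    intro he
    exact hδne (neg_injective he)

/-- admissible functionals -/
def Adm (cs : CoxeterSystem M W) (F : (B → ℝ) →ₗ[ℝ] ℝ) : Prop :=
  {δ | IsRt cs δ ∧ Pos δ ∧ F δ ≤ 0}.Finite

/-- the sum of coordinates -/
noncomputable def sumc (B : Type*) [Fintype B] : (B → ℝ) →ₗ[ℝ] ℝ := ∑ i, LinearMap.proj i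

theorem sumc_apply (v : B → ℝ) : sumc B v = ∑ i, v i := by simp [sumc]

theorem sumc_pos {v : B → ℝ} (h : IsRt cs v) (hp : Pos v) : 1 ≤ sumc B v := by
  obtain ⟨i, hi⟩ := h.exists_one_le hp
  rw [sumc_apply]
  exact hi.trans (Finset.single_le_sum (f := v) (fun j _ => hp.nonneg j) (Finset.mem_univ i))

theorem adm_sumc (cs : CoxeterSystem M W) : Adm cs (sumc B) := by
  unfold Adm
  convert Set.finite_empty
  ext δ
  simp only [Set.mem_ofPred_eq, Set.mem_empty_iff_false, iff_false]
  rintro ⟨h1, h2, h3⟩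
  have := sumc_pos h1 h2
  linarith

theorem Adm.comp {F : (B → ℝ) →ₗ[ℝ] ℝ} (h : Adm cs F) (u : W) : Adm cs (F ∘ₗ rp cs u) := by
  refine ((inversions_finite cs u).union (h.image (rp cs u⁻¹))).subset ?_
  rintro δ ⟨h1, h2, h3⟩
  rcases (h1.rp u).pos_or with h | h
  · right
    exact ⟨rp cs u δ, ⟨h1.rp u, h, h3⟩, rp_inv_apply cs u δ⟩
  · left; exact ⟨h1, h2, h⟩

theorem Adm.add {F G : (B → ℝ) →ₗ[ℝ] ℝ} (h : Adm cs F) (h' : Adm cs G) {c : ℝ} (hc : 0 ≤ c) :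
    Adm cs (F + c • G) := by
  refine (Set.Finite.union h h').subset ?_
  rintro δ ⟨h1, h2, h3⟩
  simp only [LinearMap.add_apply, LinearMap.smul_apply, smul_eq_mul] at h3
  by_cases hF : F δ ≤ 0
  · left; exact ⟨h1, h2, hF⟩
  · right
    refine ⟨h1, h2, ?_⟩
    by_contra hG
    push Not at hF hG
    have := mul_nonneg hc hG.le
    linarith

theorem exists_double (β γ : B → ℝ) : ∀ (n : ℕ) (h : W) (x : ℝ), x < 2 → 2 / 2 ^ n ≤ 2 - x →
    (∀ y, y = β ∨ y = γ → rp cs h y + rp cs h⁻¹ y = x • y) →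
    ∃ (h : W) (x : ℝ), x ≤ 0 ∧ ∀ y, y = β ∨ y = γ → rp cs h y + rp cs h⁻¹ y = x • y := by
  intro n
  induction n with
  | zero =>
    intro h x hx h2 hy
    exact ⟨h, x, by norm_num at h2; linarith, hy⟩
  | succ n ih =>
    intro h x hx h2 hy
    by_cases hx0 : x ≤ 0
    · exact ⟨h, x, hx0, hy⟩
    push Not at hx0
    apply ih (h * h) (x ^ 2 - 2)
    · nlinarith
    · have e : (2 : ℝ) / 2 ^ n = 2 * (2 / 2 ^ (n+1)) := by rw [pow_succ]; field_simp
      rw [e]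
      nlinarith
    · intro y hyy
      have e := hy y hyy
      have e1 : rp cs (h * h) y + y = x • rp cs h y := by
        rw [← map_smul, ← e, map_add, rp_apply_inv, rp_mul]
      have e2 : y + rp cs (h * h)⁻¹ y = x • rp cs h⁻¹ y := by
        rw [← map_smul, ← e, map_add, rp_inv_apply, mul_inv_rev, rp_mul]
      have e3 : rp cs (h * h) y + rp cs (h * h)⁻¹ y = x • (rp cs h y + rp cs h⁻¹ y) - (2 : ℝ) • y := by
        rw [smul_add, ← e1, ← e2]; module
      rw [e3, e]; module

theorem exists_adm {β γ : B → ℝ} (hβ : IsRt cs β) (hγ : IsRt cs γ) (h1 : |bil M β γ| < 1) :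
    ∃ F, Adm cs F ∧ F β = 0 ∧ F γ = 0 := by
  obtain ⟨r, hr⟩ := hβ.exists_refl
  obtain ⟨r', hr'⟩ := hγ.exists_refl
  set a := bil M β γ with ha
  have ha' : bil M γ β = a := by rw [bil_symm]
  obtain ⟨h2, h3⟩ := abs_lt.mp h1
  have ha2 : a ^ 2 < 1 := by nlinarith
  have hpos : 0 < 2 - (4 * a ^ 2 - 2) := by linarith
  obtain ⟨n, hn⟩ : ∃ n : ℕ, 2 / 2 ^ n ≤ 2 - (4 * a ^ 2 - 2) := by
    obtain ⟨n, hn⟩ := exists_pow_lt_of_lt_one (half_pos hpos) (by norm_num : (1/2 : ℝ) < 1)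
    refine ⟨n, ?_⟩
    rw [one_div, inv_pow] at hn
    rw [div_eq_mul_inv]
    linarith
  obtain ⟨h, x, hx, hy⟩ := exists_double (cs := cs) β γ n (r * r') (4 * a ^ 2 - 2) (by linarith) hn (by
    intro y hy
    rw [mul_inv_rev, hr.inv, hr'.inv, rp_mul, rp_mul]
    rcases hy with rfl | rfl
    · simp only [hr.apply, hr'.apply, map_sub, map_smul, hr.isRt.bil_self, hr'.isRt.bil_self, ← ha, ha',
        smul_eq_mul]
      module
    · simp only [hr.apply, hr'.apply, map_sub, map_smul, hr.isRt.bil_self, hr'.isRt.bil_self, ← ha, ha',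
        smul_eq_mul]
      module)
  have hA : Adm cs (((sumc B) ∘ₗ rp cs h + (1 : ℝ) • ((sumc B) ∘ₗ rp cs h⁻¹)) + (-x) • sumc B) :=
    (((adm_sumc cs).comp h).add ((adm_sumc cs).comp h⁻¹) zero_le_one).add (adm_sumc cs) (by linarith)
  have hz : ∀ y, y = β ∨ y = γ →
      (((sumc B) ∘ₗ rp cs h + (1 : ℝ) • ((sumc B) ∘ₗ rp cs h⁻¹)) + (-x) • sumc B) y = 0 := by
    intro y hyy
    have e := congrArg (sumc B) (hy y hyy)
    rw [map_add, map_smul] at e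
    simp only [LinearMap.add_apply, LinearMap.smul_apply, LinearMap.comp_apply, smul_eq_mul, one_mul]
    simp only [smul_eq_mul] at e
    linarith
  exact ⟨_, hA, hz β (Or.inl rfl), hz γ (Or.inr rfl)⟩

theorem exists_dominant : ∀ (n : ℕ) (F : (B → ℝ) →ₗ[ℝ] ℝ), Adm cs F →
    {δ | IsRt cs δ ∧ Pos δ ∧ F δ < 0}.ncard = n → ∃ u, ∀ i, 0 ≤ F (rp cs u (al i)) := by
  intro n
  induction n using Nat.strong_induction_on with
  | _ n ih =>
  intro F hF hn
  by_cases hall : ∀ i, 0 ≤ F (al i)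
  · exact ⟨1, by simpa using hall⟩
  push Not at hall
  obtain ⟨i, hi⟩ := hall
  have hfin : {δ | IsRt cs δ ∧ Pos δ ∧ F δ < 0}.Finite := by
    refine Set.Finite.subset hF ?_
    rintro δ ⟨h1, h2, h3⟩
    exact ⟨h1, h2, h3.le⟩
  have hlt : {δ | IsRt cs δ ∧ Pos δ ∧ (F ∘ₗ rp cs (cs.simple i)) δ < 0}.ncard < n := by
    rw [← hn]
    have e1 : (rp cs (cs.simple i) '' {δ | IsRt cs δ ∧ Pos δ ∧ (F ∘ₗ rp cs (cs.simple i)) δ < 0}) ⊂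
        {δ | IsRt cs δ ∧ Pos δ ∧ F δ < 0} := by
      rw [Set.ssubset_iff_of_subset]
      · refine ⟨al i, ⟨IsRt.al cs i, pos_al i, hi⟩, ?_⟩
        rintro ⟨δ, ⟨h1, h2, h3⟩, h4⟩
        have : δ = - al i := by
          have := congrArg (rp cs (cs.simple i)) h4
          rw [← rp_mul, cs.simple_mul_simple_self, rp_al_self] at this
          simpa using this
        rw [this] at h2
        exact (IsRt.al cs i).not_pos_neg (pos_al i) h2
      · rintro _ ⟨δ, ⟨h1, h2, h3⟩, rfl⟩
        refine ⟨h1.rp _, ?_, h3⟩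
        rcases (h1.rp (cs.simple i)).pos_or with h | h
        · exact h
        · exfalso
          have := h1.eq_al_of_flip h2 h
          rw [this, LinearMap.comp_apply, rp_al_self, map_neg] at h3
          linarith
    have e2 := Set.ncard_lt_ncard e1 hfin
    rwa [Set.ncard_image_of_injective _ (fun x y hxy => rp_inj cs _ hxy)] at e2
  obtain ⟨u, hu⟩ := ih _ hlt (F ∘ₗ rp cs (cs.simple i)) (hF.comp _) rfl
  exact ⟨cs.simple i * u, fun j => by rw [rp_mul]; exact hu j⟩

/-- roots supported in `K` -/
def RK (cs : CoxeterSystem M W) (K : Set B) : Set (B → ℝ) := {δ | IsRt cs δ ∧ ∀ i, i ∉ K → δ i = 0}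

theorem small_values_finite (cs : CoxeterSystem M W) : ∃ V : Set ℝ, V.Finite ∧
    ∀ β γ, IsRt cs β → IsRt cs γ → |bil M β γ| < 1 → bil M β γ ∈ V := by
  refine ⟨⋃ (K : Set B) (_ : (RK cs K).Finite),
    (fun x : (B → ℝ) × (B → ℝ) => bil M x.1 x.2) '' (RK cs K ×ˢ RK cs K), ?_, ?_⟩
  · apply Set.finite_iUnion
    intro K
    apply Set.finite_iUnion
    intro hK
    exact (hK.prod hK).image _
  · intro β γ hβ hγ hb
    obtain ⟨F, hF, h1, h2⟩ := exists_adm hβ hγ hb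
    obtain ⟨u, hu⟩ := exists_dominant _ F hF rfl
    set G := F ∘ₗ rp cs u with hG
    have hGa : Adm cs G := hF.comp u
    have hGe : ∀ v, G v = ∑ i, v i * G (al i) := by
      intro v
      conv_lhs => rw [sum_al v]
      simp
    have hzero : ∀ δ, IsRt cs δ → G δ = 0 → ∀ i, i ∉ {i | G (al i) = 0} → δ i = 0 := by
      have main : ∀ δ, Pos δ → G δ = 0 → ∀ i, i ∉ {i | G (al i) = 0} → δ i = 0 := by
        intro δ hp h0 i hi
        rw [hGe] at h0
        have := (Finset.sum_eq_zero_iff_of_nonneg (fun j _ => mul_nonneg (hp.nonneg j) (hu j))).mp h0 i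
          (Finset.mem_univ i)
        rcases mul_eq_zero.mp this with h | h
        · exact h
        · exact absurd h hi
      intro δ hδ h0 i hi
      rcases hδ.pos_or with hp | hp
      · exact main δ hp h0 i hi
      · have := main (-δ) hp (by rw [map_neg, h0, neg_zero]) i hi
        simpa using this
    have hKz : ∀ δ, δ ∈ RK cs {i | G (al i) = 0} → G δ = 0 := by
      rintro δ ⟨_, hδ⟩
      rw [hGe]
      apply Finset.sum_eq_zero
      intro i _
      by_cases hi : G (al i) = 0
      · rw [hi, mul_zero]
      · rw [hδ i hi, zero_mul]
    have hKfin : (RK cs {i | G (al i) = 0}).Finite := by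
      refine (Set.Finite.union hGa (Set.Finite.image (fun x => -x) hGa)).subset ?_
      intro δ hδ
      have h0 := hKz δ hδ
      rcases hδ.1.pos_or with hp | hp
      · left; exact ⟨hδ.1, hp, h0.le⟩
      · right; exact ⟨-δ, ⟨hδ.1.neg, hp, by rw [map_neg, h0, neg_zero]⟩, by simp⟩
    simp only [Set.mem_iUnion]
    refine ⟨_, hKfin, (rp cs u⁻¹ β, rp cs u⁻¹ γ), ⟨⟨hβ.rp _, ?_⟩, ⟨hγ.rp _, ?_⟩⟩, rp_bil cs _ _ _⟩
    · exact hzero _ (hβ.rp _) (by rw [hG, LinearMap.comp_apply, rp_apply_inv, h1])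
    · exact hzero _ (hγ.rp _) (by rw [hG, LinearMap.comp_apply, rp_apply_inv, h2])

/-- state of a base -/
noncomputable def st (cs : CoxeterSystem M W) (s : B) (w : W) : B → ℝ :=
  fun t => max (bil M (bt cs s w) (al t)) (-1)

/-- growth relation -/
def Inv (cs : CoxeterSystem M W) (s : B) (a w : W) : Prop :=
  (∀ t, bt cs s a t ≤ bt cs s w t) ∧
  ∀ t, bil M (bt cs s a) (al t) ≤ -1 → bt cs s w t = bt cs s a t ∧ bil M (bt cs s w) (al t) ≤ -1

theorem st_ne {s : B} {a w : W} (ha : IsBase cs s a) (hw : IsBase cs s w) (hI : Inv cs s a w)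
    (hne : bt cs s a ≠ bt cs s w) : st cs s a ≠ st cs s w := by
  intro hst
  set v := bt cs s w - bt cs s a with hv
  have hvt : ∀ t, v t * bil M v (al t) = 0 := by
    intro t
    by_cases ht : bil M (bt cs s a) (al t) ≤ -1
    · have := (hI.2 t ht).1
      rw [hv, Pi.sub_apply, this, sub_self, zero_mul]
    · have e := congrFun hst t
      simp only [st] at e
      push Not at ht
      rw [max_eq_left ht.le] at e
      have : bil M (bt cs s w) (al t) = bil M (bt cs s a) (al t) := by
        rcases max_choice (bil M (bt cs s w) (al t)) (-1) with h | h
        · rw [h] at e; exact e.symm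
        · rw [h] at e; linarith
      rw [hv, map_sub, LinearMap.sub_apply, this, sub_self, mul_zero]
  have hvv : bil M v v = 0 := by
    rw [bil_expand]
    exact Finset.sum_eq_zero fun t _ => hvt t
  have hwv : bt cs s w = bt cs s a + v := by rw [hv]; abel
  have e1 := (bt_isRt cs s w).bil_self
  have e2 := (bt_isRt cs s a).bil_self
  rw [hwv] at e1
  simp only [map_add, LinearMap.add_apply, hvv, e2] at e1
  rw [bil_symm M v] at e1
  have e3 : bil M (bt cs s w) (bt cs s a) = 1 := by
    rw [hwv, map_add, LinearMap.add_apply, e2, bil_symm M v]; linarith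
  have hs : 0 < bt cs s w s := lt_of_le_of_ne ((base_pos hw).nonneg s) (Ne.symm (base_support hw).1)
  exact hne (dominance hw (bt_isRt cs s a) (base_pos ha) e3.ge hs (hI.1 s))

theorem inv_step {s q : B} {a w : W} (ha : IsBase cs s a) (hw : IsBase cs s w)
    (hb : bil M (bt cs s w) (al q) < 0) (hb' : -1 < bil M (bt cs s w) (al q)) (hI : Inv cs s a w) :
    Inv cs s a (w * cs.simple q) ∧ bt cs s a ≠ bt cs s (w * cs.simple q) := by
  refine ⟨⟨?_, ?_⟩, ?_⟩
  · intro t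
    by_cases ht : t = q
    · subst ht
      rw [bt_mul_apply_self]
      linarith [hI.1 t]
    · rw [bt_mul_apply_ne cs s w ht]; exact hI.1 t
  · intro t ht
    obtain ⟨h1, h2⟩ := hI.2 t ht
    have htq : t ≠ q := by rintro rfl; linarith
    refine ⟨by rw [bt_mul_apply_ne cs s w htq]; exact h1, ?_⟩
    rw [bt_mul, map_sub, map_smul, LinearMap.sub_apply, LinearMap.smul_apply, bil_al_al, smul_eq_mul]
    have := kk_nonpos (M := M) htq.symm
    nlinarith
  · intro he
    have := congrFun he q
    rw [bt_mul_apply_self] at this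
    linarith [hI.1 q]

theorem base_bounded (cs : CoxeterSystem M W) : ∃ N : ℕ, ∀ s w, IsBase cs s w → cs.length w ≤ N := by
  obtain ⟨V, hV, hV'⟩ := small_values_finite cs
  set V' : Set ℝ := V ∪ {1, -1} with hV'def
  have hV'fin : V'.Finite := hV.union (by simp)
  have hst : ∀ s w, IsBase cs s w → ∀ t, st cs s w t ∈ V' := by
    intro s w h t
    simp only [st]
    by_cases h1 : bil M (bt cs s w) (al t) ≤ -1
    · rw [max_eq_right h1]; right; simp
    push Not at h1
    rw [max_eq_left h1.le]
    by_cases h2 : bil M (bt cs s w) (al t) < 1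
    · left; exact hV' _ _ (bt_isRt cs s w) (IsRt.al cs t) (abs_lt.mpr ⟨h1, h2⟩)
    push Not at h2
    obtain ⟨i, hi⟩ := (bt_isRt cs s w).exists_one_le (base_pos h)
    have := dominance h (IsRt.al cs t) (pos_al t) h2 (i := i) (by linarith) (by
      refine le_trans ?_ hi
      by_cases hit : i = t
      · rw [hit, al_self]
      · rw [al_ne hit]; norm_num)
    right
    rw [this, (bt_isRt cs s w).bil_self]; simp
  have hfin : (Set.univ.pi (fun _ : B => V')).Finite := Set.Finite.pi fun _ => hV'fin
  refine ⟨hfin.toFinset.card, ?_⟩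
  intro s w hw
  suffices H : ∃ S : Finset (B → ℝ), S.card = cs.length w + 1 ∧ ∀ σ ∈ S, ∃ a, IsBase cs s a ∧
      σ = st cs s a ∧ Inv cs s a w by
    obtain ⟨S, hS1, hS2⟩ := H
    have : S ⊆ hfin.toFinset := by
      intro σ hσ
      obtain ⟨a, ha, rfl, _⟩ := hS2 σ hσ
      rw [Set.Finite.mem_toFinset]
      intro t _
      exact hst s a ha t
    have := Finset.card_le_card this
    omega
  classical
  revert w hw
  apply base_induction
  · refine ⟨{st cs s 1}, by simp, ?_⟩
    intro σ hσ
    rw [Finset.mem_singleton] at hσ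
    exact ⟨1, isBase_one cs s, hσ, fun t => le_rfl, fun t h => ⟨rfl, h⟩⟩
  · rintro w q hw hwq hl ⟨S, hS1, hS2⟩
    obtain ⟨_, hb, hb'⟩ := base_pred hwq hl
    refine ⟨insert (st cs s (w * cs.simple q)) S, ?_, ?_⟩
    · rw [Finset.card_insert_of_notMem, hS1, hl]
      intro hmem
      obtain ⟨a, ha, hσ, hI⟩ := hS2 _ hmem
      obtain ⟨h1, h2⟩ := inv_step ha hw hb hb' hI
      exact st_ne ha hwq h1 h2 hσ.symm
    · intro σ hσ
      rcases Finset.mem_insert.mp hσ with rfl | hσ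
      · exact ⟨_, hwq, rfl, fun t => le_rfl, fun t h => ⟨rfl, h⟩⟩
      · obtain ⟨a, ha, hσ, hI⟩ := hS2 _ hσ
        exact ⟨a, ha, hσ, (inv_step ha hw hb hb' hI).1⟩

end Cox
end Bound

/-! ## The shadow of a base is spherical -/

section Shadow

variable [Fintype B]

namespace Cox

theorem exists_word {J : Set B} {u : W} (hu : u ∈ Subgroup.closure (cs.simple '' J)) :
    ∃ ω : List B, (∀ x ∈ ω, x ∈ J) ∧ cs.wordProd ω = u := by
  induction hu using Subgroup.closure_induction with
  | mem x hx =>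
    obtain ⟨j, hj, rfl⟩ := hx
    exact ⟨[j], by simpa using hj, by simp⟩
  | one => exact ⟨[], by simp, by simp⟩
  | mul x y _ _ hx hy =>
    obtain ⟨a, ha, rfl⟩ := hx
    obtain ⟨b, hb, rfl⟩ := hy
    refine ⟨a ++ b, ?_, by rw [cs.wordProd_append]⟩
    intro x hx
    rcases List.mem_append.mp hx with h | h
    · exact ha x h
    · exact hb x h
  | inv x _ hx =>
    obtain ⟨a, ha, rfl⟩ := hx
    exact ⟨a.reverse, fun x hx => ha x (List.mem_reverse.mp hx), by rw [cs.wordProd_reverse]⟩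

theorem word_mem {J : Set B} : ∀ (ω : List B), (∀ x ∈ ω, x ∈ J) →
    cs.wordProd ω ∈ Subgroup.closure (cs.simple '' J) := by
  intro ω
  induction ω with
  | nil => intro _; simpa using Subgroup.one_mem _
  | cons i ω ih =>
    intro h
    rw [cs.wordProd_cons]
    exact Subgroup.mul_mem _ (Subgroup.subset_closure ⟨i, h i (by simp), rfl⟩)
      (ih fun x hx => h x (by simp [hx]))

theorem spherical_of_posdef (cs : CoxeterSystem M W) (I : Set B)
    (hpd : ∀ y : B → ℝ, (∀ i, i ∉ I → y i = 0) → y ≠ 0 → 0 < bil M y y) : Spherical cs I := by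
  classical
  have hpd0 : ∀ y : B → ℝ, (∀ i, i ∉ I → y i = 0) → 0 ≤ bil M y y := by
    intro y hy
    by_cases h0 : y = 0
    · rw [h0]; simp
    · exact (hpd y hy h0).le
  let Ψ : (B → ℝ) →ₗ[ℝ] (B → ℝ) := LinearMap.pi fun j =>
    if j ∈ I then (bil M).flip (al j) else LinearMap.proj j
  have hΨ1 : ∀ v j, j ∈ I → Ψ v j = bil M v (al j) := by
    intro v j hj; simp [Ψ, hj]
  have hΨ2 : ∀ v j, j ∉ I → Ψ v j = v j := by
    intro v j hj; simp [Ψ, hj]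
  have hinj : Function.Injective Ψ := by
    rw [injective_iff_map_eq_zero]
    intro v hv
    by_contra hne
    have hs : ∀ i, i ∉ I → v i = 0 := by
      intro i hi
      rw [← hΨ2 v i hi, hv]; rfl
    have h1 := hpd v hs hne
    rw [bil_expand] at h1
    have : ∑ j, v j * bil M v (al j) = 0 := by
      apply Finset.sum_eq_zero
      intro j _
      by_cases hj : j ∈ I
      · rw [← hΨ1 v j hj, hv]; simp
      · rw [hs j hj, zero_mul]
    linarith
  obtain ⟨ρ, hρ⟩ := LinearMap.injective_iff_surjective.mp hinj (fun j => if j ∈ I then 1 else 0)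
  have hρs : ∀ i, i ∉ I → ρ i = 0 := by
    intro i hi
    rw [← hΨ2 ρ i hi, hρ]; simp [hi]
  have hρ1 : ∀ i, i ∈ I → bil M ρ (al i) = 1 := by
    intro i hi
    rw [← hΨ1 ρ i hi, hρ]; simp [hi]
  have hsum : ∀ y : B → ℝ, (∀ i, i ∉ I → y i = 0) → bil M ρ y = sumc B y := by
    intro y hy
    rw [bil_expand, sumc_apply]
    apply Finset.sum_congr rfl
    intro j _
    by_cases hj : j ∈ I
    · rw [hρ1 j hj, mul_one]
    · rw [hy j hj, zero_mul]
  set R := bil M ρ ρ with hR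
  let Mn : List B → Prop := fun ω => ∀ ω', (∀ x ∈ ω', x ∈ I) → cs.wordProd ω' = cs.wordProd ω →
    ω.length ≤ ω'.length
  have hlow : ∀ ω : List B, (∀ x ∈ ω, x ∈ I) → Mn ω →
      2 * (ω.length : ℝ) ≤ sumc B (ρ - rp cs (cs.wordProd ω) ρ) := by
    intro ω
    induction ω using List.reverseRecOn with
    | nil => intro _ _; simp
    | append_singleton ω j ih =>
      intro hI hM
      have hIω : ∀ x ∈ ω, x ∈ I := fun x hx => hI x (by simp [hx])
      have hj : j ∈ I := hI j (by simp)
      have hMω : Mn ω := by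
        intro ω' h1 h2
        have := hM (ω' ++ [j]) (by
          intro x hx
          rcases List.mem_append.mp hx with h | h
          · exact h1 x h
          · rw [List.mem_singleton] at h; rw [h]; exact hj) (by
          rw [cs.wordProd_append, cs.wordProd_append, h2])
        simpa using this
      have h1 := ih hIω hMω
      have hroot : IsRt cs (rp cs (cs.wordProd ω) (al j)) := (IsRt.al cs j).rp _
      have hpos : Pos (rp cs (cs.wordProd ω) (al j)) := by
        rcases hroot.pos_or with h | h
        · exact h
        · exfalso
          obtain ⟨l, hl, he⟩ := exchange (hasRefl_simple cs j) (pos_al j) ω h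
          have := hM (ω.eraseIdx l) (fun x hx => hIω x (List.mem_of_mem_eraseIdx hx)) (by
            rw [cs.wordProd_append, cs.wordProd_singleton, he])
          rw [List.length_eraseIdx_of_lt hl, List.length_append] at this
          simp at this
          omega
      have h2 := sumc_pos hroot hpos
      have e : ρ - rp cs (cs.wordProd (ω ++ [j])) ρ =
          (ρ - rp cs (cs.wordProd ω) ρ) + (2 : ℝ) • rp cs (cs.wordProd ω) (al j) := by
        rw [cs.wordProd_append, cs.wordProd_singleton, rp_mul, rp_simple, rf_apply, bil_symm, hρ1 j hj,
          map_sub, map_smul]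
        module
      rw [e, map_add, map_smul, smul_eq_mul, List.length_append]
      push_cast
      simp only [List.length_cons, List.length_nil]
      push_cast
      linarith
  have hup : ∀ u ∈ Subgroup.closure (cs.simple '' I), sumc B (ρ - rp cs u ρ) ≤ 2 * R := by
    intro u hu
    have hus := supp_closure hu hρs
    rw [← hsum _ (fun i hi => by rw [Pi.sub_apply, hρs i hi, hus i hi, sub_zero])]
    have h1 := hpd0 (ρ + rp cs u ρ) (fun i hi => by rw [Pi.add_apply, hρs i hi, hus i hi, add_zero])
    simp only [map_add, LinearMap.add_apply, rp_bil, ← hR] at h1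
    rw [bil_symm M (rp cs u ρ)] at h1
    rw [map_sub, ← hR]
    linarith
  obtain ⟨N, hN⟩ := exists_nat_ge R
  refine ((List.finite_length_le B N).image cs.wordProd).subset ?_
  intro u hu
  have hex : ∃ n, ∃ ω : List B, (∀ x ∈ ω, x ∈ I) ∧ cs.wordProd ω = u ∧ ω.length = n := by
    obtain ⟨ω, h1, h2⟩ := exists_word hu
    exact ⟨_, ω, h1, h2, rfl⟩
  obtain ⟨ω, h1, h2, h3⟩ := Nat.find_spec hex
  have hM : Mn ω := by
    intro ω' h1' h2'
    rw [h3]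
    exact Nat.find_min' hex ⟨ω', h1', h2'.trans h2, rfl⟩
  refine ⟨ω, ?_, h2⟩
  have a := hlow ω h1 hM
  rw [h2] at a
  have b := hup u hu
  have : (ω.length : ℝ) ≤ N := by linarith
  show ω.length ≤ N
  exact_mod_cast this

theorem shadow_spherical {s : B} {w : W} (h : IsBase cs s w) :
    Spherical cs {i | bt cs s w i ≠ 0 ∧ 0 ≤ bil M (bt cs s w) (al i)} := by
  apply spherical_of_posdef
  intro y hy hy0
  set c := bt cs s w with hc
  have hcp : Pos c := base_pos h
  by_contra hcon
  push Not at hcon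
  set z : B → ℝ := fun i => y i / c i with hz
  have hyz : ∀ i, y i = z i * c i := by
    intro i
    by_cases hi : c i = 0
    · rw [hi, mul_zero]
      apply hy
      rintro ⟨h1, _⟩
      exact h1 hi
    · rw [hz]; field_simp
  have hid : bil M y y = ∑ i, z i ^ 2 * c i * bil M c (al i) +
      ∑ i, ∑ j, (-(1/2) * kk M i j * c i * c j * (z i - z j) ^ 2) := by
    have e1 : ∑ i, z i ^ 2 * c i * bil M c (al i) = ∑ i, ∑ j, z i ^ 2 * c i * c j * kk M i j := by
      apply Finset.sum_congr rfl
      intro i _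
      rw [bil_al_right, Finset.mul_sum]
      apply Finset.sum_congr rfl
      intro j _
      rw [kk_symm M j i]; ring
    have e2 : ∑ i, z i ^ 2 * c i * bil M c (al i) = ∑ i, ∑ j, z j ^ 2 * c i * c j * kk M i j := by
      rw [Finset.sum_comm]
      apply Finset.sum_congr rfl
      intro i _
      rw [bil_al_right, Finset.mul_sum]
      apply Finset.sum_congr rfl
      intro j _
      ring
    have e3 : ∑ i, z i ^ 2 * c i * bil M c (al i) =
        (1/2) * (∑ i, ∑ j, z i ^ 2 * c i * c j * kk M i j) +
        (1/2) * (∑ i, ∑ j, z j ^ 2 * c i * c j * kk M i j) := by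
      rw [← e1, ← e2]; ring
    rw [e3, bil_def, Finset.mul_sum, Finset.mul_sum, ← Finset.sum_add_distrib, ← Finset.sum_add_distrib]
    apply Finset.sum_congr rfl
    intro i _
    rw [Finset.mul_sum, Finset.mul_sum, ← Finset.sum_add_distrib, ← Finset.sum_add_distrib]
    apply Finset.sum_congr rfl
    intro j _
    rw [hyz i, hyz j]; ring
  have t1 : 0 ≤ ∑ i, z i ^ 2 * c i * bil M c (al i) := by
    apply Finset.sum_nonneg
    intro i _
    by_cases hi : c i ≠ 0 ∧ 0 ≤ bil M c (al i)
    · exact mul_nonneg (mul_nonneg (sq_nonneg _) (hcp.nonneg i)) hi.2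
    · have : z i = 0 := by rw [hz]; simp only; rw [hy i hi, zero_div]
      rw [this]; simp
  have t2 : ∀ i j, 0 ≤ -(1/2) * kk M i j * c i * c j * (z i - z j) ^ 2 := by
    intro i j
    by_cases hij : i = j
    · subst hij; simp
    · have h1 := kk_nonpos (M := M) hij
      have h2 : 0 ≤ -(1/2) * kk M i j := by linarith
      exact mul_nonneg (mul_nonneg (mul_nonneg h2 (hcp.nonneg i)) (hcp.nonneg j)) (sq_nonneg _)
  have t3 : ∑ i, ∑ j, (-(1/2) * kk M i j * c i * c j * (z i - z j) ^ 2) = 0 := by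
    apply le_antisymm
    · linarith
    · exact Finset.sum_nonneg fun i _ => Finset.sum_nonneg fun j _ => t2 i j
  have t4 : ∀ i j, -(1/2) * kk M i j * c i * c j * (z i - z j) ^ 2 = 0 := by
    intro i j
    have a := (Finset.sum_eq_zero_iff_of_nonneg (fun i _ => Finset.sum_nonneg fun j _ => t2 i j)).mp t3 i
      (Finset.mem_univ i)
    exact (Finset.sum_eq_zero_iff_of_nonneg (fun j _ => t2 i j)).mp a j (Finset.mem_univ j)
  have hconst : ∀ i, c i ≠ 0 → z i = z s := by
    by_contra hne
    push Not at hne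
    obtain ⟨i, hi, hiz⟩ := hne
    apply base_irred h
    refine ⟨{k | c k ≠ 0 ∧ z k = z s}, {k | c k ≠ 0 ∧ z k ≠ z s}, ⟨s, (base_support h).1, rfl⟩,
      ⟨i, hi, hiz⟩, ?_, ?_, ?_⟩
    · rw [Set.disjoint_left]
      rintro k ⟨_, h1⟩ ⟨_, h2⟩
      exact h2 h1
    · ext k
      simp only [Set.mem_union, Set.mem_ofPred_eq]
      tauto
    · rintro k ⟨hk, hkz⟩ l ⟨hl, hlz⟩
      by_contra hcm
      have h1 := (kk_neg_of_not_commute hcm).2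
      have h2 := t4 k l
      have h3 : z k - z l ≠ 0 := by rw [hkz]; exact sub_ne_zero.mpr (Ne.symm hlz)
      have h4 : -(1/2) * kk M k l ≠ 0 := by
        intro h; linarith
      exact (mul_ne_zero (mul_ne_zero (mul_ne_zero h4 hk) hl) (pow_ne_zero 2 h3)) h2
  have hy' : y = z s • c := by
    ext i
    rw [hyz i, Pi.smul_apply, smul_eq_mul]
    by_cases hi : c i = 0
    · rw [hi, mul_zero, mul_zero]
    · rw [hconst i hi]
  rw [hy', map_smul, map_smul, LinearMap.smul_apply, (bt_isRt cs s w).bil_self] at hcon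
  simp only [smul_eq_mul, mul_one] at hcon
  have : z s = 0 := by nlinarith [mul_self_nonneg (z s)]
  apply hy0
  rw [hy', this, zero_smul]

end Cox
end Shadow

/-! ## The main argument -/

section MainArg

namespace Cox

theorem sph_mono {J K : Set B} (h : Spherical cs K) (hJK : J ⊆ K) : Spherical cs J :=
  Set.Finite.subset h (Subgroup.closure_mono (Set.image_mono hJK))

/-- the conclusion of the main theorem -/
def Concl (μ : Marking cs) : Prop :=
    ∃ (n : ℕ) (f : ℕ → Marking cs),
      f 0 = μ ∧
      (∀ i < n, (f i).Complete) ∧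
      (∀ i < n, (MoveM1 (f i) (f (i + 1)) ∨ MoveM2 (f i) (f (i + 1))) ∨
        (MoveM4 (f i) (f (i + 1)) ∧ i + 1 = n)) ∧
      (f n).SemiComplete ∧ μ.supp ⊆ (f n).supp

theorem concl_of_semi {μ : Marking cs} (h : μ.SemiComplete) : Concl μ :=
  ⟨0, fun _ => μ, rfl, by simp, by simp, h, subset_rfl⟩

theorem concl_step {μ μ' : Marking cs} (hc : μ.Complete) (hm : MoveM1 μ μ' ∨ MoveM2 μ μ')
    (hsub : μ.supp ⊆ μ'.supp) (h : Concl μ') : Concl μ := by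
  obtain ⟨n, f, h0, h1, h2, h3, h4⟩ := h
  refine ⟨n + 1, fun i => Nat.casesOn i μ f, rfl, ?_, ?_, h3, hsub.trans h4⟩
  · intro i hi
    cases i with
    | zero => exact hc
    | succ i => exact h1 i (by omega)
  · intro i hi
    cases i with
    | zero =>
      left
      show MoveM1 μ (f 0) ∨ MoveM2 μ (f 0)
      rw [h0]; exact hm
    | succ i =>
      rcases h2 i (by omega) with h | ⟨h, h'⟩
      · left; exact h
      · right; exact ⟨h, by omega⟩

theorem irr_insert {J : Set B} (hJ : IrreducibleSubset cs J) {q : B} (hq : q ∉ perpIn cs Set.univ J) :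
    IrreducibleSubset cs (J ∪ {q}) := by
  by_cases hqJ : q ∈ J
  · rw [Set.union_eq_left.mpr (Set.singleton_subset_iff.mpr hqJ)]
    exact hJ
  have main : ∀ K L : Set B, K.Nonempty → K ∪ L = J ∪ {q} →
      (∀ k ∈ K, ∀ l ∈ L, Commute (cs.simple k) (cs.simple l)) → (K ∩ J).Nonempty := by
    intro K L hK hu hc
    by_contra hcon
    have hKJ : ∀ k ∈ K, k ∉ J := fun k hk hkJ => hcon ⟨k, hk, hkJ⟩
    obtain ⟨k, hk⟩ := hK
    have hkq : k = q := by
      have : k ∈ J ∪ {q} := by rw [← hu]; exact Or.inl hk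
      rcases this with h | h
      · exact absurd h (hKJ k hk)
      · exact h
    subst hkq
    apply hq
    refine ⟨⟨Set.mem_univ _, hqJ⟩, ?_⟩
    intro j hj
    have : j ∈ K ∪ L := by rw [hu]; exact Or.inl hj
    rcases this with h | h
    · exact absurd hj (hKJ j h)
    · exact hc k hk j h
  rintro ⟨K, L, hK, hL, hd, hu, hc⟩
  apply hJ
  refine ⟨K ∩ J, L ∩ J, main K L hK hu hc,
    main L K hL (by rw [Set.union_comm]; exact hu) (fun k hk l hl => (hc l hl k hk).symm), ?_, ?_, ?_⟩
  · exact hd.mono Set.inter_subset_left Set.inter_subset_left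
  · rw [← Set.union_inter_distrib_right, hu]
    exact Set.inter_eq_right.mpr Set.subset_union_left
  · intro k hk l hl
    exact hc k hk.1 l hl.1

/-- change of marker -/
def remark (μ : Marking cs) (p : B) (hp : p ∉ perpIn cs Set.univ μ.supp) : Marking cs where
  core := μ.core
  elt := μ.elt
  marker := p
  supp := μ.supp
  isBase := μ.isBase
  isSupport := μ.isSupport
  marker_not_perp := hp

theorem adjacent_of_commute [Fintype B] {i j : B} (h : Commute (cs.simple i) (cs.simple j)) :
    Adjacent cs i j := by
  apply adjacent_of_ne_zero
  by_cases hij : i = j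
  · subst hij; simp
  · rw [kk_eq_zero hij (kk_of_commute hij h)]; norm_num

theorem bil_neg_of [Fintype B] {α : B → ℝ} (hp : Pos α) {m j : B} (hm : α m = 0) (hj : α j ≠ 0)
    (hjm : kk M j m < 0) : bil M α (al m) < 0 := by
  rw [bil_al_right]
  have hj1 : 1 ≤ α j := by
    rcases hp j with h | h
    · exact absurd h hj
    · exact h
  classical
  rw [← Finset.add_sum_erase _ _ (Finset.mem_univ j)]
  have : ∑ x ∈ Finset.univ.erase j, α x * kk M x m ≤ 0 := by
    apply Finset.sum_nonpos
    intro x _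
    by_cases hx : x = m
    · rw [hx, hm]; simp
    · exact mul_nonpos_of_nonneg_of_nonpos (hp.nonneg x) (kk_nonpos hx)
  nlinarith

theorem complete_of_nonadj [Fintype B] {s p j : B} {w : W} (h : IsBase cs s w)
    (hp : bt cs s w p = 0) (hj : bt cs s w j ≠ 0) (hpj : ¬ Adjacent cs p j) :
    ¬ IsOfFinOrder (cs.simple s * (w * cs.simple p * w⁻¹)) := by
  apply base_inf h
  apply bil_le_neg_one (base_pos h) hp hj
  by_contra h0
  rw [M.symmetric] at h0
  exact hpj (adjacent_of_ne_zero cs h0)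

theorem main_aux [Fintype B] (hTR : TwistRigidIn cs Set.univ) (N : ℕ)
    (hN : ∀ s w, IsBase cs s w → cs.length w ≤ N) : ∀ (k : ℕ) (μ : Marking cs),
    N - cs.length μ.elt = k → μ.Complete → ¬ Spherical cs μ.supp → Concl μ := by
  intro k
  induction k using Nat.strong_induction_on with
  | _ k ih =>
  intro μ hk hμ hns
  have hJ := support_eq μ.isBase μ.isSupport
  have hJ2 : TwoSpherical cs μ.supp := by rw [hJ]; exact base_twoSpherical μ.isBase
  have hJi : IrreducibleSubset cs μ.supp := by rw [hJ]; exact base_irred μ.isBase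
  have hJmem : ∀ i, i ∈ μ.supp ↔ bt cs μ.core μ.elt i ≠ 0 := by
    intro i
    constructor
    · intro h; rw [hJ] at h; exact h
    · intro h; rw [hJ]; exact h
  have hap := base_pos μ.isBase
  have semi : ∀ q, q ∉ perpIn cs Set.univ μ.supp → (∀ j ∈ μ.supp, Adjacent cs q j) →
      IrreducibleSubset cs (μ.supp ∪ {q}) ∧ TwoSpherical cs (μ.supp ∪ {q}) ∧
        ¬ Spherical cs (μ.supp ∪ {q}) := by
    intro q hq hadj
    refine ⟨irr_insert hJi hq, ?_, fun h => hns (sph_mono h Set.subset_union_left)⟩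
    rintro i (hi | rfl) j (hj | rfl)
    · exact hJ2 i hi j hj
    · exact adjacent_symm (hadj i hi)
    · exact hadj j hj
    · exact adjacent_self cs _
  by_cases hadj : ∀ j ∈ μ.supp, Adjacent cs μ.marker j
  · exact concl_of_semi (semi _ μ.marker_not_perp hadj)
  push Not at hadj
  obtain ⟨j0, hj0, hmj0⟩ := hadj
  have hmJ : μ.marker ∉ μ.supp := fun h => hmj0 (hJ2 _ h _ hj0)
  -- maximal spherical subset containing the shadow
  set I : Set B := {i | bt cs μ.core μ.elt i ≠ 0 ∧ 0 ≤ bil M (bt cs μ.core μ.elt) (al i)} with hI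
  have hIs : Spherical cs I := shadow_spherical μ.isBase
  have hIJ : I ⊆ μ.supp := fun i hi => (hJmem i).mpr hi.1
  obtain ⟨K, hIK, hKmax⟩ := (Set.toFinite {K : Set B | K ⊆ μ.supp ∧ Spherical cs K}).exists_le_maximal
    (a := I) ⟨hIJ, hIs⟩
  have hKJ : K ⊆ μ.supp := hKmax.prop.1
  have hKs : Spherical cs K := hKmax.prop.2
  have hKM : MaximalSphericalIn cs K μ.supp := by
    refine ⟨hKJ, hKs, fun L h1 h2 h3 => ?_⟩
    exact Set.Subset.antisymm (hKmax.le_of_ge ⟨h2, h3⟩ h1) h1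
  by_cases hcomm : ∀ k ∈ K, Commute (cs.simple μ.marker) (cs.simple k)
  · -- move M4
    have hsJ : μ.core ∈ μ.supp := μ.isSupport.1
    have hsp : μ.core ∉ perpIn cs Set.univ μ.supp := fun h => h.1.2 hsJ
    have hu : μ.supp ∪ {μ.core} = μ.supp := Set.union_eq_left.mpr (Set.singleton_subset_iff.mpr hsJ)
    refine ⟨1, fun i => Nat.casesOn i μ (fun _ => remark μ μ.core hsp), rfl, ?_, ?_, ?_, subset_rfl⟩
    · intro i hi
      obtain rfl : i = 0 := by omega
      exact hμ
    · intro i hi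
      obtain rfl : i = 0 := by omega
      right
      exact ⟨⟨rfl, hμ, ⟨K, hKM, hcomm⟩, hu.symm⟩, rfl⟩
    · exact semi μ.core hsp (fun j hj => hJ2 _ hsJ _ hj)
  push Not at hcomm
  obtain ⟨k0, hk0, hmk0⟩ := hcomm
  set L : Set B := {x | Relation.ReflTransGen (fun a b => a ∈ K ∧ b ∈ K ∧
    ¬ Commute (cs.simple a) (cs.simple b)) k0 x} with hL
  have hk0L : k0 ∈ L := Relation.ReflTransGen.refl
  have hLK : L ⊆ K := by
    intro x hx
    rcases Relation.ReflTransGen.cases_tail hx with h | ⟨y, _, h⟩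
    · rw [h]; exact hk0
    · exact h.2.1
  have hLcomm : ∀ x ∈ K, x ∉ L → ∀ y ∈ L, Commute (cs.simple x) (cs.simple y) := by
    intro x hx hxL y hy
    by_contra hc
    exact hxL (Relation.ReflTransGen.tail hy ⟨hLK hy, hx, fun h => hc h.symm⟩)
  have hLi : IrreducibleSubset cs L := by
    have main : ∀ P Q : Set B, Q.Nonempty → Disjoint P Q → P ∪ Q = L →
        (∀ p ∈ P, ∀ q ∈ Q, Commute (cs.simple p) (cs.simple q)) → k0 ∈ P → False := by
      intro P Q hQ hd hu hc hk
      obtain ⟨q, hq⟩ := hQ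
      have hall : ∀ x, x ∈ L → x ∈ P := by
        intro x hx
        have hx' : Relation.ReflTransGen (fun a b => a ∈ K ∧ b ∈ K ∧
          ¬ Commute (cs.simple a) (cs.simple b)) k0 x := hx
        clear hx
        induction hx' with
        | refl => exact hk
        | tail hab hbc ihb =>
          rename_i b c
          have : c ∈ P ∪ Q := by rw [hu]; exact Relation.ReflTransGen.tail hab hbc
          rcases this with h | h
          · exact h
          · exact absurd (hc b ihb c h) hbc.2.2
      exact Set.disjoint_left.mp hd (hall q (by rw [← hu]; exact Or.inr hq)) hq
    rintro ⟨P, Q, hP, hQ, hd, hu, hc⟩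
    have : k0 ∈ P ∪ Q := by rw [hu]; exact hk0L
    rcases this with h | h
    · exact main P Q hQ hd hu hc h
    · exact main Q P hP hd.symm (by rw [Set.union_comm]; exact hu)
        (fun p hp q hq => (hc q hq p hp).symm) h
  have hLs : Spherical cs L := sph_mono hKs hLK
  have hLJ : L ⊆ μ.supp := hLK.trans hKJ
  have hcon := hTR L (Set.subset_univ _) hLi hLs
  obtain ⟨t, htJ, htL⟩ : ∃ t ∈ μ.supp, t ∉ L ∪ perpIn cs Set.univ L := by
    by_contra hno
    push Not at hno
    apply hJi
    refine ⟨L, μ.supp \ L, ⟨k0, hk0L⟩, ?_, Set.disjoint_sdiff_right, Set.union_sdiff_cancel hLJ, ?_⟩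
    · by_contra hemp
      rw [Set.not_nonempty_iff_eq_empty, Set.sdiff_eq_empty] at hemp
      exact hns (sph_mono hLs hemp)
    · intro l hl x hx
      rcases hno x hx.1 with h | h
      · exact absurd h hx.2
      · exact (h.2 l hl).symm
  have hmT : μ.marker ∈ Set.univ \ (L ∪ perpIn cs Set.univ L) := by
    refine ⟨Set.mem_univ _, ?_⟩
    rintro (h | h)
    · exact hmJ (hLJ h)
    · exact hmk0 (h.2 k0 hk0L)
  have hpath := hcon _ hmT t ⟨Set.mem_univ _, htL⟩
  have walk : ∀ p, Relation.ReflTransGen (fun x y => x ∈ Set.univ \ (L ∪ perpIn cs Set.univ L) ∧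
      y ∈ Set.univ \ (L ∪ perpIn cs Set.univ L) ∧ Adjacent cs x y) p t →
      (∃ j ∈ μ.supp, ¬ Adjacent cs p j) → ∀ hp : p ∉ perpIn cs Set.univ μ.supp,
      (remark μ p hp).Complete → Concl (remark μ p hp) := by
    intro p hpt
    induction hpt using Relation.ReflTransGen.head_induction_on with
    | refl =>
      rintro ⟨j, hj, hadj⟩
      exact absurd (hJ2 _ htJ _ hj) hadj
    | head hpq hrest ihq =>
      rename_i p q
      rintro ⟨j, hj, hpj⟩ hp hpc
      have hqT := hpq.2.1.2
      have hqp : q ∉ perpIn cs Set.univ μ.supp := by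
        intro h
        apply hqT
        right
        exact ⟨⟨Set.mem_univ _, fun hqL => h.1.2 (hLJ hqL)⟩, fun l hl => h.2 l (hLJ hl)⟩
      have hpJ : p ∉ μ.supp := fun h => hpj (hJ2 _ h _ hj)
      by_cases hqa : ∃ j ∈ μ.supp, ¬ Adjacent cs q j
      · have hqc : (remark μ q hqp).Complete := by
          obtain ⟨j', hj', hqj'⟩ := hqa
          refine complete_of_nonadj μ.isBase ?_ ((hJmem j').mp hj') hqj'
          by_contra h0
          exact hqj' (hJ2 _ ((hJmem q).mpr h0) _ hj')
        exact concl_step (μ' := remark μ q hqp) hpc (Or.inl ⟨rfl, rfl, hpq.2.2, hpc, hqc⟩) subset_rfl (ihq hqa hqp hqc)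
      push Not at hqa
      by_cases hqc : (remark μ q hqp).Complete
      · exact concl_step (μ' := remark μ q hqp) hpc (Or.inl ⟨rfl, rfl, hpq.2.2, hpc, hqc⟩) subset_rfl
          (concl_of_semi (semi q hqp hqa))
      -- extend the base
      have hqb : bil M (bt cs μ.core μ.elt) (al q) < 0 := by
        by_cases hqJ : q ∈ μ.supp
        · by_contra h0
          push Not at h0
          have hqK : q ∈ K := hIK ⟨(hJmem q).mp hqJ, h0⟩
          apply hqT
          by_cases hqL : q ∈ L
          · exact Or.inl hqL
          · exact Or.inr ⟨⟨Set.mem_univ _, hqL⟩, hLcomm q hqK hqL⟩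
        · have hq0 : bt cs μ.core μ.elt q = 0 := by
            by_contra h0
            exact hqJ ((hJmem q).mpr h0)
          obtain ⟨j', hj', hc⟩ : ∃ j' ∈ μ.supp, ¬ Commute (cs.simple q) (cs.simple j') := by
            by_contra hno
            push Not at hno
            exact hqp ⟨⟨Set.mem_univ _, hqJ⟩, hno⟩
          apply bil_neg_of hap hq0 ((hJmem j').mp hj')
          rw [kk_symm]
          exact (kk_neg_of_not_commute hc).2
      have hqf : IsOfFinOrder (cs.simple μ.core * (μ.elt * cs.simple q * μ.elt⁻¹)) := by
        by_contra h0
        exact hqc h0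
      obtain ⟨hb, hlen⟩ := base_ext μ.isBase hqb hqf
      have hsup : IsSupport cs μ.core (μ.elt * cs.simple q) (μ.supp ∪ {q}) := by
        have := base_support hb
        rwa [base_support_step μ.isBase hqb, ← hJ] at this
      have hpq' : p ≠ q := by
        rintro rfl
        exact hpj (hqa j hj)
      have hp' : p ∉ perpIn cs Set.univ (μ.supp ∪ {q}) := by
        intro h
        exact hpj (adjacent_of_commute (h.2 j (Or.inl hj)))
      let ν : Marking cs :=
        { core := μ.core
          elt := μ.elt * cs.simple q
          marker := p
          supp := μ.supp ∪ {q}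
          isBase := hb
          isSupport := hsup
          marker_not_perp := hp' }
      have hνc : ν.Complete := by
        refine complete_of_nonadj (p := p) (j := j) hb ?_ ?_ hpj
        · rw [bt_mul_apply_ne cs _ _ hpq']
          by_contra h0
          exact hpJ ((hJmem p).mpr h0)
        · have : j ∈ μ.supp ∪ {q} := Or.inl hj
          rw [support_eq hb hsup] at this
          exact this
      refine concl_step (μ' := ν) hpc (Or.inr ⟨rfl, rfl, q, Or.inr rfl, hpq.2.2⟩)
        Set.subset_union_left ?_
      refine ih (N - cs.length ν.elt) ?_ ν rfl hνc (fun h => hns (sph_mono h Set.subset_union_left))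
      have h1 := hN _ _ hb
      have h2 : cs.length ν.elt = cs.length μ.elt + 1 := hlen
      have h3 : cs.length ν.elt ≤ N := h1
      omega
  exact walk μ.marker hpath ⟨j0, hj0, hmj0⟩ μ.marker_not_perp hμ

end Cox
end MainArg

/-- If `S` is twist-rigid and `μ` is a complete marking with non-spherical
support `J`, then `μ` can be connected, through complete markings and moves M1, M2, M4 (with
M4 occurring at most once, as the last step), to a semi-complete marking whose support
contains `J`. -/
theorem connecting_complete_to_semicomplete
    [Finite B] (cs' : CoxeterSystem M W)
    (hTR : TwistRigidIn cs' Set.univ)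
    (μ : Marking cs') (hμ : μ.Complete) (hns : ¬ Spherical cs' μ.supp) :
    ∃ (n : ℕ) (f : ℕ → Marking cs'),
      f 0 = μ ∧
      (∀ i < n, (f i).Complete) ∧
      (∀ i < n, (MoveM1 (f i) (f (i + 1)) ∨ MoveM2 (f i) (f (i + 1))) ∨
        (MoveM4 (f i) (f (i + 1)) ∧ i + 1 = n)) ∧
      (f n).SemiComplete ∧ μ.supp ⊆ (f n).supp := by
  classical
  have := Fintype.ofFinite B
  obtain ⟨N, hN⟩ := Cox.base_bounded cs'
  exact Cox.main_aux hTR N hN _ μ rfl hμ hns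
end
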